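/- arXiv:1911.09921 — 2 statements merged into one kernel-verified Lean document; each statement's English description precedes it below -/
import Mathlib

section
/- Let D be a domain in ℂⁿ and let φ be a psh peak function for a point p ∈ ∂D which is of class C² near p. Then for any bounded open neighborhood U of p there exist an open neighborhood V ⊂ U of p and a constant m > 0 such that for all z ∈ D ∩ V and all X ∈ ℂⁿ one has S_D(z;X) ≥ e^{mφ(z)} S_{D∩U}(z;X). -/
open Set Metric Filter Topology
open scoped Classical

noncomputable section

/-- `ℂⁿ` with the Euclidean norm. -/
abbrev Cn (n : ℕ) := EuclideanSpace ℂ (Fin n)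

/-- A function `u : ℂⁿ → [-∞,∞)` (with values in `EReal`) is plurisubharmonic on `D` if it
is upper semicontinuous on `D` and satisfies the sub-mean-value inequality on every closed
disc in a complex line contained in `D` (stated via continuous majorants on the boundary
circle, so as to handle the value `-∞`). -/
def PSHOn {n : ℕ} (u : Cn n → EReal) (D : Set (Cn n)) : Prop :=
  UpperSemicontinuousOn u D ∧
  ∀ a ∈ D, ∀ b : Cn n, ∀ r : ℝ, 0 < r →
    (∀ t : ℂ, ‖t‖ ≤ r → a + t • b ∈ D) →
    ∀ g : ℝ → ℝ, Continuous g →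
      (∀ θ : ℝ, u (a + ((r : ℂ) * Complex.exp (θ * Complex.I)) • b) ≤ (g θ : EReal)) →
      u a ≤ (((1 / (2 * Real.pi)) * ∫ θ in (0:ℝ)..(2 * Real.pi), g θ : ℝ) : EReal)

/-- `φ` is a plurisubharmonic peak function for `D` at the boundary point `p`:
`φ` is psh on `D`, `φ(z) → 0` as `z → p` in `D`, and `sup_{D∖U} φ < 0` for every
neighborhood `U` of `p`. -/
def IsPshPeakFn {n : ℕ} (D : Set (Cn n)) (p : Cn n) (φ : Cn n → EReal) : Prop :=
  PSHOn φ D ∧ Tendsto φ (𝓝[D] p) (𝓝 (0 : EReal)) ∧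
  ∀ U ∈ 𝓝 p, ∃ c : ℝ, c < 0 ∧ ∀ z ∈ D \ U, φ z ≤ (c : EReal)

/-- The real exponential extended to `EReal`, with `exp(-∞) = 0` (the value at `⊤`,
irrelevant here, is also set to `0`). -/
def erexp (x : EReal) : ℝ := if x = ⊥ then 0 else if x = ⊤ then 0 else Real.exp x.toReal

/-- Logarithm with values in `EReal`, so that `elog 0 = -∞`. -/
def elog (x : ℝ) : EReal := if x ≤ 0 then ⊥ else ((Real.log x : ℝ) : EReal)

/-- The Levi form of a real-valued `C²` function `v` at `z` in direction `X`:
`L_v(z;X) = Σ_{j,k} ∂²v/∂z_j∂z̄_k(z) X_j X̄_k`, expressed through the real second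
derivative via `Σ_{j,k} ∂²v/∂z_j∂z̄_k(z) X_j X̄_k = (D²v(z)(X,X) + D²v(z)(iX,iX))/4`. -/
def leviForm {n : ℕ} (v : Cn n → ℝ) (z X : Cn n) : ℝ :=
  (1/4) * (iteratedFDeriv ℝ 2 v z ![X, X] +
    iteratedFDeriv ℝ 2 v z ![Complex.I • X, Complex.I • X])

/-- The Sibony metric of `D`: `S_D(z;X) = sup_v (L_v(z;X))^{1/2}`, the supremum over all
`v : D → [0,1)` with `v(z) = 0`, `log v` psh on `D`, and `v` of class `C²` near `z`. -/
def sibony {n : ℕ} (D : Set (Cn n)) (z X : Cn n) : ℝ :=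
  sSup {s : ℝ | ∃ v : Cn n → ℝ, (∀ w ∈ D, 0 ≤ v w ∧ v w < 1) ∧ v z = 0 ∧
    PSHOn (fun w => elog (v w)) D ∧ (∃ W ∈ 𝓝 z, ContDiffOn ℝ 2 v W) ∧
    s = Real.sqrt (leviForm v z X)}

def cav (g : ℝ → ℝ) : ℝ := (1 / (2 * Real.pi)) * ∫ θ in (0:ℝ)..(2 * Real.pi), g θ

def cpt (r θ : ℝ) : ℂ := (r : ℂ) * Complex.exp (θ * Complex.I)

lemma cpt_cont (r : ℝ) : Continuous (cpt r) := by
  unfold cpt; fun_prop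

lemma cpt_norm {r : ℝ} (hr : 0 ≤ r) (θ : ℝ) : ‖cpt r θ‖ = r := by
  simp [cpt, Complex.norm_exp_ofReal_mul_I, abs_of_nonneg hr]

lemma cpt_circleMap (t : ℂ) (r θ : ℝ) : t + cpt r θ = circleMap t r θ := rfl

lemma cav_const (c : ℝ) : cav (fun _ => c) = c := by
  unfold cav
  have := Real.pi_pos
  simp
  field_simp

lemma cav_add {f g : ℝ → ℝ} (hf : Continuous f) (hg : Continuous g) :
    cav (fun θ => f θ + g θ) = cav f + cav g := by
  unfold cav
  rw [intervalIntegral.integral_add (hf.intervalIntegrable _ _) (hg.intervalIntegrable _ _)]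
  ring

lemma cav_mul (c : ℝ) (f : ℝ → ℝ) : cav (fun θ => c * f θ) = c * cav f := by
  unfold cav
  rw [intervalIntegral.integral_const_mul]; ring

lemma cav_mono {f g : ℝ → ℝ} (hf : Continuous f) (hg : Continuous g) (h : ∀ θ, f θ ≤ g θ) :
    cav f ≤ cav g := by
  unfold cav
  have := Real.pi_pos
  apply mul_le_mul_of_nonneg_left _ (by positivity)
  exact intervalIntegral.integral_mono (by positivity) (hf.intervalIntegrable _ _)
    (hg.intervalIntegrable _ _) h

lemma cav_harm {H : ℂ → ℝ} {t : ℂ} {r : ℝ} (hr : 0 ≤ r)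
    (hH : InnerProductSpace.HarmonicOnNhd H (closedBall t r)) :
    cav (fun θ => H (t + cpt r θ)) = H t := by
  rw [← abs_of_nonneg hr] at hH
  rw [← hH.circleAverage_eq, Real.circleAverage_def]
  simp [cav, cpt_circleMap]

lemma harm_re {P : ℂ → ℂ} {t : ℂ} {r : ℝ} (hP : ∀ s ∈ closedBall t r, AnalyticAt ℂ P s) :
    InnerProductSpace.HarmonicOnNhd (fun s => (P s).re) (closedBall t r) :=
  fun s hs => (hP s hs).harmonicAt_re

lemma cav_normsq (t : ℂ) {r : ℝ} (hr : 0 ≤ r) :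
    cav (fun θ => ‖t + cpt r θ‖ ^ 2) = ‖t‖ ^ 2 + r ^ 2 := by
  have h1 : ∀ θ, ‖t + cpt r θ‖ ^ 2 = (r ^ 2 - ‖t‖ ^ 2) +
      (fun s : ℂ => (2 * (starRingEnd ℂ t) * s).re) (t + cpt r θ) := by
    intro θ
    have h2 := cpt_norm hr θ
    have h3 : ‖cpt r θ‖ ^ 2 = r ^ 2 := by rw [h2]
    rw [← h3, ← Complex.normSq_eq_norm_sq, ← Complex.normSq_eq_norm_sq, ← Complex.normSq_eq_norm_sq]
    simp [Complex.normSq_apply]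
    ring
  simp_rw [h1]
  rw [cav_add (by fun_prop), cav_const, cav_harm (H := fun s : ℂ => (2 * (starRingEnd ℂ t) * s).re) hr]
  · have : ‖t‖ ^ 2 = t.re * t.re + t.im * t.im := by
      rw [← Complex.normSq_eq_norm_sq, Complex.normSq_apply]
    simp [this]; ring
  · exact harm_re (fun s _ => by fun_prop)
  · have := cpt_cont r
    fun_prop

lemma usc_mul {α : Type*} [TopologicalSpace α] {s : Set α} {f g : α → ℝ}
    (hf : UpperSemicontinuousOn f s)
    (hg0 : ∀ x ∈ s, 0 < g x) (hg : ContinuousOn g s) :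
    UpperSemicontinuousOn (fun x => f x * g x) s := by
  intro x hx y hy
  have hgx := hg0 x hx
  -- choose c with f x < c, c * g x < y
  obtain ⟨c, hc1, hc2⟩ : ∃ c, f x < c ∧ c * g x < y := by
    have : f x < y / g x := by rwa [lt_div_iff₀ hgx]
    obtain ⟨c, h1, h2⟩ := exists_between this
    exact ⟨c, h1, by rwa [lt_div_iff₀ hgx] at h2⟩
  have e1 := hf x hx c hc1
  have hcont : ContinuousWithinAt (fun z => c * g z) s x := continuousWithinAt_const.mul (hg x hx)
  have e2 : ∀ᶠ z in 𝓝[s] x, c * g z < y := hcont.eventually (gt_mem_nhds hc2)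
  filter_upwards [e1, e2, self_mem_nhdsWithin] with z h1 h2 hz
  exact lt_of_le_of_lt (mul_le_mul_of_nonneg_right h1.le (hg0 z hz).le) h2

lemma maxprinc {f H : ℂ → ℝ} {K O : Set ℂ} (hK : IsCompact K) (hO : IsOpen O) (hOK : O ⊆ K)
    (hf0 : ∀ t ∈ K, 0 ≤ f t) (hf : UpperSemicontinuousOn f K) (hH : ContinuousOn H K)
    (hsub : ∀ t ∈ O, ∃ r0 > 0, ∀ r : ℝ, 0 < r → r < r0 → ∀ g : ℝ → ℝ, Continuous g →
      (∀ θ, f (t + cpt r θ) ≤ Real.exp (g θ)) → f t ≤ Real.exp (cav g))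
    (hHm : ∀ t ∈ O, ∃ r0 > 0, ∀ r : ℝ, 0 < r → r < r0 → cav (fun θ => H (t + cpt r θ)) ≤ H t)
    (hb : ∀ t ∈ K \ O, f t ≤ Real.exp (H t)) : ∀ t ∈ K, f t ≤ Real.exp (H t) := by
  intro t1 ht1
  obtain ⟨T, hT⟩ := hK.isBounded.exists_norm_le
  have key : ∀ δ > 0, f t1 ≤ Real.exp (H t1 + δ * T ^ 2) := by
    intro δ hδ
    have husc : UpperSemicontinuousOn (fun t => f t * Real.exp (-H t + δ * ‖t‖ ^ 2)) K := by
      apply usc_mul hf (fun x _ => Real.exp_pos _)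
      fun_prop
    obtain ⟨t0, ht0, hmax⟩ := husc.exists_isMaxOn ⟨t1, ht1⟩ hK
    have hmax' : ∀ t ∈ K, f t * Real.exp (-H t + δ * ‖t‖ ^ 2) ≤
      f t0 * Real.exp (-H t0 + δ * ‖t0‖ ^ 2) := fun t ht => hmax ht
    have fin : f t0 * Real.exp (-H t0 + δ * ‖t0‖ ^ 2) ≤ Real.exp (δ * T ^ 2) := by
      by_cases hO0 : t0 ∈ O
      · rcases (hf0 t0 ht0).eq_or_lt with h0 | hpos
        · rw [← h0]; simp; positivity
        exfalso
        obtain ⟨r1, hr1, h1⟩ := hsub t0 hO0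
        obtain ⟨r2, hr2, h2⟩ := hHm t0 hO0
        obtain ⟨r3, hr3, h3⟩ := Metric.isOpen_iff.1 hO t0 hO0
        obtain ⟨r, hr, hrlt⟩ : ∃ r, 0 < r ∧ r < min r1 (min r2 r3) :=
          exists_between (by positivity)
        simp only [lt_min_iff] at hrlt
        have hin : ∀ θ, t0 + cpt r θ ∈ K := fun θ => hOK (h3 (by
          simp [cpt_norm hr.le, hrlt.2.2]))
        set L := Real.log (f t0) + (-H t0 + δ * ‖t0‖ ^ 2) with hL
        have hexpL : f t0 * Real.exp (-H t0 + δ * ‖t0‖ ^ 2) = Real.exp L := by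
          rw [hL, Real.exp_add (Real.log _), Real.exp_log hpos]
        have hcH : Continuous (fun θ => H (t0 + cpt r θ)) := by
          apply hH.comp_continuous _ hin
          have := cpt_cont r
          fun_prop
        have hcn : Continuous (fun θ => ‖t0 + cpt r θ‖ ^ 2) := by
          have := cpt_cont r
          fun_prop
        have hc2 : Continuous (fun θ => (-δ) * ‖t0 + cpt r θ‖ ^ 2) := continuous_const.mul hcn
        have hc3 : Continuous (fun θ => H (t0 + cpt r θ) + (-δ) * ‖t0 + cpt r θ‖ ^ 2) :=
          hcH.add hc2
        have h4 := h1 r hr hrlt.1 (fun θ => L + (H (t0 + cpt r θ) + (-δ) * ‖t0 + cpt r θ‖ ^ 2))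
          (continuous_const.add hc3) (by
            intro θ
            have := hmax' _ (hin θ)
            rw [hexpL] at this
            have e : f (t0 + cpt r θ) = (f (t0 + cpt r θ) *
              Real.exp (-H (t0 + cpt r θ) + δ * ‖t0 + cpt r θ‖ ^ 2)) *
              Real.exp (H (t0 + cpt r θ) + (-δ) * ‖t0 + cpt r θ‖ ^ 2) := by
              rw [mul_assoc, ← Real.exp_add]; ring_nf; simp
            rw [e, Real.exp_add L]
            exact mul_le_mul_of_nonneg_right this (Real.exp_pos _).le)
        rw [cav_add continuous_const hc3, cav_const,
          cav_add hcH hc2,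
          cav_mul, cav_normsq t0 hr.le] at h4
        have h5 := h2 r hr hrlt.2.1
        rw [← Real.exp_log hpos, Real.exp_le_exp] at h4
        have : 0 < δ * r ^ 2 := by positivity
        nlinarith
      · calc f t0 * Real.exp (-H t0 + δ * ‖t0‖ ^ 2) ≤
            Real.exp (H t0) * Real.exp (-H t0 + δ * ‖t0‖ ^ 2) :=
              mul_le_mul_of_nonneg_right (hb t0 ⟨ht0, hO0⟩) (Real.exp_pos _).le
          _ = Real.exp (δ * ‖t0‖ ^ 2) := by rw [← Real.exp_add]; ring_nf
          _ ≤ _ := by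
            apply Real.exp_le_exp.2
            have := hT t0 ht0
            gcongr
    have h6 := (hmax' t1 ht1).trans fin
    have e : f t1 = (f t1 * Real.exp (-H t1 + δ * ‖t1‖ ^ 2)) *
              Real.exp (H t1 + (-δ) * ‖t1‖ ^ 2) := by
              rw [mul_assoc, ← Real.exp_add]; ring_nf; simp
    rw [e]
    calc _ ≤ Real.exp (δ * T ^ 2) * Real.exp (H t1 + (-δ) * ‖t1‖ ^ 2) :=
          mul_le_mul_of_nonneg_right h6 (Real.exp_pos _).le
      _ = Real.exp (δ * T ^ 2 + H t1 + (-δ) * ‖t1‖ ^ 2) := by rw [← Real.exp_add]; ring_nf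
      _ ≤ _ := by
        apply Real.exp_le_exp.2
        have : 0 ≤ δ * ‖t1‖ ^ 2 := by positivity
        linarith
  have lim : Tendsto (fun δ : ℝ => Real.exp (H t1 + δ * T ^ 2)) (𝓝[>] 0)
      (𝓝 (Real.exp (H t1))) := by
    have : Continuous (fun δ : ℝ => Real.exp (H t1 + δ * T ^ 2)) := by fun_prop
    have := this.tendsto 0
    simp at this
    exact this.mono_left nhdsWithin_le_nhds
  exact ge_of_tendsto lim (by filter_upwards [self_mem_nhdsWithin] with δ hδ using key δ hδ)

lemma span_four (p : C(AddCircle (2 * Real.pi), ℂ))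
    (hp : p ∈ Submodule.span ℂ (range (@fourier (2 * Real.pi)))) :
    ∃ P Q : ℂ → ℂ, Differentiable ℂ P ∧ Differentiable ℂ Q ∧
      ∀ θ : ℝ, p (θ : AddCircle (2 * Real.pi)) = P (Complex.exp (θ * Complex.I)) +
        (starRingEnd ℂ) (Q (Complex.exp (θ * Complex.I))) := by
  have hpi : (Real.pi : ℂ) ≠ 0 := by exact_mod_cast Real.pi_ne_zero
  induction hp using Submodule.span_induction with
  | mem x h =>
    obtain ⟨n, rfl⟩ := h
    rcases le_total 0 n with hn | hn
    · lift n to ℕ using hn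
      refine ⟨fun t => t ^ n, fun _ => 0, by fun_prop, by fun_prop, fun θ => ?_⟩
      rw [fourier_coe_apply]
      simp [← Complex.exp_nat_mul]
      congr 1
      field_simp
    · obtain ⟨k, rfl⟩ : ∃ k : ℕ, n = -k := ⟨n.natAbs, by omega⟩
      refine ⟨fun _ => 0, fun t => t ^ k, by fun_prop, by fun_prop, fun θ => ?_⟩
      rw [fourier_coe_apply]
      simp [← Complex.exp_nat_mul, ← Complex.exp_conj]
      congr 1
      field_simp
  | zero => exact ⟨fun _ => 0, fun _ => 0, by fun_prop, by fun_prop, by simp⟩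
  | add x y _ _ hx hy =>
    obtain ⟨P, Q, hP, hQ, h⟩ := hx
    obtain ⟨P', Q', hP', hQ', h'⟩ := hy
    refine ⟨fun t => P t + P' t, fun t => Q t + Q' t, by fun_prop, by fun_prop, fun θ => ?_⟩
    simp [h, h']; ring
  | smul c x _ hx =>
    obtain ⟨P, Q, hP, hQ, h⟩ := hx
    refine ⟨fun t => c * P t, fun t => (starRingEnd ℂ c) * Q t, by fun_prop, by fun_prop,
      fun θ => ?_⟩
    simp [h]; ring

/-- trigonometric approximation of a periodic continuous function from above -/
lemma trig_approx (g : ℝ → ℝ) (hg : ContinuousOn g (Icc 0 (2 * Real.pi)))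
    (hper : g 0 = g (2 * Real.pi)) {ε : ℝ} (hε : 0 < ε) :
    ∃ P : ℂ → ℂ, Differentiable ℂ P ∧ ∀ θ ∈ Icc 0 (2 * Real.pi),
      g θ ≤ (P (Complex.exp (θ * Complex.I))).re ∧
      (P (Complex.exp (θ * Complex.I))).re ≤ g θ + ε := by
  have : Fact (0 < 2 * Real.pi) := ⟨by have := Real.pi_pos; positivity⟩
  set G : AddCircle (2 * Real.pi) → ℝ := AddCircle.liftIco (2 * Real.pi) 0 g with hG
  have hGc : Continuous G := by
    apply AddCircle.liftIco_continuous
    · simpa using hper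
    · simpa using hg
  set G' : C(AddCircle (2 * Real.pi), ℂ) := ⟨fun x => (G x : ℂ), by fun_prop⟩ with hG'
  have hmem : G' ∈ (Submodule.span ℂ (range (@fourier (2 * Real.pi)))).topologicalClosure := by
    rw [span_fourier_closure_eq_top]; trivial
  rw [← SetLike.mem_coe, Submodule.topologicalClosure_coe, Metric.mem_closure_iff] at hmem
  obtain ⟨p, hp, hdist⟩ := hmem (ε / 2) (by positivity)
  obtain ⟨P, Q, hP, hQ, h⟩ := span_four p hp
  refine ⟨fun t => P t + Q t + ((ε / 2 : ℝ) : ℂ), by fun_prop, fun θ hθ => ?_⟩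
  have hGθ : G (θ : AddCircle (2 * Real.pi)) = g θ := by
    rcases hθ.2.eq_or_lt with h1 | h1
    · rw [h1, AddCircle.coe_period, ← hper, ← QuotientAddGroup.mk_zero]
      exact AddCircle.liftIco_coe_apply (by simp [Real.pi_pos])
    · exact AddCircle.liftIco_coe_apply (by simpa using ⟨hθ.1, h1⟩)
  have h1 : ‖G' θ - p θ‖ < ε / 2 := by
    rw [← dist_eq_norm]
    exact lt_of_le_of_lt (ContinuousMap.dist_apply_le_dist _) hdist
  have h2 := (Complex.abs_re_le_norm _).trans_lt h1
  rw [h θ] at h2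
  simp only [hG', ContinuousMap.coe_mk, hGθ, Complex.sub_re, Complex.add_re, Complex.conj_re,
    Complex.ofReal_re, abs_lt] at h2 ⊢
  constructor <;> linarith [h2.1, h2.2]

/-- log-plurisubharmonicity, local form, for real functions. -/
def LSH {n : ℕ} (v : Cn n → ℝ) (D : Set (Cn n)) : Prop :=
  (∀ a ∈ D, 0 ≤ v a) ∧ UpperSemicontinuousOn v D ∧
  ∀ a ∈ D, ∀ b : Cn n, ∃ r0 > 0, ∀ r : ℝ, 0 < r → r < r0 → ∀ g : ℝ → ℝ, Continuous g →
    (∀ θ, v (a + cpt r θ • b) ≤ Real.exp (g θ)) → v a ≤ Real.exp (cav g)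

lemma elog_le_iff (x y : ℝ) : elog x ≤ (y : EReal) ↔ x ≤ Real.exp y := by
  unfold elog
  split_ifs with h
  · simp; exact h.trans (Real.exp_pos _).le
  · push Not at h
    rw [EReal.coe_le_coe_iff, Real.log_le_iff_le_exp h]

lemma elog_lt_iff (x y : ℝ) : elog x < (y : EReal) ↔ x < Real.exp y := by
  unfold elog
  split_ifs with h
  · simp [EReal.bot_lt_coe]; exact h.trans_lt (Real.exp_pos _)
  · push Not at h
    rw [EReal.coe_lt_coe_iff, Real.log_lt_iff_lt_exp h]

lemma disc_in {n : ℕ} {D : Set (Cn n)} (hD : IsOpen D) {a : Cn n} (ha : a ∈ D) (b : Cn n) :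
    ∃ r0 > 0, ∀ t : ℂ, ‖t‖ < r0 → a + t • b ∈ D := by
  have hc : Continuous (fun t : ℂ => a + t • b) := by fun_prop
  have : (fun t : ℂ => a + t • b) ⁻¹' D ∈ 𝓝 (0 : ℂ) :=
    (hD.preimage hc).mem_nhds (by simpa using ha)
  obtain ⟨r, hr, h⟩ := Metric.mem_nhds_iff.1 this
  exact ⟨r, hr, fun t ht => h (by simpa using ht)⟩

lemma LSH.mono {n : ℕ} {v : Cn n → ℝ} {D D' : Set (Cn n)} (h : LSH v D) (hs : D' ⊆ D) :
    LSH v D' :=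
  ⟨fun a ha => h.1 a (hs ha), h.2.1.mono hs, fun a ha => h.2.2 a (hs ha)⟩

lemma LSH_of_PSH {n : ℕ} {v : Cn n → ℝ} {D : Set (Cn n)} (hD : IsOpen D)
    (h0 : ∀ a ∈ D, 0 ≤ v a) (h : PSHOn (fun w => elog (v w)) D) : LSH v D := by
  refine ⟨h0, ?_, ?_⟩
  · intro x hx y hy
    have hy0 : 0 < y := (h0 x hx).trans_lt hy
    have := h.1 x hx (Real.log y : ℝ) (by
      show elog (v x) < _
      rw [elog_lt_iff, Real.exp_log hy0]; exact hy)
    filter_upwards [this] with w hw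
    rwa [elog_lt_iff, Real.exp_log hy0] at hw
  · intro a ha b
    obtain ⟨r0, hr0, hin⟩ := disc_in hD ha b
    refine ⟨r0, hr0, fun r hr hlt g hg hle => ?_⟩
    rw [← elog_le_iff]
    exact h.2 a ha b r hr (fun t ht => hin t (ht.trans_lt hlt)) g hg
      (fun θ => (elog_le_iff _ _).2 (hle θ))

lemma LSH_exp_of_PSH {n : ℕ} {φ : Cn n → EReal} {φ₀ : Cn n → ℝ} {D O : Set (Cn n)}
    (hD : IsOpen D) (hO : IsOpen O) (h : PSHOn φ D) (hc : ContinuousOn φ₀ O)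
    (he : ∀ z ∈ D ∩ O, φ z = (φ₀ z : EReal)) {m : ℝ} (hm : 0 < m) :
    LSH (fun w => Real.exp (m * φ₀ w)) (D ∩ O) := by
  have hc' : ContinuousOn φ₀ (D ∩ O) := hc.mono inter_subset_right
  refine ⟨fun a _ => (Real.exp_pos _).le, ContinuousOn.upperSemicontinuousOn (by fun_prop), ?_⟩
  intro a ha b
  obtain ⟨r0, hr0, hin⟩ := disc_in (hD.inter hO) ha b
  refine ⟨r0, hr0, fun r hr hlt g hg hle => ?_⟩
  have h1 := h.2 a ha.1 b r hr (fun t ht => (hin t (ht.trans_lt hlt)).1)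
    (fun θ => m⁻¹ * g θ) (by fun_prop) (by
      intro θ
      have hmem := hin (cpt r θ) (by rw [cpt_norm hr.le]; exact hlt)
      have := hle θ
      simp only [Real.exp_le_exp] at this
      change φ (a + cpt r θ • b) ≤ _
      rw [he _ hmem, EReal.coe_le_coe_iff, inv_mul_eq_div, le_div_iff₀ hm]
      linarith)
  rw [he a ha, EReal.coe_le_coe_iff] at h1
  change _ ≤ cav _ at h1
  rw [cav_mul, inv_mul_eq_div, le_div_iff₀ hm] at h1
  apply Real.exp_le_exp.2
  linarith

lemma LSH_const {n : ℕ} {c : ℝ} (hc : 0 ≤ c) (D : Set (Cn n)) : LSH (fun _ => c) D := by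
  refine ⟨fun _ _ => hc, continuousOn_const.upperSemicontinuousOn, fun a _ b => ⟨1, one_pos, ?_⟩⟩
  intro r _ _ g hg hle
  rcases hc.eq_or_lt with h | h
  · rw [← h]; positivity
  · rw [← Real.log_le_iff_le_exp h, ← cav_const (Real.log c)]
    exact cav_mono continuous_const hg (fun θ => (Real.log_le_iff_le_exp h).2 (hle θ))

lemma LSH.max {n : ℕ} {u v : Cn n → ℝ} {D : Set (Cn n)} (hu : LSH u D) (hv : LSH v D) :
    LSH (fun w => max (u w) (v w)) D := by
  refine ⟨fun a ha => le_max_of_le_left (hu.1 a ha), hu.2.1.sup hv.2.1, fun a ha b => ?_⟩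
  obtain ⟨r1, h1, H1⟩ := hu.2.2 a ha b
  obtain ⟨r2, h2, H2⟩ := hv.2.2 a ha b
  refine ⟨min r1 r2, lt_min h1 h2, fun r hr hlt g hg hle => max_le ?_ ?_⟩
  · exact H1 r hr (hlt.trans_le (min_le_left _ _)) g hg fun θ => (le_max_left _ _).trans (hle θ)
  · exact H2 r hr (hlt.trans_le (min_le_right _ _)) g hg fun θ => (le_max_right _ _).trans (hle θ)

lemma LSH.mul_exp {n : ℕ} {u ψ : Cn n → ℝ} {D : Set (Cn n)} (hD : IsOpen D) (hu : LSH u D)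
    (hψ : LSH (fun w => Real.exp (ψ w)) D) (hc : ContinuousOn ψ D) :
    LSH (fun w => u w * Real.exp (ψ w)) D := by
  refine ⟨fun a ha => mul_nonneg (hu.1 a ha) (Real.exp_pos _).le,
    usc_mul hu.2.1 (fun _ _ => Real.exp_pos _) (by fun_prop), fun a ha b => ?_⟩
  obtain ⟨r1, h1, H1⟩ := hu.2.2 a ha b
  obtain ⟨r2, h2, H2⟩ := hψ.2.2 a ha b
  obtain ⟨r3, h3, hin⟩ := disc_in hD ha b
  refine ⟨min r1 (min r2 r3), by positivity, fun r hr hlt g hg hle => ?_⟩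
  simp only [lt_min_iff] at hlt
  have hψc : Continuous (fun θ => ψ (a + cpt r θ • b)) := by
    apply hc.comp_continuous
    · have := cpt_cont r
      fun_prop
    · intro θ
      exact hin _ (by rw [cpt_norm hr.le]; exact hlt.2.2)
  have hψc' : Continuous (fun θ => (-1) * ψ (a + cpt r θ • b)) := continuous_const.mul hψc
  have h4 := H1 r hr hlt.1 (fun θ => g θ + (-1) * ψ (a + cpt r θ • b))
    (hg.add hψc') (by
      intro θ
      have := hle θ
      simp only at this
      rw [← le_div_iff₀ (Real.exp_pos _), ← Real.exp_sub] at this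
      rwa [neg_one_mul, ← sub_eq_add_neg])
  have h5 := H2 r hr hlt.2.1 _ hψc (fun θ => le_rfl)
  rw [cav_add hg hψc',
    cav_mul] at h4
  calc u a * Real.exp (ψ a) ≤ _ := mul_le_mul h4 h5 (Real.exp_pos _).le (Real.exp_pos _).le
    _ = _ := by rw [← Real.exp_add]; ring_nf

lemma LSH.const_mul {n : ℕ} {u : Cn n → ℝ} {D : Set (Cn n)} (hD : IsOpen D) (hu : LSH u D)
    {c : ℝ} (hc : 0 < c) : LSH (fun w => c * u w) D := by
  have := hu.mul_exp hD (ψ := fun _ => Real.log c) (LSH_const (Real.exp_pos _).le D)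
    continuousOn_const
  simp only [Real.exp_log hc] at this
  simpa only [mul_comm] using this

lemma LSH.sq {n : ℕ} {u : Cn n → ℝ} {D : Set (Cn n)} (hu : LSH u D) (hc : ContinuousOn u D) :
    LSH (fun w => u w ^ 2) D := by
  refine ⟨fun a _ => sq_nonneg _, ContinuousOn.upperSemicontinuousOn (by fun_prop),
    fun a ha b => ?_⟩
  obtain ⟨r1, h1, H1⟩ := hu.2.2 a ha b
  refine ⟨r1, h1, fun r hr hlt g hg hle => ?_⟩
  have h := H1 r hr hlt (fun θ => (1/2) * g θ) (by fun_prop) (by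
    intro θ
    apply le_of_sq_le_sq _ (Real.exp_pos _).le
    refine (hle θ).trans (le_of_eq ?_)
    rw [← Real.exp_nat_mul]; push_cast; ring_nf)
  rw [cav_mul] at h
  calc u a ^ 2 ≤ Real.exp (1/2 * cav g) ^ 2 := by
        have := hu.1 a ha
        gcongr
    _ = _ := by rw [← Real.exp_nat_mul]; push_cast; ring_nf

lemma LSH_normsq {n : ℕ} (z : Cn n) (D : Set (Cn n)) : LSH (fun w => ‖w - z‖ ^ 2) D := by
  refine ⟨fun a _ => sq_nonneg _, ContinuousOn.upperSemicontinuousOn (by fun_prop),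
    fun a ha b => ?_⟩
  by_cases haz : a = z
  · exact ⟨1, one_pos, fun r _ _ g _ _ => by simp [haz, Real.exp_nonneg]⟩
  set e := a - z with he
  have hepos : 0 < ‖e‖ := by rw [norm_pos_iff, he]; exact sub_ne_zero.2 haz
  set β : ℂ := inner ℂ e b with hβ
  have hball : ∃ r0 > 0, ∀ t : ℂ, ‖t‖ < r0 → ((‖e‖ : ℂ) ^ 2 + t * β) ≠ 0 := by
    refine ⟨‖e‖ ^ 2 / (‖β‖ + 1), by positivity, fun t ht h0 => ?_⟩
    rw [lt_div_iff₀ (by positivity)] at ht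
    have h1 : ‖t * β‖ = ‖e‖ ^ 2 := by
      rw [eq_neg_of_add_eq_zero_right h0]; simp
    rw [norm_mul] at h1
    nlinarith [norm_nonneg t, norm_nonneg β]
  obtain ⟨r0, hr0, hne⟩ := hball
  refine ⟨r0, hr0, fun r hr hlt g hg hle => ?_⟩
  have hharm := cav_harm (H := fun t : ℂ => Real.log ‖(‖e‖ : ℂ) ^ 2 + t * β‖) (t := 0) hr.le (by
    intro s hs
    apply AnalyticAt.harmonicAt_log_norm (f := fun t : ℂ => (‖e‖ : ℂ) ^ 2 + t * β)
    · fun_prop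
    · exact hne s (by simp at hs; linarith))
  simp only [zero_add] at hharm
  have hcl : Continuous (fun θ => Real.log ‖(‖e‖ : ℂ) ^ 2 + cpt r θ * β‖) := by
    have := cpt_cont r
    apply Continuous.log (by fun_prop)
    intro θ
    exact norm_ne_zero_iff.2 (hne _ (by rw [cpt_norm hr.le]; exact hlt))
  have hmono := cav_mono hcl (g := fun θ => Real.log ‖e‖ + (1/2) * g θ) (by fun_prop) (by
    intro θ
    have hn := norm_pos_iff.2 (hne (cpt r θ) (by rw [cpt_norm hr.le]; exact hlt))
    rw [Real.log_le_iff_le_exp hn, Real.exp_add, Real.exp_log hepos]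
    have h1 : (‖e‖ : ℂ) ^ 2 + cpt r θ * β = inner ℂ e (a + cpt r θ • b - z) := by
      have : a + cpt r θ • b - z = e + cpt r θ • b := by rw [he]; abel
      rw [this, inner_add_right, inner_smul_right, inner_self_eq_norm_sq_to_K]; rfl
    rw [h1]
    refine (norm_inner_le_norm _ _).trans ?_
    apply mul_le_mul_of_nonneg_left _ hepos.le
    apply le_of_sq_le_sq _ (Real.exp_pos _).le
    refine (hle θ).trans (le_of_eq ?_)
    rw [← Real.exp_nat_mul]; push_cast; ring_nf)
  rw [hharm, cav_add continuous_const (by fun_prop), cav_const, cav_mul] at hmono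
  simp at hmono
  show ‖a - z‖ ^ 2 ≤ _
  rw [← he, ← Real.log_le_iff_le_exp (by positivity), Real.log_pow]
  push_cast; linarith

lemma LSH.add {n : ℕ} {u q : Cn n → ℝ} {D : Set (Cn n)} (hD : IsOpen D) (hu : LSH u D)
    (hq : LSH q D) (hc : ContinuousOn q D) : LSH (fun w => u w + q w) D := by
  refine ⟨fun a ha => add_nonneg (hu.1 a ha) (hq.1 a ha),
    hu.2.1.add hc.upperSemicontinuousOn, fun a ha b => ?_⟩
  obtain ⟨r1, h1, H1⟩ := hu.2.2 a ha b
  obtain ⟨r2, h2, H2⟩ := hq.2.2 a ha b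
  obtain ⟨r3, h3, hin⟩ := disc_in hD ha b
  rcases (hq.1 a ha).eq_or_lt with h0 | hpos
  · refine ⟨min r1 r3, lt_min h1 h3, fun r hr hlt g hg hle => ?_⟩
    simp only [lt_min_iff] at hlt
    simp only [← h0, add_zero]
    refine H1 r hr hlt.1 g hg fun θ => le_trans ?_ (hle θ)
    have := hq.1 _ (hin (cpt r θ) (by rw [cpt_norm hr.le]; exact hlt.2))
    linarith
  have hO : IsOpen (D ∩ q ⁻¹' (Ioi 0)) := hc.isOpen_inter_preimage hD isOpen_Ioi
  obtain ⟨r4, h4, hin'⟩ := disc_in hO ⟨ha, hpos⟩ b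
  refine ⟨min r1 (min r2 r4), by positivity, fun r hr hlt g hg hle => ?_⟩
  simp only [lt_min_iff] at hlt
  have hmem : ∀ θ, a + cpt r θ • b ∈ D ∧ 0 < q (a + cpt r θ • b) := fun θ =>
    hin' _ (by rw [cpt_norm hr.le]; exact hlt.2.2)
  have hqc : Continuous (fun θ => q (a + cpt r θ • b)) := by
    apply hc.comp_continuous _ (fun θ => (hmem θ).1)
    have := cpt_cont r
    fun_prop
  have hs0 : 0 < u a + q a := by linarith [hu.1 a ha]
  rw [← Real.log_le_iff_le_exp hs0]
  apply le_of_forall_pos_le_add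
  intro η hη
  have hlt' : ∀ θ, 0 < Real.exp (g θ + η) - q (a + cpt r θ • b) := by
    intro θ
    have := hle θ
    have h5 := hu.1 _ (hmem θ).1
    have h6 : Real.exp (g θ) < Real.exp (g θ + η) := Real.exp_lt_exp.2 (by linarith)
    simp only at this
    linarith
  set G := fun θ => Real.log (Real.exp (g θ + η) - q (a + cpt r θ • b)) with hG
  have hGc : Continuous G := Continuous.log ((by fun_prop : Continuous fun θ => Real.exp (g θ + η)).sub hqc) (fun θ => (hlt' θ).ne')
  set Q := fun θ => Real.log (q (a + cpt r θ • b)) with hQ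
  have hQc : Continuous Q := Continuous.log hqc (fun θ => (hmem θ).2.ne')
  have hu1 := H1 r hr hlt.1 G hGc (fun θ => by
    rw [hG, Real.exp_log (hlt' θ)]
    have := hle θ
    have h6 : Real.exp (g θ) < Real.exp (g θ + η) := Real.exp_lt_exp.2 (by linarith)
    simp only at this
    linarith)
  have hq1 := H2 r hr hlt.2.1 Q hQc (fun θ => by rw [hQ, Real.exp_log (hmem θ).2])
  set x := cav G
  set y := cav Q
  set s := Real.exp x + Real.exp y with hs
  have hspos : 0 < s := by positivity
  set l := Real.exp x / s with hl
  set k := Real.exp y / s with hk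
  have hlk : l + k = 1 := by rw [hl, hk, ← add_div, div_self hspos.ne']
  have hl0 : 0 ≤ l := by positivity
  have hk0 : 0 ≤ k := by positivity
  have tang : ∀ θ, (Real.log s - l * x - k * y) + (l * G θ + k * Q θ) ≤ g θ + η := by
    intro θ
    have hE : Real.exp (G θ) + Real.exp (Q θ) = Real.exp (g θ + η) := by
      rw [hG, hQ]; simp only; rw [Real.exp_log (hlt' θ), Real.exp_log (hmem θ).2]; ring
    have hconv := convexOn_exp.2 (mem_univ (G θ - x)) (mem_univ (Q θ - y)) hl0 hk0 hlk
    simp only [smul_eq_mul] at hconv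
    have h7 : s * (l * Real.exp (G θ - x) + k * Real.exp (Q θ - y)) = Real.exp (g θ + η) := by
      rw [← hE, hl, hk, Real.exp_sub, Real.exp_sub]
      field_simp
    have h8 : Real.exp (Real.log s + (l * (G θ - x) + k * (Q θ - y))) ≤ Real.exp (g θ + η) := by
      rw [Real.exp_add, Real.exp_log hspos, ← h7]
      exact mul_le_mul_of_nonneg_left hconv hspos.le
    have := Real.exp_le_exp.1 h8
    linarith
  have hav := cav_mono (by fun_prop) (by fun_prop) tang
  rw [cav_add (by fun_prop) (by fun_prop), cav_add (by fun_prop) (by fun_prop), cav_const,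
    cav_mul, cav_mul, cav_add hg (by fun_prop), cav_const] at hav
  have : Real.log (u a + q a) ≤ Real.log s := Real.log_le_log hs0 (by linarith)
  simp only [x, y] at hav
  linarith

lemma LSH_local {n : ℕ} {v : Cn n → ℝ} {D : Set (Cn n)}
    (h : ∀ a ∈ D, ∃ O : Set (Cn n), IsOpen O ∧ a ∈ O ∧ ∃ v' : Cn n → ℝ, LSH v' O ∧
      ∀ w ∈ O, v w = v' w) : LSH v D := by
  refine ⟨fun a ha => ?_, fun a ha => ?_, fun a ha b => ?_⟩
  · obtain ⟨O, hO, haO, v', hv', he⟩ := h a ha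
    rw [he a haO]; exact hv'.1 a haO
  · obtain ⟨O, hO, haO, v', hv', he⟩ := h a ha
    intro y hy
    rw [he a haO] at hy
    have := hv'.2.1 a haO y hy
    rw [hO.nhdsWithin_eq haO] at this
    apply Filter.Eventually.filter_mono nhdsWithin_le_nhds
    filter_upwards [this, hO.mem_nhds haO] with w h1 h2
    rwa [he w h2]
  · obtain ⟨O, hO, haO, v', hv', he⟩ := h a ha
    obtain ⟨r1, h1, H1⟩ := hv'.2.2 a haO b
    obtain ⟨r3, h3, hin⟩ := disc_in hO haO b
    refine ⟨min r1 r3, lt_min h1 h3, fun r hr hlt g hg hle => ?_⟩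
    simp only [lt_min_iff] at hlt
    rw [he a haO]
    refine H1 r hr hlt.1 g hg fun θ => ?_
    rw [← he _ (hin (cpt r θ) (by rw [cpt_norm hr.le]; exact hlt.2))]
    exact hle θ

lemma cav_mono_on {f g : ℝ → ℝ} (hf : Continuous f) (hg : Continuous g)
    (h : ∀ θ ∈ Icc 0 (2 * Real.pi), f θ ≤ g θ) : cav f ≤ cav g := by
  unfold cav
  have := Real.pi_pos
  apply mul_le_mul_of_nonneg_left _ (by positivity)
  exact intervalIntegral.integral_mono_on (by positivity) (hf.intervalIntegrable _ _)
    (hg.intervalIntegrable _ _) h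

lemma cav_pow (k : ℕ) : cav (fun θ => (1 - θ / (2 * Real.pi)) ^ k) = 1 / (k + 1) := by
  unfold cav
  have := Real.pi_pos
  rw [intervalIntegral.integral_comp_sub_div (fun x => x ^ k) (by positivity)]
  rw [div_self (by positivity)]
  simp
  field_simp

lemma LSH.disc_usc {n : ℕ} {v : Cn n → ℝ} {D : Set (Cn n)} (hv : LSH v D) (a b : Cn n)
    {K : Set ℂ} (hK : ∀ t ∈ K, a + t • b ∈ D) :
    UpperSemicontinuousOn (fun t : ℂ => v (a + t • b)) K := by
  intro t ht y hy
  have h1 := hv.2.1 _ (hK t ht) y hy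
  have hc : ContinuousWithinAt (fun t : ℂ => a + t • b) K t := by fun_prop
  have := hc.tendsto_nhdsWithin (t := D) hK
  exact this.eventually h1

lemma LSH.disc_sub {n : ℕ} {v : Cn n → ℝ} {D : Set (Cn n)} (hv : LSH v D) (a b : Cn n)
    {t : ℂ} (ht : a + t • b ∈ D) :
    ∃ r0 > 0, ∀ r : ℝ, 0 < r → r < r0 → ∀ g : ℝ → ℝ, Continuous g →
      (∀ θ, v (a + (t + cpt r θ) • b) ≤ Real.exp (g θ)) → v (a + t • b) ≤ Real.exp (cav g) := by
  obtain ⟨r0, h0, H⟩ := hv.2.2 _ ht b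
  refine ⟨r0, h0, fun r hr hlt g hg hle => H r hr hlt g hg fun θ => ?_⟩
  have := hle θ
  rwa [add_smul, ← add_assoc] at this

lemma cpt_periodic (r θ : ℝ) : cpt r (θ + 2 * Real.pi) = cpt r θ := by
  unfold cpt
  push_cast
  rw [add_mul, Complex.exp_periodic]

lemma sphere_cpt {r : ℝ} {t : ℂ} (ht : ‖t‖ = r) :
    ∃ θ ∈ Icc 0 (2 * Real.pi), t = cpt r θ := by
  have h1 : t = cpt r t.arg := by
    rw [cpt, ← ht, Complex.norm_mul_exp_arg_mul_I]
  have h2 := Complex.arg_mem_Ioc t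
  rcases le_or_gt 0 t.arg with h | h
  · exact ⟨t.arg, ⟨h, by linarith [h2.2, Real.pi_pos]⟩, h1⟩
  · refine ⟨t.arg + 2 * Real.pi, ⟨by linarith [h2.1], by linarith⟩, ?_⟩
    rw [cpt_periodic]
    exact h1

lemma LSH.submean {n : ℕ} {v : Cn n → ℝ} {D : Set (Cn n)} (hv : LSH v D) {a b : Cn n} {r : ℝ}
    (hr : 0 < r) (hin : ∀ t : ℂ, ‖t‖ ≤ r → a + t • b ∈ D) {g : ℝ → ℝ} (hg : Continuous g)
    (hle : ∀ θ, v (a + cpt r θ • b) ≤ Real.exp (g θ)) : v a ≤ Real.exp (cav g) := by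
  have hpi := Real.pi_pos
  have ha : a ∈ D := by simpa using hin 0 (by simpa using hr.le)
  obtain ⟨C, hC⟩ := (isCompact_Icc (a := (0:ℝ)) (b := 2 * Real.pi)).exists_bound_of_continuousOn
    (f := fun θ => g (θ + 2 * Real.pi) - g θ) (by fun_prop)
  have key : ∀ k : ℕ, v a ≤ Real.exp (cav g + (C + 1) * (1 / ((k + 1 : ℕ) + 1))) := by
    intro k
    set w : ℝ → ℝ := fun θ => (1 - θ / (2 * Real.pi)) ^ (k + 1) with hw
    have hwc : Continuous w := by fun_prop
    have hw01 : ∀ θ ∈ Icc 0 (2 * Real.pi), 0 ≤ w θ ∧ w θ ≤ 1 := by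
      intro θ hθ
      have h1 : 0 ≤ θ / (2 * Real.pi) := div_nonneg hθ.1 (by positivity)
      have h2 : θ / (2 * Real.pi) ≤ 1 := (div_le_one (by positivity)).2 hθ.2
      exact ⟨pow_nonneg (by linarith) _, pow_le_one₀ (by linarith) (by linarith)⟩
    set g1 : ℝ → ℝ := fun θ => g θ + w θ * (g (θ + 2 * Real.pi) - g θ) with hg1
    have hg1c : Continuous g1 := by fun_prop
    set ε : ℝ := 1 / ((k + 1 : ℕ) + 1) with hε
    have hε0 : 0 < ε := by positivity
    obtain ⟨P, hP, hPg⟩ := trig_approx g1 hg1c.continuousOn (by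
      simp [hg1, hw]) hε0
    have hmaj : ∀ θ ∈ Icc 0 (2 * Real.pi), v (a + cpt r θ • b) ≤ Real.exp (g1 θ) := by
      intro θ hθ
      have h1 := hle θ
      have h2 := hle (θ + 2 * Real.pi)
      rw [cpt_periodic] at h2
      obtain ⟨h3, h4⟩ := hw01 θ hθ
      rcases le_total (g θ) (g (θ + 2 * Real.pi)) with h | h
      · refine h1.trans (Real.exp_le_exp.2 ?_)
        simp only [hg1]; nlinarith
      · refine h2.trans (Real.exp_le_exp.2 ?_)
        simp only [hg1]; nlinarith
    have hPr : Differentiable ℂ (fun t : ℂ => P (t / r)) := by fun_prop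
    have hmp := maxprinc (f := fun t => v (a + t • b)) (H := fun t => (P (t / r)).re)
      (K := closedBall 0 r) (O := ball 0 r) (isCompact_closedBall 0 r) isOpen_ball
      ball_subset_closedBall (fun t ht => hv.1 _ (hin t (by simpa using ht)))
      (hv.disc_usc a b (fun t ht => hin t (by simpa using ht)))
      ((Complex.continuous_re.comp hPr.continuous).continuousOn)
      (fun t ht => hv.disc_sub a b (hin t (by simpa using (mem_ball.1 ht).le)))
      (fun t ht => ⟨1, one_pos, fun ρ hρ _ => le_of_eq
        (cav_harm (H := fun t => (P (t / r)).re) hρ.le (harm_re fun s _ =>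
          hPr.analyticAt s))⟩)
      (by
        rintro t ⟨ht1, ht2⟩
        have : ‖t‖ = r := by
          simp at ht1 ht2; linarith
        obtain ⟨θ, hθ, rfl⟩ := sphere_cpt this
        refine (hmaj θ hθ).trans (Real.exp_le_exp.2 ?_)
        have h5 := (hPg θ hθ).1
        have : cpt r θ / r = Complex.exp (θ * Complex.I) := by
          rw [cpt, mul_div_cancel_left₀ _ (by exact_mod_cast hr.ne')]
        rwa [this])
      0 (by simpa using hr.le)
    simp only [zero_smul, add_zero, zero_div] at hmp
    refine hmp.trans (Real.exp_le_exp.2 ?_)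
    have hPm := cav_harm (H := fun t => (P t).re) (t := 0) (r := 1) zero_le_one
      (harm_re fun s _ => hP.analyticAt s)
    rw [← hPm]
    have hc1 : Continuous (fun θ : ℝ => (P (0 + cpt 1 θ)).re) := by
      have := hP.continuous
      have := cpt_cont 1
      fun_prop
    refine (cav_mono_on hc1 (g := fun θ => g θ + (C * w θ + ε)) (by fun_prop) ?_).trans ?_
    · intro θ hθ
      have h5 := (hPg θ hθ).2
      have h6 := hC θ hθ
      obtain ⟨h3, h4⟩ := hw01 θ hθ
      have : (0:ℂ) + cpt 1 θ = Complex.exp (θ * Complex.I) := by simp [cpt]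
      rw [this]
      refine h5.trans ?_
      simp only [hg1]
      have h7 := (abs_le.1 h6).2
      nlinarith
    · rw [cav_add hg (by fun_prop), cav_add (by fun_prop) (by fun_prop), cav_mul, cav_const, hw,
        cav_pow, ← hε]
      linarith
  have lim : Tendsto (fun k : ℕ => Real.exp (cav g + (C + 1) * (1 / ((k + 1 : ℕ) + 1)))) atTop
      (𝓝 (Real.exp (cav g + (C + 1) * 0))) := by
    have h1 : Tendsto (fun k : ℕ => (1 : ℝ) / ((k + 1 : ℕ) + 1)) atTop (𝓝 0) :=
      (tendsto_one_div_add_atTop_nhds_zero_nat (𝕜 := ℝ)).comp (tendsto_add_atTop_nat 1)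
    exact (Real.continuous_exp.tendsto _).comp (tendsto_const_nhds.add (tendsto_const_nhds.mul h1))
  rw [mul_zero, add_zero] at lim
  exact ge_of_tendsto lim (Eventually.of_forall key)

lemma PSH_of_LSH {n : ℕ} {v : Cn n → ℝ} {D : Set (Cn n)} (hv : LSH v D) :
    PSHOn (fun w => elog (v w)) D := by
  constructor
  · intro x hx y hy
    induction y using EReal.rec with
    | bot => exact absurd hy (by simp)
    | top =>
      apply Eventually.of_forall
      intro w
      show elog (v w) < ⊤
      unfold elog
      split_ifs
      · simp
      · exact EReal.coe_lt_top _
    | coe y =>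
      have hy' : elog (v x) < (y : EReal) := hy
      rw [elog_lt_iff] at hy'
      filter_upwards [hv.2.1 x hx _ hy'] with w hw
      exact (elog_lt_iff _ _).2 hw
  · intro a _ b r hr hin g hg hle
    exact (elog_le_iff _ _).2 (hv.submean hr hin hg fun θ => (elog_le_iff _ _).1 (hle θ))

lemma quad_bound {n : ℕ} {v : Cn n → ℝ} {z : Cn n} (hv : ContDiffAt ℝ 2 v z) (hz : v z = 0)
    (hd : fderiv ℝ v z = 0) : ∃ C > 0, ∀ᶠ w in 𝓝 z, v w ≤ C * ‖w - z‖ ^ 2 := by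
  have h1 : ContDiffAt ℝ 1 (fderiv ℝ v) z := hv.fderiv_right (by norm_num)
  obtain ⟨K, s, hs, hL⟩ := h1.exists_lipschitzOnWith
  have h2 : ∀ᶠ w in 𝓝 z, DifferentiableAt ℝ v w := by
    filter_upwards [hv.eventually (by simp)] with w hw
    exact hw.differentiableAt (by norm_num)
  obtain ⟨ρ, hρ, hb⟩ := Metric.mem_nhds_iff.1 (Filter.inter_mem hs h2)
  refine ⟨K + 1, by positivity, ?_⟩
  filter_upwards [ball_mem_nhds z hρ] with w hw
  have hsub : closedBall z ‖w - z‖ ⊆ ball z ρ := by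
    apply closedBall_subset_ball; rwa [← dist_eq_norm]
  have := (convex_closedBall z ‖w - z‖).norm_image_sub_le_of_norm_fderiv_le (𝕜 := ℝ)
    (f := v) (C := K * ‖w - z‖) (x := z) (y := w)
    (fun x hx => (hb (hsub hx)).2) (fun x hx => by
      have h3 := hL.norm_sub_le (hb (hsub hx)).1 (mem_of_mem_nhds hs)
      rw [hd, sub_zero] at h3
      refine h3.trans ?_
      have : ‖x - z‖ ≤ ‖w - z‖ := by simpa [dist_eq_norm] using hx
      gcongr) (by simp) (by simp [dist_eq_norm])
  rw [hz, sub_zero] at this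
  have h4 := (le_abs_self _).trans this
  nlinarith [sq_nonneg ‖w - z‖]

lemma taylor_lim {n : ℕ} {v : Cn n → ℝ} {z : Cn n} (hv : ContDiffAt ℝ 2 v z) (hz : v z = 0)
    (hd : fderiv ℝ v z = 0) (X : Cn n) :
    Tendsto (fun t : ℝ => v (z + t • X) / t ^ 2) (𝓝[>] 0)
      (𝓝 (iteratedFDeriv ℝ 2 v z ![X, X] / 2)) := by
  have h1 : ContDiffAt ℝ 1 (fderiv ℝ v) z := hv.fderiv_right (by norm_num)
  have h2 : ∀ᶠ w in 𝓝 z, DifferentiableAt ℝ v w := by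
    filter_upwards [hv.eventually (by simp)] with w hw
    exact hw.differentiableAt (by norm_num)
  have hline : ∀ t : ℝ, HasDerivAt (fun t : ℝ => z + t • X) X t := by
    intro t
    simpa using ((hasDerivAt_id t).smul_const X).const_add z
  have hlc : Tendsto (fun t : ℝ => z + t • X) (𝓝 0) (𝓝 z) := by
    have := (hline 0).continuousAt.tendsto
    simpa using this
  have hf : ∀ᶠ t : ℝ in 𝓝 0, HasDerivAt (fun t : ℝ => v (z + t • X))
      (fderiv ℝ v (z + t • X) X) t := by
    filter_upwards [hlc.eventually h2] with t ht
    exact ht.hasFDerivAt.comp_hasDerivAt t (hline t)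
  have hf2 : HasDerivAt (fun t : ℝ => fderiv ℝ v (z + t • X) X)
      (fderiv ℝ (fderiv ℝ v) z X X) 0 := by
    have h3 : HasFDerivAt (fderiv ℝ v) (fderiv ℝ (fderiv ℝ v) z) (z + (0:ℝ) • X) := by
      simpa using (h1.differentiableAt (by norm_num)).hasFDerivAt
    have h4 := h3.comp_hasDerivAt 0 (hline 0)
    have h5 := h4.clm_apply (hasDerivAt_const (0:ℝ) X)
    simpa using h5
  rw [iteratedFDeriv_two_apply]
  have hsl := (hasDerivAt_iff_tendsto_slope.1 hf2).mono_left
    (nhdsWithin_mono (0:ℝ) (fun t (ht : 0 < t) => ne_of_gt ht))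
  refine HasDerivAt.lhopital_zero_nhdsGT (f' := fun t => fderiv ℝ v (z + t • X) X)
    (g' := fun t : ℝ => 2 * t) (hf.filter_mono nhdsWithin_le_nhds) ?_ ?_ ?_ ?_ ?_
  · refine Eventually.of_forall fun t => ?_
    simpa using hasDerivAt_pow 2 t
  · filter_upwards [self_mem_nhdsWithin] with t ht
    have : (0:ℝ) < t := ht
    positivity
  · have h3 : ContinuousAt v z := hv.continuousAt
    have := h3.tendsto.comp hlc
    rw [hz] at this
    exact this.mono_left nhdsWithin_le_nhds
  · have : Tendsto (fun t : ℝ => t ^ 2) (𝓝 0) (𝓝 (0 ^ 2)) := (continuous_pow 2).tendsto 0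
    simpa using this.mono_left nhdsWithin_le_nhds
  · have h6 := hsl.div_const 2
    refine h6.congr' ?_
    filter_upwards [self_mem_nhdsWithin] with t ht
    have : (0:ℝ) < t := ht
    simp [slope, hd]
    field_simp

lemma LSH.schwarz {n : ℕ} {v : Cn n → ℝ} {D : Set (Cn n)} (hv : LSH v D) (h1 : ∀ w ∈ D, v w < 1)
    {z X : Cn n} {C : ℝ} (hC : 0 < C) (hq : ∀ᶠ w in 𝓝 z, v w ≤ C * ‖w - z‖ ^ 2)
    {ρ : ℝ} (hρ : 0 < ρ) (hin : ∀ t : ℂ, ‖t‖ ≤ ρ → z + t • X ∈ D) {t : ℂ} (ht : t ≠ 0)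
    (htρ : ‖t‖ ≤ ρ) : v (z + t • X) ≤ ‖t‖ ^ 2 / ρ ^ 2 := by
  have ht0 : 0 < ‖t‖ := norm_pos_iff.2 ht
  have key : ∀ ε : ℝ, 0 < ε → ε < 2 →
      v (z + t • X) ≤ Real.exp ((2 - ε) * Real.log (‖t‖ / ρ)) := by
    intro ε hε hε2
    have hline : Tendsto (fun s : ℂ => z + s • X) (𝓝 0) (𝓝 z) := by
      have : Continuous (fun s : ℂ => z + s • X) := by fun_prop
      simpa using this.tendsto 0
    obtain ⟨δ, hδ, hδv⟩ := Metric.eventually_nhds_iff.1 (hline.eventually hq)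
    set C' := C * ‖X‖ ^ 2 + 1 with hC'
    have hC'0 : 0 < C' := by positivity
    have hlim : Tendsto (fun M : ℝ => ρ * Real.exp (-M)) atTop (𝓝 0) := by
      simpa using (Real.tendsto_exp_neg_atTop_nhds_zero).const_mul ρ
    obtain ⟨M, ⟨hM1, hM2⟩, hM3⟩ := (((hlim.eventually_lt_const hδ).and
      (hlim.eventually_lt_const ht0)).and
      (eventually_ge_atTop (Real.log (C' * ρ ^ 2) / ε))).exists
    set σ := ρ * Real.exp (-M) with hσ
    have hσ0 : 0 < σ := by positivity
    have hlogσ : Real.log (σ / ρ) = -M := by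
      rw [hσ, mul_div_cancel_left₀ _ hρ.ne', Real.log_exp]
    have hH : ∀ s : ℂ, s ≠ 0 → InnerProductSpace.HarmonicAt
        (fun s : ℂ => (2 - ε) * Real.log ‖s / ρ‖) s := by
      intro s hs
      have hρc : (ρ : ℂ) ≠ 0 := by exact_mod_cast hρ.ne'
      have hA : AnalyticAt ℂ (fun s : ℂ => s / ρ) s := by fun_prop (disch := exact hρc)
      have := (hA.harmonicAt_log_norm (div_ne_zero hs hρc)).const_smul (c := 2 - ε)
      exact this
    have hnd : ∀ s : ℂ, ‖s / (ρ : ℂ)‖ = ‖s‖ / ρ := by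
      intro s; simp [abs_of_pos hρ]
    have hmp := maxprinc (f := fun s => v (z + s • X))
      (H := fun s : ℂ => (2 - ε) * Real.log ‖s / ρ‖)
      (K := closedBall 0 ρ \ ball 0 σ) (O := ball 0 ρ \ closedBall 0 σ)
      ((isCompact_closedBall 0 ρ).diff isOpen_ball)
      (isOpen_ball.sdiff isClosed_closedBall)
      (sdiff_subset_sdiff ball_subset_closedBall ball_subset_closedBall)
      (fun s hs => hv.1 _ (hin s (by simpa using hs.1)))
      (hv.disc_usc z X (fun s hs => hin s (by simpa using hs.1)))
      (fun s hs => by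
        have : s ≠ 0 := by
          rintro rfl
          exact hs.2 (by simpa using hσ0)
        exact (hH s this).1.continuousAt.continuousWithinAt)
      (fun s hs => hv.disc_sub z X (hin s (by simpa using (mem_ball.1 hs.1).le)))
      (fun s hs => by
        have hs0 : s ≠ 0 := by
          rintro rfl
          exact hs.2 (by simpa using hσ0.le)
        refine ⟨‖s‖, norm_pos_iff.2 hs0, fun r hr hrs => le_of_eq ?_⟩
        refine cav_harm (H := fun s : ℂ => (2 - ε) * Real.log ‖s / ρ‖) hr.le
          fun w hw => hH w ?_
        rintro rfl
        have : ‖s‖ ≤ r := by simpa using hw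
        linarith)
      (by
        rintro s ⟨⟨hs1, hs2⟩, hs3⟩
        simp only [mem_closedBall, mem_ball, dist_zero_right, not_lt, Set.mem_sdiff, not_and, not_le]
          at hs1 hs2 hs3
        simp only [hnd]
        rcases hs1.eq_or_lt with h | h
        · rw [h, div_self hρ.ne']
          simpa using (h1 _ (hin s hs1)).le
        · have hsσ : ‖s‖ = σ := by
            by_contra hne
            have : σ < ‖s‖ := lt_of_le_of_ne hs2 (Ne.symm hne)
            exact absurd (hs3 h) (by linarith)
          have h2 := hδv (y := s) (by rw [dist_zero_right, hsσ]; exact hM1)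
          rw [hsσ, hlogσ]
          have h3 : v (z + s • X) ≤ C' * σ ^ 2 := by
            refine h2.trans ?_
            rw [add_sub_cancel_left, norm_smul, hsσ, mul_pow, hC']
            nlinarith [sq_nonneg σ]
          refine h3.trans ?_
          have h4 : C' * σ ^ 2 = Real.exp (Real.log (C' * ρ ^ 2) - 2 * M) := by
            rw [Real.exp_sub, Real.exp_log (by positivity), hσ, mul_pow, ← Real.exp_nat_mul,
              div_eq_mul_inv, ← Real.exp_neg]
            push_cast
            ring_nf
          rw [h4, Real.exp_le_exp]
          have := (div_le_iff₀ hε).1 hM3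
          linarith)
      t ⟨by simpa using htρ, by simpa using hM2.le⟩
    simpa only [hnd] using hmp
  have hl : Tendsto (fun ε : ℝ => Real.exp ((2 - ε) * Real.log (‖t‖ / ρ))) (𝓝[>] 0)
      (𝓝 (Real.exp ((2 - 0) * Real.log (‖t‖ / ρ)))) := by
    have : Continuous (fun ε : ℝ => Real.exp ((2 - ε) * Real.log (‖t‖ / ρ))) := by fun_prop
    exact (this.tendsto 0).mono_left nhdsWithin_le_nhds
  have hle := ge_of_tendsto hl (by
    filter_upwards [Ioo_mem_nhdsGT (show (0:ℝ) < 2 by norm_num)] with ε hε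
    exact key ε hε.1 hε.2)
  refine hle.trans (le_of_eq ?_)
  rw [sub_zero, ← div_pow, two_mul, Real.exp_add, Real.exp_log (by positivity), pow_two]

/-- the admissible functions for the Sibony metric -/
def Cand {n : ℕ} (D : Set (Cn n)) (z : Cn n) (v : Cn n → ℝ) : Prop :=
  (∀ w ∈ D, 0 ≤ v w ∧ v w < 1) ∧ v z = 0 ∧
    PSHOn (fun w => elog (v w)) D ∧ (∃ W ∈ 𝓝 z, ContDiffOn ℝ 2 v W)

lemma Cand.cda {n : ℕ} {D : Set (Cn n)} {z : Cn n} {v : Cn n → ℝ} (h : Cand D z v) :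
    ContDiffAt ℝ 2 v z := by
  obtain ⟨W, hW, hc⟩ := h.2.2.2
  exact hc.contDiffAt hW

lemma Cand.fd {n : ℕ} {D : Set (Cn n)} {z : Cn n} {v : Cn n → ℝ} (h : Cand D z v)
    (hD : IsOpen D) (hz : z ∈ D) : fderiv ℝ v z = 0 := by
  apply IsLocalMin.fderiv_eq_zero
  filter_upwards [hD.mem_nhds hz] with w hw
  rw [h.2.1]; exact (h.1 w hw).1

lemma Cand.bound {n : ℕ} {D : Set (Cn n)} {z : Cn n} {v : Cn n → ℝ} (h : Cand D z v)
    (hD : IsOpen D) (hz : z ∈ D) {X : Cn n} {ρ : ℝ} (hρ : 0 < ρ)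
    (hin : ∀ t : ℂ, ‖t‖ ≤ ρ → z + t • X ∈ D) :
    iteratedFDeriv ℝ 2 v z ![X, X] ≤ 2 / ρ ^ 2 := by
  have hv := LSH_of_PSH hD (fun a ha => (h.1 a ha).1) h.2.2.1
  obtain ⟨C, hC, hq⟩ := quad_bound h.cda h.2.1 (h.fd hD hz)
  have hl := taylor_lim h.cda h.2.1 (h.fd hD hz) X
  have : iteratedFDeriv ℝ 2 v z ![X, X] / 2 ≤ 1 / ρ ^ 2 := by
    refine le_of_tendsto hl ?_
    filter_upwards [Ioo_mem_nhdsGT hρ] with t ht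
    have h1 := hv.schwarz (fun w hw => (h.1 w hw).2) (X := X) hC hq hρ hin (t := (t : ℂ))
      (by exact_mod_cast ht.1.ne') (by simpa [abs_of_pos ht.1] using ht.2.le)
    have h2 : ((t : ℂ)) • X = t • X := by simp
    rw [h2] at h1
    have h3 : ‖(t : ℂ)‖ = t := by simp [abs_of_pos ht.1]
    rw [h3] at h1
    have := ht.1
    rw [div_le_iff₀ (by positivity)]
    refine h1.trans (le_of_eq (by ring))
  have h5 : 2 / ρ ^ 2 = 2 * (1 / ρ ^ 2) := by ring
  linarith

lemma sibony_bdd {n : ℕ} {D : Set (Cn n)} (hD : IsOpen D) {z : Cn n} (hz : z ∈ D) (X : Cn n) :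
    BddAbove {s : ℝ | ∃ v : Cn n → ℝ, (∀ w ∈ D, 0 ≤ v w ∧ v w < 1) ∧ v z = 0 ∧
    PSHOn (fun w => elog (v w)) D ∧ (∃ W ∈ 𝓝 z, ContDiffOn ℝ 2 v W) ∧
    s = Real.sqrt (leviForm v z X)} := by
  obtain ⟨r, hr, hin⟩ := disc_in hD hz X
  refine ⟨Real.sqrt (1 / 4 * (2 / (r / 2) ^ 2 + 2 / (r / 2) ^ 2)), ?_⟩
  rintro s ⟨v, h1, h2, h3, h4, rfl⟩
  have hc : Cand D z v := ⟨h1, h2, h3, h4⟩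
  apply Real.sqrt_le_sqrt
  unfold leviForm
  have e1 := hc.bound hD hz (X := X) (half_pos hr) (fun t ht => hin t (by linarith))
  have e2 := hc.bound hD hz (X := Complex.I • X) (half_pos hr) (fun t ht => by
    rw [smul_smul]
    apply hin
    rw [norm_mul, Complex.norm_I]
    linarith)
  gcongr

/-- second derivative comparison -/
lemma levi_compare {n : ℕ} {v u ψ : Cn n → ℝ} {z : Cn n} (hv : ContDiffAt ℝ 2 v z) (hvz : v z = 0)
    (hvd : fderiv ℝ v z = 0) (hu : ContDiffAt ℝ 2 u z) (huz : u z = 0) (hud : fderiv ℝ u z = 0)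
    (hψ : ContinuousAt ψ z) {c : ℝ} (hle : ∀ᶠ w in 𝓝 z, Real.exp (ψ w) * (c * v w) ≤ u w)
    (X : Cn n) : Real.exp (ψ z) * (c * leviForm v z X) ≤ leviForm u z X := by
  have key : ∀ X : Cn n, Real.exp (ψ z) * (c * (iteratedFDeriv ℝ 2 v z ![X, X] / 2)) ≤
      iteratedFDeriv ℝ 2 u z ![X, X] / 2 := by
    intro X
    have hline : Tendsto (fun t : ℝ => z + t • X) (𝓝[>] 0) (𝓝 z) := by
      have : Continuous (fun t : ℝ => z + t • X) := by fun_prop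
      simpa using (this.tendsto 0).mono_left (nhdsWithin_le_nhds (s := Ioi 0))
    have l1 := taylor_lim hv hvz hvd X
    have l2 := taylor_lim hu huz hud X
    have l3 := ((Real.continuous_exp.continuousAt.comp hψ).tendsto.comp hline).mul (l1.const_mul c)
    refine le_of_tendsto_of_tendsto l3 l2 ?_
    filter_upwards [hline.eventually hle, self_mem_nhdsWithin] with t ht ht0
    have : (0:ℝ) < t := ht0
    simp only [Function.comp]
    rw [le_div_iff₀ (by positivity)]
    refine le_trans (le_of_eq ?_) ht
    field_simp
  have k1 := key X
  have k2 := key (Complex.I • X)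
  unfold leviForm
  nlinarith

lemma glue {n : ℕ} {D U : Set (Cn n)} (hD : IsOpen D) (hU : IsOpen U) {p : Cn n}
    {φ : Cn n → EReal} (hφ : PSHOn φ D) {φ₀ : Cn n → ℝ} {r1 r2 c A R : ℝ}
    (hr1 : 0 < r1) (hr12 : r1 ≤ r2 / 2) (hc : 0 < c) (hA : 0 < A) (hR : 0 < R)
    (hbU : ball p r2 ⊆ U) (hφC : ContDiffOn ℝ 2 φ₀ (ball p r2))
    (heq : ∀ w ∈ D ∩ ball p r2, φ w = (φ₀ w : EReal))
    (hneg : ∀ w ∈ D ∩ ball p r2, φ₀ w < 0)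
    (hc1 : ∀ w ∈ D ∩ ball p r2, r2 / 2 ≤ ‖w - p‖ → φ₀ w ≤ -c)
    (hc2 : ∀ w ∈ D ∩ ball p r2, ‖w - p‖ < r1 → -c / 4 ≤ φ₀ w)
    (hRU : ∀ w ∈ U, ∀ z ∈ U, ‖w - z‖ < R)
    (hAη : Real.exp (-(A * c / 4)) ≤ (r1 / (4 * R)) ^ 4)
    {z : Cn n} (hz : z ∈ D) (hzp : ‖z - p‖ < r1 / 4) {v : Cn n → ℝ} (hv : Cand (D ∩ U) z v)
    {ε : ℝ} (hε : 0 < ε) (hε1 : ε < 1) :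
    ∃ u, Cand D z u ∧
      ∀ X, Real.exp (A * φ₀ z) * ((1 - ε) * leviForm v z X) ≤ leviForm u z X := by
  have hDU : IsOpen (D ∩ U) := hD.inter hU
  set E := D ∩ ball p r2 with hE
  have hEo : IsOpen E := hD.inter isOpen_ball
  have hEU : E ⊆ D ∩ U := inter_subset_inter_right _ hbU
  have hmemE : ∀ w ∈ D, ‖w - p‖ < r2 → w ∈ E := fun w hw h =>
    ⟨hw, by rwa [mem_ball, dist_eq_norm]⟩
  have hzE : z ∈ E := hmemE z hz (by linarith)
  have hzDU := hEU hzE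
  have hvL : LSH v E := (LSH_of_PSH hDU (fun a ha => (hv.1 a ha).1) hv.2.2.1).mono hEU
  set q : Cn n → ℝ := fun w => (R ^ 2)⁻¹ * ‖w - z‖ ^ 2 with hq
  have hqc : Continuous q := by fun_prop
  have hqL : LSH q E := (LSH_normsq z E).const_mul hEo (by positivity)
  have hq0 : ∀ w, 0 ≤ q w := fun w => by positivity
  have hq1 : ∀ w ∈ E, q w < 1 := by
    intro w hw
    have h1 := hRU w (hEU hw).2 z hzDU.2
    simp only [hq]
    rw [inv_mul_lt_iff₀ (by positivity), mul_one]
    exact pow_lt_pow_left₀ h1 (norm_nonneg _) two_ne_zero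
  set k : Cn n → ℝ := fun w => (1 - ε) * v w + ε * q w with hk
  have hkL : LSH k E := (hvL.const_mul hEo (by linarith)).add hEo (hqL.const_mul hEo hε)
    (by fun_prop)
  set h : Cn n → ℝ := fun w => max (k w) (q w ^ 2) with hh
  have hhL : LSH h E := hkL.max (hqL.sq hqc.continuousOn)
  have hh1 : ∀ w ∈ E, h w < 1 := by
    intro w hw
    have h1 := (hv.1 w (hEU hw)).2
    have h2 := hq1 w hw
    refine max_lt ?_ ?_
    · simp only [hk]; nlinarith
    · exact pow_lt_one₀ (hq0 w) h2 two_ne_zero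
  have hφc : ContinuousOn φ₀ (ball p r2) := hφC.continuousOn
  have heL : LSH (fun w => Real.exp (A * φ₀ w)) E :=
    LSH_exp_of_PSH hD isOpen_ball hφ hφc heq hA
  set f : Cn n → ℝ := fun w => h w * Real.exp (A * φ₀ w) with hf
  have hfL : LSH f E := hhL.mul_exp hEo heL
    ((continuousOn_const.mul hφc).mono inter_subset_right)
  have hf1 : ∀ w ∈ E, f w < 1 := by
    intro w hw
    have h1 := hh1 w hw
    have h2 : Real.exp (A * φ₀ w) < 1 := Real.exp_lt_one_iff.2 (mul_neg_of_pos_of_neg hA (hneg w hw))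
    have h3 := hhL.1 w hw
    have h4 := Real.exp_pos (A * φ₀ w)
    simp only [hf]; nlinarith
  set κ := Real.exp (-(A * c / 2)) with hκ
  have hκ0 : 0 < κ := Real.exp_pos _
  have hκ1 : κ < 1 := Real.exp_lt_one_iff.2 (by
    have : 0 < A * c := by positivity
    linarith)
  set u : Cn n → ℝ := fun w => if ‖w - p‖ < 3 * r1 / 4 then f w else
    if ‖w - p‖ < r2 then max (f w) κ else κ with hu
  -- comparison on the inner annulus
  have hin : ∀ w ∈ E, r1 / 2 < ‖w - p‖ → ‖w - p‖ < 3 * r1 / 4 → κ ≤ f w := by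
    intro w hw h1 h2
    have h3 : r1 / 4 ≤ ‖w - z‖ := by
      have : ‖w - p‖ ≤ ‖w - z‖ + ‖z - p‖ := norm_sub_le_norm_sub_add_norm_sub w z p
      linarith
    have h4 : (r1 / (4 * R)) ^ 4 ≤ q w ^ 2 := by
      have e1 : q w ^ 2 = (‖w - z‖ / R) ^ 4 := by simp only [hq]; field_simp
      rw [e1]
      have e2 : r1 / (4 * R) = (r1 / 4) / R := by field_simp
      rw [e2]
      gcongr
    have h5 : Real.exp (-(A * c / 4)) ≤ Real.exp (A * φ₀ w) := by
      rw [Real.exp_le_exp]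
      have := hc2 w hw (by linarith)
      nlinarith
    have h6 : κ = Real.exp (-(A * c / 4)) * Real.exp (-(A * c / 4)) := by
      rw [hκ, ← Real.exp_add]; ring_nf
    rw [h6]
    exact mul_le_mul ((hAη.trans h4).trans (le_max_right _ _)) h5 (Real.exp_pos _).le
      (hhL.1 w hw)
  have hout : ∀ w ∈ E, r2 / 2 ≤ ‖w - p‖ → f w ≤ κ := by
    intro w hw h1
    have h2 := hc1 w hw h1
    have h3 : Real.exp (A * φ₀ w) ≤ κ := by
      rw [hκ, Real.exp_le_exp]
      have : 0 < A * c := by positivity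
      nlinarith
    have h4 := hh1 w hw
    have h5 := hhL.1 w hw
    have h6 := Real.exp_pos (A * φ₀ w)
    simp only [hf]; nlinarith
  have hnc : Continuous (fun w : Cn n => ‖w - p‖) := by fun_prop
  have huL : LSH u D := by
    apply LSH_local
    intro a ha
    by_cases h1 : ‖a - p‖ < 3 * r1 / 4
    · refine ⟨D ∩ {w | ‖w - p‖ < 3 * r1 / 4}, hD.inter (isOpen_lt hnc continuous_const),
        ⟨ha, h1⟩, f, hfL.mono (fun w hw => hmemE w hw.1 ?_), fun w hw => ?_⟩
      · have : ‖w - p‖ < 3 * r1 / 4 := hw.2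
        linarith
      · exact if_pos hw.2
    · by_cases h2 : ‖a - p‖ < r2
      · refine ⟨D ∩ ({w | r1 / 2 < ‖w - p‖} ∩ {w | ‖w - p‖ < r2}),
          hD.inter ((isOpen_lt continuous_const hnc).inter (isOpen_lt hnc continuous_const)),
          ⟨ha, show r1 / 2 < ‖a - p‖ by linarith, h2⟩, fun w => max (f w) κ,
          (hfL.max (LSH_const hκ0.le E)).mono (fun w hw => hmemE w hw.1 hw.2.2), fun w hw => ?_⟩
        simp only [hu]
        split_ifs with h3 h4
        · exact (max_eq_left (hin w (hmemE w hw.1 hw.2.2) hw.2.1 h3)).symm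
        · rfl
        · exact absurd hw.2.2 h4
      · refine ⟨D ∩ {w | r2 / 2 < ‖w - p‖}, hD.inter (isOpen_lt continuous_const hnc),
          ⟨ha, show r2 / 2 < ‖a - p‖ by linarith⟩, fun _ => κ, LSH_const hκ0.le _, fun w hw => ?_⟩
        have hw2 : r2 / 2 < ‖w - p‖ := hw.2
        simp only [hu]
        split_ifs with h3 h4
        · linarith
        · exact max_eq_right (hout w (hmemE w hw.1 h4) hw2.le)
        · rfl
  have hqz : q z = 0 := by simp [hq]
  have hfz : f z = 0 := by simp [hf, hh, hk, hv.2.1, hqz]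
  have huz : u z = 0 := by
    simp only [hu]
    rw [if_pos (by linarith), hfz]
  -- near z
  have huk : u =ᶠ[𝓝 z] fun w => Real.exp (A * φ₀ w) * k w := by
    have e1 : ∀ᶠ w in 𝓝 z, ‖w - p‖ < 3 * r1 / 4 :=
      hnc.continuousAt.eventually_lt_const (by linarith)
    have e2 : ∀ᶠ w in 𝓝 z, q w < ε := hqc.continuousAt.eventually_lt_const (by rw [hqz]; exact hε)
    filter_upwards [e1, e2, hEo.mem_nhds hzE] with w h1 h2 h3
    simp only [hu]
    rw [if_pos h1]
    simp only [hf, hh]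
    rw [max_eq_left, mul_comm]
    have h4 := (hv.1 w (hEU h3)).1
    have h5 := hq0 w
    simp only [hk]
    nlinarith
  have hφz : ContDiffAt ℝ 2 φ₀ z := hφC.contDiffAt (isOpen_ball.mem_nhds hzE.2)
  have hqC : ContDiff ℝ 2 q := by
    have : ContDiff ℝ 2 (fun w : Cn n => ‖w - z‖ ^ 2) :=
      (contDiff_id.sub contDiff_const).norm_sq ℝ
    exact contDiff_const.mul this
  have huC : ContDiffAt ℝ 2 u z := by
    refine ContDiffAt.congr_of_eventuallyEq ?_ huk
    exact (contDiffAt_const.mul hφz).exp.mul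
      ((contDiffAt_const.mul hv.cda).add (contDiffAt_const.mul hqC.contDiffAt))
  have hcand : Cand D z u := by
    refine ⟨fun w hw => ⟨huL.1 w hw, ?_⟩, huz, PSH_of_LSH huL, ?_⟩
    · simp only [hu]
      split_ifs with h1 h2
      · exact hf1 w (hmemE w hw (by linarith))
      · exact max_lt (hf1 w (hmemE w hw h2)) hκ1
      · exact hκ1
    · exact huC.contDiffOn le_rfl (by simp)
  refine ⟨u, hcand, fun X => ?_⟩
  refine levi_compare (ψ := fun w => A * φ₀ w) hv.cda hv.2.1 (hv.fd hDU hzDU) huC huz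
    (hcand.fd hD hz) (continuousAt_const.mul hφz.continuousAt) ?_ X
  filter_upwards [huk] with w hw
  rw [hw]
  have := hq0 w
  apply mul_le_mul_of_nonneg_left _ (Real.exp_pos _).le
  simp only [hk]
  nlinarith

lemma sibony_nonneg {n : ℕ} (D : Set (Cn n)) (z X : Cn n) : 0 ≤ sibony D z X := by
  apply Real.sSup_nonneg
  rintro s ⟨v, -, -, -, -, rfl⟩
  exact Real.sqrt_nonneg _

lemma Cand.le_sibony {n : ℕ} {D : Set (Cn n)} (hD : IsOpen D) {z : Cn n} (hz : z ∈ D)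
    {u : Cn n → ℝ} (hu : Cand D z u) (X : Cn n) : Real.sqrt (leviForm u z X) ≤ sibony D z X :=
  le_csSup (sibony_bdd hD hz X) ⟨u, hu.1, hu.2.1, hu.2.2.1, hu.2.2.2, rfl⟩

/-- Quantitative localization of the Sibony metric near a psh peak
boundary point whose peak function is `C²` near the point. -/
theorem sibony_localization_peak {n : ℕ} (D : Set (Cn n)) (hD : IsOpen D)
    (hDconn : IsConnected D) (p : Cn n) (hp : p ∈ frontier D)
    (φ : Cn n → EReal) (hφ : IsPshPeakFn D p φ)
    (hφC2 : ∃ W ∈ 𝓝 p, ∃ φ₀ : Cn n → ℝ, ContDiffOn ℝ 2 φ₀ W ∧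
      ∀ z ∈ D ∩ W, φ z = ((φ₀ z : ℝ) : EReal))
    (U : Set (Cn n)) (hU : IsOpen U) (hUb : Bornology.IsBounded U) (hpU : p ∈ U) :
    ∃ V : Set (Cn n), IsOpen V ∧ p ∈ V ∧ V ⊆ U ∧ ∃ m : ℝ, 0 < m ∧
      ∀ z ∈ D ∩ V, ∀ X : Cn n,
        sibony D z X ≥ erexp ((m : EReal) * φ z) * sibony (D ∩ U) z X := by
  obtain ⟨W, hW, φ₀, hφC, heqW⟩ := hφC2
  obtain ⟨hpsh, htend, hpeak⟩ := hφ
  have hpD : p ∉ D := by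
    rw [hD.frontier_eq] at hp
    exact hp.2
  obtain ⟨r2, hr2, hb⟩ := Metric.mem_nhds_iff.1 (inter_mem (hU.mem_nhds hpU) hW)
  have hbU : ball p r2 ⊆ U := fun w hw => (hb hw).1
  have hbW : ball p r2 ⊆ W := fun w hw => (hb hw).2
  have heq : ∀ w ∈ D ∩ ball p r2, φ w = (φ₀ w : EReal) := fun w hw => heqW w ⟨hw.1, hbW hw.2⟩
  have hneg : ∀ w ∈ D ∩ ball p r2, φ₀ w < 0 := by
    intro w hw
    have hne : p ≠ w := by
      rintro rfl
      exact hpD hw.1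
    obtain ⟨c, hc, h⟩ := hpeak {w}ᶜ (isOpen_compl_singleton.mem_nhds hne)
    have := h w ⟨hw.1, by simp⟩
    rw [heq w hw, EReal.coe_le_coe_iff] at this
    linarith
  obtain ⟨c', hc', hcp⟩ := hpeak (ball p (r2 / 2)) (ball_mem_nhds p (half_pos hr2))
  set c := -c' with hcdef
  have hc : 0 < c := by linarith
  have hc1 : ∀ w ∈ D ∩ ball p r2, r2 / 2 ≤ ‖w - p‖ → φ₀ w ≤ -c := by
    intro w hw h
    have := hcp w ⟨hw.1, by rw [mem_ball, dist_eq_norm]; linarith⟩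
    rw [heq w hw, EReal.coe_le_coe_iff] at this
    linarith
  have hev : ∀ᶠ w in 𝓝[D] p, ((-c / 4 : ℝ) : EReal) < φ w :=
    htend.eventually_const_lt (by
      have : (-c / 4 : ℝ) < 0 := by linarith
      exact_mod_cast this)
  obtain ⟨r0, hr0, hr0b⟩ := Metric.mem_nhdsWithin_iff.1 hev
  set r1 := min r0 (r2 / 2) with hr1def
  have hr1 : 0 < r1 := lt_min hr0 (half_pos hr2)
  have hr12 : r1 ≤ r2 / 2 := min_le_right _ _
  have hc2 : ∀ w ∈ D ∩ ball p r2, ‖w - p‖ < r1 → -c / 4 ≤ φ₀ w := by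
    intro w hw h
    have h1 : ((-c / 4 : ℝ) : EReal) < φ w :=
      hr0b ⟨by rw [mem_ball, dist_eq_norm]; exact h.trans_le (min_le_left _ _), hw.1⟩
    rw [heq w hw, EReal.coe_lt_coe_iff] at h1
    exact h1.le
  obtain ⟨R0, hR0⟩ := Metric.isBounded_iff.1 hUb
  have hR00 : 0 ≤ R0 := by simpa using hR0 hpU hpU
  set R := R0 + 1 with hRdef
  have hR : 0 < R := by linarith
  have hRU : ∀ w ∈ U, ∀ z ∈ U, ‖w - z‖ < R := by
    intro w hw z hz
    have := hR0 hw hz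
    rw [dist_eq_norm] at this
    linarith
  have hη : 0 < (r1 / (4 * R)) ^ 4 := by positivity
  set A := 4 * |Real.log ((r1 / (4 * R)) ^ 4)| / c + 1 with hAdef
  have hA : 0 < A := by positivity
  have hAη : Real.exp (-(A * c / 4)) ≤ (r1 / (4 * R)) ^ 4 := by
    rw [← Real.le_log_iff_exp_le hη]
    have h1 := neg_abs_le (Real.log ((r1 / (4 * R)) ^ 4))
    have h2 : A * c / 4 = |Real.log ((r1 / (4 * R)) ^ 4)| + c / 4 := by
      rw [hAdef]; field_simp
    linarith
  refine ⟨ball p (r1 / 4), isOpen_ball, mem_ball_self (by linarith),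
    (ball_subset_ball (by linarith)).trans hbU, A, hA, ?_⟩
  rintro z ⟨hz, hzV⟩ X
  have hzp : ‖z - p‖ < r1 / 4 := by rwa [mem_ball, dist_eq_norm] at hzV
  have hzE : z ∈ D ∩ ball p r2 := ⟨hz, by rw [mem_ball, dist_eq_norm]; linarith⟩
  have he : erexp ((A : EReal) * φ z) = Real.exp (A * φ₀ z) := by
    rw [heq z hzE, ← EReal.coe_mul]
    rw [erexp, if_neg (EReal.coe_ne_bot _), if_neg (EReal.coe_ne_top _), EReal.toReal_coe]
  rw [he, ge_iff_le]
  have hex := Real.exp_pos (A * φ₀ z)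
  have hex1 : Real.exp (A * φ₀ z) < 1 := Real.exp_lt_one_iff.2 (mul_neg_of_pos_of_neg hA (hneg z hzE))
  rw [mul_comm, ← le_div_iff₀ hex]
  refine Real.sSup_le ?_ (div_nonneg (sibony_nonneg _ _ _) hex.le)
  rintro s ⟨v, h1, h2, h3, h4, rfl⟩
  have hv : Cand (D ∩ U) z v := ⟨h1, h2, h3, h4⟩
  rw [le_div_iff₀ hex]
  have key : ∀ ε : ℝ, 0 < ε → ε < 1 →
      Real.sqrt (Real.exp (A * φ₀ z) * ((1 - ε) * leviForm v z X)) ≤ sibony D z X := by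
    intro ε hε hε1
    obtain ⟨u, hu, hle⟩ := glue hD hU hpsh hr1 hr12 hc hA hR hbU (hφC.mono hbW) heq hneg hc1 hc2
      hRU hAη hz hzp hv hε hε1
    exact (Real.sqrt_le_sqrt (hle X)).trans (hu.le_sibony hD hz X)
  have hl : Tendsto (fun ε : ℝ => Real.sqrt (Real.exp (A * φ₀ z) * ((1 - ε) * leviForm v z X)))
      (𝓝[>] 0) (𝓝 (Real.sqrt (Real.exp (A * φ₀ z) * ((1 - 0) * leviForm v z X)))) := by
    have : Continuous (fun ε : ℝ =>
      Real.sqrt (Real.exp (A * φ₀ z) * ((1 - ε) * leviForm v z X))) := by fun_prop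
    exact (this.tendsto 0).mono_left nhdsWithin_le_nhds
  have hle := le_of_tendsto hl (by
    filter_upwards [Ioo_mem_nhdsGT (show (0:ℝ) < 1 by norm_num)] with ε hε
    exact key ε hε.1 hε.2)
  rw [sub_zero, one_mul, Real.sqrt_mul hex.le] at hle
  refine le_trans ?_ hle
  rw [mul_comm]
  refine mul_le_mul_of_nonneg_right ?_ (Real.sqrt_nonneg _)
  refine Real.le_sqrt_of_sq_le ?_
  nlinarith
end
end

section
/- Let D be a domain in ℂⁿ and let φ be a psh peak function for a point p ∈ ∂D. Then for any bounded open neighborhood U of p there exist an open neighborhood V ⊂ U of p and a constant m > 0 such that for all z ∈ D ∩ V one has σ_{D∩U}(z) ≥ e^{mφ(z)} σ_D(z). -/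
open Set Metric Filter Topology
open scoped Classical

noncomputable section

/-- The squeezing function of `D`: the supremum of all `r > 0` such that some holomorphic
embedding `f : D → 𝔹ₙ` with `f z = 0` satisfies `r𝔹ₙ ⊆ f(D)` (equal to `0` if no such
embedding exists, by the convention `sSup ∅ = 0` in `ℝ`). -/
def squeezing {n : ℕ} (D : Set (Cn n)) (z : Cn n) : ℝ :=
  sSup {r : ℝ | 0 < r ∧ ∃ f : Cn n → Cn n, DifferentiableOn ℂ f D ∧ InjOn f D ∧
    MapsTo f D (ball (0 : Cn n) 1) ∧ f z = 0 ∧ ball (0 : Cn n) r ⊆ f '' D}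


theorem sq_norm_fderiv_le {E F : Type} [NormedAddCommGroup E] [NormedSpace ℂ E]
    [NormedAddCommGroup F] [NormedSpace ℂ F] [FiniteDimensional ℂ F]
    {f : E → F} {x : E} {R M : ℝ} (hR : 0 < R)
    (hf : DifferentiableOn ℂ f (ball x (2*R))) (hM : ∀ y ∈ closedBall x R, ‖f y‖ ≤ M) :
    ‖fderiv ℂ f x‖ ≤ M / R := by
  have hM0 : 0 ≤ M := (norm_nonneg _).trans (hM x (mem_closedBall_self hR.le))
  refine ContinuousLinearMap.opNorm_le_bound _ (by positivity) fun v => ?_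
  rcases eq_or_ne v 0 with rfl | hv
  · simp
  have hv' : 0 < ‖v‖ := norm_pos_iff.2 hv
  have hmaps : ∀ t ∈ ball (0:ℂ) (2 * R / ‖v‖), x + t • v ∈ ball x (2*R) := by
    intro t ht
    rw [mem_ball_zero_iff, lt_div_iff₀ hv'] at ht
    simpa [mem_ball_iff_norm, norm_smul] using ht
  have hd : DifferentiableOn ℂ (fun t : ℂ => f (x + t • v)) (ball (0:ℂ) (2 * R / ‖v‖)) :=
    hf.comp (by fun_prop) hmaps
  have hfx : HasFDerivAt f (fderiv ℂ f x) x :=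
    (hf.differentiableAt (isOpen_ball.mem_nhds (mem_ball_self (by positivity)))).hasFDerivAt
  have hder : HasDerivAt (fun t : ℂ => f (x + t • v)) (fderiv ℂ f x v) 0 := by
    have h1 : HasDerivAt (fun t : ℂ => x + t • v) v 0 := by
      simpa using ((hasDerivAt_id (0:ℂ)).smul_const v).const_add x
    have h2 : HasFDerivAt f (fderiv ℂ f x) (x + (0:ℂ) • v) := by simpa using hfx
    exact h2.comp_hasDerivAt (0:ℂ) h1
  have := Complex.norm_deriv_le_of_forall_mem_sphere_norm_le (c := 0) (R := R / ‖v‖) (C := M)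
    (f := fun t : ℂ => f (x + t • v)) (by positivity) ?_ ?_
  · rw [hder.deriv] at this
    refine this.trans (le_of_eq ?_)
    field_simp
  · refine DifferentiableOn.diffContOnCl_ball (hd) ?_
    apply closedBall_subset_ball
    gcongr; linarith
  · intro t ht
    apply hM
    rw [mem_sphere_zero_iff_norm, eq_div_iff hv'.ne'] at ht
    simp [norm_smul, ht]

theorem sq_differentiable_fderiv {E F : Type} [NormedAddCommGroup E] [NormedSpace ℂ E]
    [FiniteDimensional ℂ E]
    [NormedAddCommGroup F] [NormedSpace ℂ F] [FiniteDimensional ℂ F]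
    {f : E → F} {U : Set E} (hU : IsOpen U) (hf : DifferentiableOn ℂ f U) :
    DifferentiableOn ℂ (fderiv ℂ f) U := by
  have key : ∀ v : E, ∀ x₀ ∈ U, DifferentiableAt ℂ (fun x => fderiv ℂ f x v) x₀ := by
    intro v x₀ hx₀
    obtain ⟨R, hR, hRU⟩ : ∃ R > 0, closedBall x₀ (4*R) ⊆ U := by
      obtain ⟨ε, hε, h⟩ := Metric.isOpen_iff.1 hU x₀ hx₀
      exact ⟨ε/8, by positivity, (closedBall_subset_ball (by linarith)).trans h⟩
    have : ProperSpace E := FiniteDimensional.proper ℂ E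
    obtain ⟨M, hM⟩ := (isCompact_closedBall x₀ (4*R)).exists_bound_of_continuousOn
      (hf.continuousOn.mono hRU)
    have hbd : ∀ x ∈ ball x₀ (2*R), ‖fderiv ℂ f x‖ ≤ M / R := by
      intro x hx
      rw [mem_ball_iff_norm] at hx
      refine sq_norm_fderiv_le hR (hf.mono fun y hy => hRU ?_) (fun y hy => hM y ?_)
      · rw [mem_ball_iff_norm] at hy; rw [mem_closedBall_iff_norm]
        calc ‖y - x₀‖ = ‖(y - x) + (x - x₀)‖ := by congr 1; abel
          _ ≤ _ := norm_add_le _ _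
          _ ≤ _ := by linarith
      · rw [mem_closedBall_iff_norm] at hy ⊢
        calc ‖y - x₀‖ = ‖(y - x) + (x - x₀)‖ := by congr 1; abel
          _ ≤ _ := norm_add_le _ _
          _ ≤ _ := by linarith
    obtain ⟨ρ, hρ, hρv⟩ : ∃ ρ > 0, ρ * ‖v‖ < R :=
      ⟨R / (‖v‖ + 1), by positivity, by
        rw [div_mul_eq_mul_div, div_lt_iff₀ (by positivity)]; nlinarith [norm_nonneg v]⟩
    have hin : ∀ x ∈ ball x₀ R, ∀ t : ℂ, ‖t‖ ≤ ρ → x + t • v ∈ ball x₀ (2*R) := by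
      intro x hx t ht
      rw [mem_ball_iff_norm] at hx ⊢
      calc ‖x + t • v - x₀‖ = ‖(x - x₀) + t • v‖ := by congr 1; abel
          _ ≤ _ := norm_add_le _ _
          _ < _ := by
            rw [norm_smul]; nlinarith [mul_le_mul_of_nonneg_right ht (norm_nonneg v)]
    have hU2 : ball x₀ (2*R) ⊆ U := 
      (ball_subset_closedBall.trans (closedBall_subset_closedBall (by linarith))).trans hRU
    have hdf : ∀ y ∈ ball x₀ (2*R), HasFDerivAt f (fderiv ℂ f y) y := fun y hy =>
      (hf.differentiableAt (hU.mem_nhds (hU2 hy))).hasFDerivAt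
    have hform : ∀ x ∈ ball x₀ R, fderiv ℂ f x v =
        (2 * Real.pi * Complex.I : ℂ)⁻¹ • ∮ t in C(0, ρ), (t ^ 2)⁻¹ • f (x + t • v) := by
      intro x hx
      have hder : HasDerivAt (fun t : ℂ => f (x + t • v)) (fderiv ℂ f x v) 0 := by
        have h1 : HasDerivAt (fun t : ℂ => x + t • v) v 0 := by
          simpa using ((hasDerivAt_id (0:ℂ)).smul_const v).const_add x
        have h2 : HasFDerivAt f (fderiv ℂ f x) (x + (0:ℂ) • v) := by
          simpa using hdf x (ball_subset_ball (by linarith) hx)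
        exact h2.comp_hasDerivAt (0:ℂ) h1
      have hc := DifferentiableOn.deriv_eq_smul_circleIntegral (R := ρ) (c := 0)
        (f := fun t : ℂ => f (x + t • v)) hρ
        ((hf.mono hU2).comp (by fun_prop) (fun t ht => hin x hx t (by simpa using ht)))
      simp only [sub_zero, one_div] at hc
      rw [hc, hder.deriv, inv_smul_smul₀]
      simp [Real.pi_ne_zero]
    have hdiffI : DifferentiableAt ℂ (fun x => ∮ t in C(0, ρ), (t ^ 2)⁻¹ • f (x + t • v)) x₀ := by
      simp only [circleIntegral]
      have hcm : ∀ θ, circleMap 0 ρ θ ≠ 0 := fun θ => circleMap_ne_center hρ.ne'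
      have hcont : ∀ x ∈ ball x₀ R, Continuous (fun θ : ℝ => deriv (circleMap 0 ρ) θ •
          ((circleMap 0 ρ θ) ^ 2)⁻¹ • f (x + (circleMap 0 ρ θ) • v)) := by
        intro x hx
        have h1 : Continuous fun θ : ℝ => f (x + (circleMap 0 ρ θ) • v) :=
          (hf.continuousOn.mono hU2).comp_continuous (by fun_prop)
            (fun θ => hin x hx _ (by simp [abs_of_pos hρ]))
        have h2 : Continuous fun θ : ℝ => ((circleMap 0 ρ θ) ^ 2)⁻¹ :=
          Continuous.inv₀ (by fun_prop) (fun θ => pow_ne_zero _ (hcm θ))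
        have h3 : Continuous (deriv (circleMap 0 ρ)) := by
          simp only [funext (deriv_circleMap 0 ρ)]; fun_prop
        exact h3.smul (h2.smul h1)
      borelize E
      refine (intervalIntegral.hasFDerivAt_integral_of_dominated_of_fderiv_le
        (F' := fun x θ => deriv (circleMap 0 ρ) θ •
          ((circleMap 0 ρ θ) ^ 2)⁻¹ • fderiv ℂ f (x + (circleMap 0 ρ θ) • v))
        (s := ball x₀ R) (bound := fun _ => ρ * (ρ^2)⁻¹ * (M / R))
        (ball_mem_nhds _ hR) ?_ ?_ ?_ ?_ ?_ ?_).differentiableAt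
      · filter_upwards [ball_mem_nhds x₀ hR] with x hx
        exact (hcont x hx).aestronglyMeasurable
      · exact (hcont x₀ (mem_ball_self hR)).intervalIntegrable _ _
      · have h2 : Continuous fun θ : ℝ => ((circleMap 0 ρ θ) ^ 2)⁻¹ :=
          Continuous.inv₀ (by fun_prop) (fun θ => pow_ne_zero _ (hcm θ))
        have h3 : Continuous (deriv (circleMap 0 ρ)) := by
          simp only [funext (deriv_circleMap 0 ρ)]; fun_prop
        have h4 : MeasureTheory.StronglyMeasurable (fderiv ℂ f) := by
          borelize (E →L[ℂ] F)
          have : CompleteSpace F := FiniteDimensional.complete ℂ F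
          have : ProperSpace (E →L[ℂ] F) := FiniteDimensional.proper ℂ _
          exact (measurable_fderiv ℂ f).stronglyMeasurable
        have h5 : Continuous (fun θ : ℝ => x₀ + (circleMap 0 ρ θ) • v) := by fun_prop
        exact (h3.stronglyMeasurable.smul (h2.stronglyMeasurable.smul
          (h4.comp_measurable h5.measurable))).aestronglyMeasurable
      · refine Eventually.of_forall fun θ _ x hx => ?_
        have := hbd _ (hin x hx (circleMap 0 ρ θ) (by simp [abs_of_pos hρ]))
        simp only [norm_smul, deriv_circleMap, norm_mul, norm_circleMap_zero, norm_inv, norm_pow,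
          Complex.norm_I, mul_one, abs_of_pos hρ, mul_assoc]
        gcongr
      · exact intervalIntegrable_const
      · refine Eventually.of_forall fun θ _ x hx => ?_
        have h1 := hdf _ (hin x hx (circleMap 0 ρ θ) (by simp [abs_of_pos hρ]))
        have h2 : HasFDerivAt (fun x => f (x + circleMap 0 ρ θ • v))
            (fderiv ℂ f (x + circleMap 0 ρ θ • v)) x := by
          simpa [Function.comp_def] using h1.comp x ((hasFDerivAt_id x).add_const (circleMap 0 ρ θ • v))
        exact (h2.const_smul _).const_smul _
    refine ((hdiffI.const_smul ((2 * Real.pi * Complex.I : ℂ)⁻¹))).congr_of_eventuallyEq ?_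
    filter_upwards [ball_mem_nhds x₀ hR] with x hx using hform x hx
  intro x hx
  let b := Module.finBasis ℂ E
  have h : fderiv ℂ f = fun x => ∑ i, 
      (ContinuousLinearMap.smulRightL ℂ E F (LinearMap.toContinuousLinearMap (b.coord i)))
        (fderiv ℂ f x (b i)) := by
    ext y w
    conv_lhs => rw [← b.sum_repr w, map_sum]
    simp
  rw [h]
  refine DifferentiableAt.differentiableWithinAt ?_
  refine DifferentiableAt.fun_sum fun i _ => ?_
  exact (ContinuousLinearMap.differentiableAt _).comp x (key (b i) x hx)

theorem sq_contDiffOn (n : ℕ) : ∀ {E F : Type} [NormedAddCommGroup E] [NormedSpace ℂ E]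
    [FiniteDimensional ℂ E]
    [NormedAddCommGroup F] [NormedSpace ℂ F] [FiniteDimensional ℂ F]
    {f : E → F} {U : Set E} (_ : IsOpen U) (_ : DifferentiableOn ℂ f U),
    ContDiffOn ℂ n f U := by
  induction n with
  | zero => 
    intro E F _ _ _ _ _ _ f U hU hf
    simpa using hf.continuousOn
  | succ n ih =>
    intro E F _ _ _ _ _ _ f U hU hf
    push_cast
    rw [contDiffOn_succ_iff_fderiv_of_isOpen hU]
    exact ⟨hf, by simp, ih hU (sq_differentiable_fderiv hU hf)⟩


theorem sq_oneD {g : ℂ → ℂ} {U : Set ℂ} (hU : U ∈ 𝓝 0) (hd : DifferentiableOn ℂ g U)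
    (hinj : InjOn g U) : deriv g 0 ≠ 0 := by
  intro h0
  have han : AnalyticAt ℂ (fun z => g z - g 0) 0 := 
    (hd.analyticAt hU).sub analyticAt_const
  have hne : ¬ ∀ᶠ z in 𝓝 0, g z - g 0 = 0 := by
    intro h
    have h2 := h.and hU
    obtain ⟨ε, hε, hb⟩ := Metric.eventually_nhds_iff_ball.1 h2
    have h3 := hb (ε/2 : ℝ) (by simp [abs_of_pos hε]; linarith)
    have := hinj h3.2 (mem_of_mem_nhds hU) (sub_eq_zero.1 h3.1)
    simp at this
    linarith
  obtain ⟨k, h, hh, hh0, hev⟩ := han.exists_eventuallyEq_pow_smul_nonzero_iff.2 hne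
  have hgd : HasDerivAt g 0 0 := by
    have := (hd.differentiableAt hU).hasDerivAt
    rwa [h0] at this
  simp only [sub_zero, smul_eq_mul] at hev
  have hk0 : k ≠ 0 := by
    rintro rfl
    have := hev.self_of_nhds
    simp at this
    exact hh0 this.symm
  have hk1 : k ≠ 1 := by
    rintro rfl
    have h1 : HasDerivAt (fun z => z ^ 1 * h z) (h 0) 0 := by
      have := (hasDerivAt_id (0:ℂ)).mul hh.differentiableAt.hasDerivAt
      simpa [Pi.mul_def] using this
    have h2 : HasDerivAt (fun z => g z - g 0) (h 0) 0 := h1.congr_of_eventuallyEq hev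
    have h3 := h2.unique (hgd.sub_const (g 0))
    exact hh0 h3
  obtain ⟨c, hc⟩ := IsAlgClosed.exists_pow_nat_eq (h 0) (Nat.pos_of_ne_zero hk0)
  have hc0 : c ≠ 0 := by
    rintro rfl
    rw [zero_pow hk0] at hc; exact hh0 hc.symm
  let r : ℂ → ℂ := fun z => c * Complex.exp (Complex.log (h z / h 0) / k)
  have hsl : ∀ᶠ z in 𝓝 0, h z / h 0 ∈ Complex.slitPlane := by
    have : ContinuousAt (fun z => h z / h 0) 0 := hh.continuousAt.div_const _
    refine this.eventually_mem (Complex.isOpen_slitPlane.mem_nhds ?_)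
    simp [hh0]
  have hran : AnalyticAt ℂ r 0 := by
    have h1 : AnalyticAt ℂ (fun z => h z / h 0) 0 := hh.div analyticAt_const hh0
    have h2 : AnalyticAt ℂ (fun z => Complex.log (h z / h 0)) 0 := 
      h1.clog hsl.self_of_nhds
    exact analyticAt_const.mul ((h2.div analyticAt_const (by exact_mod_cast hk0)).cexp)
  have hrk : ∀ᶠ z in 𝓝 0, r z ^ k = h z := by
    filter_upwards [hsl] with z hz
    have hz0 : h z / h 0 ≠ 0 := Complex.slitPlane_ne_zero hz
    have hkc : (k:ℂ) ≠ 0 := by exact_mod_cast hk0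
    simp only [r, mul_pow, hc, ← Complex.exp_nat_mul]
    rw [mul_div_cancel₀ _ hkc, Complex.exp_log hz0]
    field_simp
  have hr0 : r 0 = c := by simp [r, hh0]
  have hψ : HasStrictDerivAt (fun z => z * r z) c 0 := by
    have h1 : AnalyticAt ℂ (fun z => z * r z) 0 := analyticAt_id.mul hran
    have h2 : HasDerivAt (fun z => z * r z) c 0 := by
      have := (hasDerivAt_id (0:ℂ)).mul hran.differentiableAt.hasDerivAt
      simpa [hr0, Pi.mul_def] using this
    have := h1.hasStrictDerivAt
    rwa [h2.deriv] at this
  have hmap := hψ.map_nhds_eq hc0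
  simp only [zero_mul] at hmap
  have hA : {z | z ∈ U ∧ r z ^ k = h z ∧ g z - g 0 = z ^ k * h z} ∈ 𝓝 (0:ℂ) := by
    filter_upwards [hU, hrk, hev] with z h1 h2 h3 using ⟨h1, h2, h3⟩
  have hAi := image_mem_map (m := fun z => z * r z) hA
  rw [hmap] at hAi
  obtain ⟨ε, hε, hb⟩ := Metric.mem_nhds_iff.1 hAi
  have hprim := Complex.isPrimitiveRoot_exp k hk0
  set ω := Complex.exp (2 * Real.pi * Complex.I / k) with hω
  have hω1 : ‖ω‖ = 1 := hprim.norm'_eq_one hk0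
  obtain ⟨z1, ⟨hz1, hr1, hg1⟩, he1⟩ := hb (a := ((ε/2 : ℝ) : ℂ)) (by simp [abs_of_pos hε]; linarith)
  obtain ⟨z2, ⟨hz2, hr2, hg2⟩, he2⟩ := hb (a := ω * ((ε/2 : ℝ) : ℂ)) (by 
    rw [mem_ball_zero_iff, norm_mul, hω1]; simp [abs_of_pos hε]; linarith)
  simp only at he1 he2
  have heq : g z1 = g z2 := by
    have e1 : g z1 - g 0 = ((ε/2 : ℝ) : ℂ)^k := by rw [hg1, ← hr1, ← mul_pow, he1]
    have e2 : g z2 - g 0 = ((ε/2 : ℝ) : ℂ)^k := by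
      rw [hg2, ← hr2, ← mul_pow, he2, mul_pow, hprim.pow_eq_one, one_mul]
    linear_combination e1 - e2
  have hz := hinj hz1 hz2 heq
  rw [← hz, he1] at he2
  have hεc : ((ε/2 : ℝ) : ℂ) ≠ 0 := by
    exact_mod_cast (by positivity : (ε/2:ℝ) ≠ 0)
  have : ω = 1 := by
    have : (ω - 1) * ((ε/2 : ℝ) : ℂ) = 0 := by linear_combination -he2
    rcases mul_eq_zero.1 this with h | h
    · exact sub_eq_zero.1 h
    · exact absurd h hεc
  exact hprim.ne_one (by omega) this

/-- iterated directional derivatives -/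
noncomputable def sqIter {E : Type} [NormedAddCommGroup E] [NormedSpace ℂ E] (v : E) (J : E → ℂ) :
    ℕ → E → ℂ
  | 0 => J
  | k + 1 => fun x => fderiv ℂ (sqIter v J k) x v

theorem sqIter_diff {E : Type} [NormedAddCommGroup E] [NormedSpace ℂ E] [FiniteDimensional ℂ E]
    (v : E) {J : E → ℂ} {U : Set E} (hU : IsOpen U) (hJ : DifferentiableOn ℂ J U) (k : ℕ) :
    DifferentiableOn ℂ (sqIter v J k) U := by
  induction k with
  | zero => exact hJ
  | succ k ih =>
    have := sq_differentiable_fderiv hU ih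
    exact this.clm_apply (differentiableOn_const v)

theorem sqIter_line {E : Type} [NormedAddCommGroup E] [NormedSpace ℂ E] [FiniteDimensional ℂ E]
    (v : E) {J : E → ℂ} {U : Set E} (hU : IsOpen U) (hJ : DifferentiableOn ℂ J U) (k : ℕ)
    (x : E) : ∀ t : ℂ, x + t • v ∈ U →
      iteratedDeriv k (fun t : ℂ => J (x + t • v)) t = sqIter v J k (x + t • v) := by
  induction k with
  | zero => intro t _; simp [sqIter]
  | succ k ih =>
    intro t ht
    rw [iteratedDeriv_succ]
    have hev : iteratedDeriv k (fun t : ℂ => J (x + t • v)) =ᶠ[𝓝 t]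
        fun t => sqIter v J k (x + t • v) := by
      have hc : ContinuousAt (fun t : ℂ => x + t • v) t := by fun_prop
      filter_upwards [hc.eventually_mem (hU.mem_nhds ht)] with s hs using ih s hs
    rw [hev.deriv_eq]
    have h1 : HasDerivAt (fun t : ℂ => x + t • v) v t := by
      simpa using ((hasDerivAt_id t).smul_const v).const_add x
    have h2 := ((sqIter_diff v hU hJ k).differentiableAt (hU.mem_nhds ht)).hasFDerivAt
    exact (h2.comp_hasDerivAt t h1).deriv

theorem sq_hurwitz {E : Type} [NormedAddCommGroup E] [NormedSpace ℂ E] [FiniteDimensional ℂ E]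
    (v w : E) {J : E → ℂ} {U : Set E} (hU : IsOpen U) (hJ : DifferentiableOn ℂ J U)
    {x : E} (hx : x ∈ U) (hJx : J x = 0)
    (hne : ¬ ∀ᶠ t in 𝓝 (0:ℂ), J (x + t • v) = 0) {ρ : ℝ} (hρ : 0 < ρ) :
    ∀ᶠ s : ℝ in 𝓝 (0:ℝ), ∃ t : ℂ, ‖t‖ ≤ ρ ∧ x + (s:ℂ) • w + t • v ∈ U ∧
      J (x + (s:ℂ) • w + t • v) = 0 := by
  have hline : ContinuousAt (fun t : ℂ => x + t • v) 0 := by fun_prop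
  have hxU : ∀ᶠ t in 𝓝 (0:ℂ), x + t • v ∈ U :=
    hline.eventually_mem (hU.mem_nhds (by simpa using hx))
  have han : AnalyticAt ℂ (fun t : ℂ => J (x + t • v)) 0 := by
    refine DifferentiableOn.analyticAt (s := {t : ℂ | x + t • v ∈ U}) ?_ hxU
    exact hJ.comp (by fun_prop) (fun t ht => ht)
  have hpn := han.eventually_eq_zero_or_eventually_ne_zero.resolve_left hne
  rw [eventually_nhdsWithin_iff] at hpn
  obtain ⟨ε, hε, hb⟩ := Metric.eventually_nhds_iff_ball.1 (hpn.and hxU)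
  obtain ⟨r, hr, hrρ, hrε⟩ : ∃ r > 0, r ≤ ρ ∧ r < ε :=
    ⟨min ρ (ε/2), by positivity, min_le_left _ _, (min_le_right _ _).trans_lt (by linarith)⟩
  have hcont : ∀ t ∈ closedBall (0:ℂ) r, ContinuousAt
      (fun q : ℝ × ℂ => J (x + (q.1:ℂ) • w + q.2 • v)) (0, t) := by
    intro t ht
    have h1 : x + ((0:ℝ):ℂ) • w + t • v ∈ U := by
      simpa using (hb t (closedBall_subset_ball hrε ht)).2
    have h2 : ContinuousAt J (x + ((0:ℝ):ℂ) • w + t • v) :=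
      (hJ.differentiableAt (hU.mem_nhds h1)).continuousAt
    exact ContinuousAt.comp (f := fun q : ℝ × ℂ => x + (q.1:ℂ) • w + q.2 • v) h2 (by fun_prop)
  -- points stay in U
  have hUev : ∀ᶠ s : ℝ in 𝓝 (0:ℝ), ∀ t ∈ closedBall (0:ℂ) r, x + (s:ℂ) • w + t • v ∈ U := by
    refine (isCompact_closedBall (0:ℂ) r).eventually_forall_of_forall_eventually fun t ht => ?_
    have h2 : ContinuousAt (fun q : ℝ × ℂ => x + (q.1:ℂ) • w + q.2 • v) (0, t) := by fun_prop
    refine h2.eventually_mem (hU.mem_nhds ?_)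
    simpa using (hb t (closedBall_subset_ball hrε ht)).2
  obtain ⟨c, hc, hcmin⟩ : ∃ c > 0, ∀ t ∈ sphere (0:ℂ) r, 2 * c ≤ ‖J (x + t • v)‖ := by
    have hcs : ContinuousOn (fun t : ℂ => ‖J (x + t • v)‖) (sphere 0 r) := by
      refine ContinuousOn.norm (hJ.continuousOn.comp (by fun_prop) fun t ht => ?_)
      exact (hb t (closedBall_subset_ball hrε (sphere_subset_closedBall ht))).2
    obtain ⟨t0, ht0, hmin⟩ := (isCompact_sphere (0:ℂ) r).exists_isMinOn
      (NormedSpace.sphere_nonempty.2 hr.le) hcs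
    refine ⟨‖J (x + t0 • v)‖ / 2, ?_, fun t ht => ?_⟩
    · have := (hb t0 (closedBall_subset_ball hrε (sphere_subset_closedBall ht0))).1 (by
        rintro rfl; simp at ht0; linarith)
      have := norm_pos_iff.2 this
      linarith
    · have := hmin ht
      simp only [mem_ofPred_eq] at this
      linarith
  have hsph : ∀ᶠ s : ℝ in 𝓝 (0:ℝ), ∀ t ∈ sphere (0:ℂ) r, c < ‖J (x + (s:ℂ) • w + t • v)‖ := by
    refine (isCompact_sphere (0:ℂ) r).eventually_forall_of_forall_eventually fun t ht => ?_
    refine (hcont t (sphere_subset_closedBall ht)).norm.eventually (lt_mem_nhds ?_)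
    have := hcmin t ht
    simp only [Complex.ofReal_zero, zero_smul, add_zero]
    linarith
  have hcen : ∀ᶠ s : ℝ in 𝓝 (0:ℝ), ‖J (x + (s:ℂ) • w + (0:ℂ) • v)‖ < c := by
    have h1 := (hcont 0 (mem_closedBall_self hr.le)).norm
    have h2 : ContinuousAt (fun s : ℝ => (s, (0:ℂ))) 0 := by fun_prop
    have h3 : ContinuousAt (fun s : ℝ => ‖J (x + (s:ℂ) • w + (0:ℂ) • v)‖) 0 :=
      ContinuousAt.comp (f := fun s : ℝ => (s, (0:ℂ))) h1 h2
    refine h3.eventually (gt_mem_nhds ?_)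
    simpa [hJx] using hc
  filter_upwards [hUev, hsph, hcen] with s h1 h2 h3
  by_contra hcon
  push Not at hcon
  have hnz : ∀ t ∈ closedBall (0:ℂ) r, J (x + (s:ℂ) • w + t • v) ≠ 0 := fun t ht =>
    hcon t ((mem_closedBall_zero_iff.1 ht).trans hrρ) (h1 t ht)
  have hd : DifferentiableOn ℂ (fun t : ℂ => (J (x + (s:ℂ) • w + t • v))⁻¹) (closedBall 0 r) := by
    refine DifferentiableOn.fun_inv (hJ.comp (by fun_prop) h1) hnz
  have := Complex.norm_le_of_forall_mem_frontier_norm_le (U := ball (0:ℂ) r) (C := c⁻¹)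
    isBounded_ball (f := (fun t : ℂ => (J (x + (s:ℂ) • w + t • v))⁻¹))
    (DifferentiableOn.diffContOnCl (by rwa [closure_ball _ hr.ne'])) ?_ (z := 0)
    (by rw [closure_ball _ hr.ne']; exact mem_closedBall_self hr.le)
  · rw [norm_inv] at this
    have h5 := norm_pos_iff.2 (hnz 0 (mem_closedBall_self hr.le))
    rw [inv_le_inv₀ h5 hc] at this
    linarith
  · intro t ht
    rw [frontier_ball _ hr.ne'] at ht
    rw [norm_inv]
    exact inv_anti₀ hc (h2 t ht).le

theorem sq_singular {E F : Type} [NormedAddCommGroup E] [NormedSpace ℂ E] [FiniteDimensional ℂ E]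
    [NormedAddCommGroup F] [NormedSpace ℂ F] [FiniteDimensional ℂ F]
    (hdim : 2 ≤ Module.finrank ℂ E)
    {f : E → F} {J : E → ℂ} {x₀ x₁ : E} {R : ℝ} 
    (hf : DifferentiableOn ℂ f (ball x₀ R)) (hinj : InjOn f (ball x₀ R))
    (hJ : DifferentiableOn ℂ J (ball x₀ R)) (hJ0 : J x₀ = 0) (hx₁ : x₁ ∈ ball x₀ R)
    (hJ1 : J x₁ ≠ 0) (hZ : ∀ x ∈ ball x₀ R, J x = 0 → fderiv ℂ f x = 0) : False := by
  set U := ball x₀ R with hUdef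
  have hU : IsOpen U := isOpen_ball
  have hR : 0 < R := pos_of_mem_ball hx₁
  set v := x₁ - x₀ with hv
  have hx₀ : x₀ ∈ U := mem_ball_self hR
  -- existence of some nonvanishing directional derivative at x₀
  have hex : ∃ k, ∃ x ∈ U, J x = 0 ∧ sqIter v J k x ≠ 0 := by
    by_contra hcon
    push Not at hcon
    have hv0 : 0 < ‖v‖ := by
      rw [norm_pos_iff, hv, sub_ne_zero]
      rintro rfl; exact hJ1 hJ0
    have hrad : 1 < R / ‖v‖ := by
      rw [lt_div_iff₀ hv0, one_mul]
      exact mem_ball_iff_norm.1 hx₁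
    have hmaps : ∀ t ∈ ball (0:ℂ) (R / ‖v‖), x₀ + t • v ∈ U := by
      intro t ht
      rw [mem_ball_zero_iff, lt_div_iff₀ hv0] at ht
      simpa [hUdef, mem_ball_iff_norm, norm_smul] using ht
    have hd : DifferentiableOn ℂ (fun t : ℂ => J (x₀ + t • v)) (ball (0:ℂ) (R / ‖v‖)) :=
      hJ.comp (by fun_prop) hmaps
    have hs := Complex.hasSum_taylorSeries_on_ball (z := 1) hd (by simpa using hrad)
    have h0 : ∀ n, iteratedDeriv n (fun t : ℂ => J (x₀ + t • v)) 0 = 0 := by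
      intro n
      rw [sqIter_line v hU hJ n x₀ 0 (by simpa using hx₀)]
      simpa using hcon n x₀ hx₀ hJ0
    simp only [h0, smul_zero] at hs
    have := hs.unique hasSum_zero
    apply hJ1
    rw [← this]; simp [hv]
  classical
  let m := Nat.find hex
  obtain ⟨x, hx, hJx, hmx⟩ := Nat.find_spec hex
  have hm0 : m ≠ 0 := by
    intro h
    have h' : Nat.find hex = 0 := h
    rw [h'] at hmx
    exact hmx hJx
  obtain ⟨l, hl⟩ := Nat.exists_eq_succ_of_ne_zero hm0
  have hl' : Nat.find hex = l + 1 := hl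
  rw [hl'] at hmx
  set K := sqIter v J l with hK
  have hKZ : ∀ y ∈ U, J y = 0 → K y = 0 := by
    intro y hy hJy
    by_contra hne
    exact Nat.find_min hex (m := l) (by omega) ⟨y, hy, hJy, hne⟩
  have hKd : DifferentiableOn ℂ K U := sqIter_diff v hU hJ l
  set A := fderiv ℂ K x with hA
  have hAv : A v ≠ 0 := hmx
  have hne : ¬ ∀ᶠ t in 𝓝 (0:ℂ), J (x + t • v) = 0 := by
    intro h
    apply hmx
    have h1 := sqIter_line v hU hJ (l+1) x 0 (by simpa using hx)
    simp only [zero_smul, add_zero] at h1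
    rw [← h1]
    have h2 : (fun t : ℂ => J (x + t • v)) =ᶠ[𝓝 0] fun _ => 0 := h
    rw [h2.iteratedDeriv_eq]
    simp
  obtain ⟨w, hw, hw0⟩ : ∃ w : E, A w = 0 ∧ w ≠ 0 := by
    have hF : LinearMap.ker (A : E →ₗ[ℂ] ℂ) ≠ ⊥ := LinearMap.ker_ne_bot_of_finrank_lt (by
      rw [Module.finrank_self]; omega)
    obtain ⟨w, h1, h2⟩ := (Submodule.ne_bot_iff _).1 hF
    exact ⟨w, h1, h2⟩
  have hstrict : HasStrictFDerivAt K A x := 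
    ((sq_contDiffOn 1 hU hKd).contDiffAt (hU.mem_nhds hx)).hasStrictFDerivAt (by simp)
  have ha : 0 < ‖A v‖ := norm_pos_iff.2 hAv
  set κ := ‖A v‖ / (2 * (‖v‖ + ‖w‖ + 1)) with hκ
  have hκ0 : 0 < κ := by positivity
  obtain ⟨δ, hδ, hlip⟩ : ∃ δ > 0, ∀ y ∈ ball x δ, ∀ y' ∈ ball x δ, 
      ‖K y - K y' - A (y - y')‖ ≤ κ * ‖y - y'‖ := by
    have := hstrict.isLittleO.def hκ0
    obtain ⟨δ, hδ, h⟩ := Metric.eventually_nhds_iff_ball.1 this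
    refine ⟨δ, hδ, fun y hy y' hy' => h (y, y') ?_⟩
    rw [← ball_prod_same]; exact ⟨hy, hy'⟩
  have hρ : 0 < δ / (2 * (‖v‖ + 1)) := by positivity
  have hH := sq_hurwitz v w hU hJ hx hJx hne hρ
  have hsm : ∀ᶠ s : ℝ in 𝓝 (0:ℝ), ‖(s:ℂ) • w‖ < δ / 2 := by
    have : ContinuousAt (fun s : ℝ => ‖(s:ℂ) • w‖) 0 := by fun_prop
    refine this.eventually (gt_mem_nhds ?_)
    simp; positivity
  obtain ⟨η, hη, hη2⟩ := Metric.eventually_nhds_iff_ball.1 (hH.and hsm)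
  have hex2 : ∀ s : ℝ, ∃ t : ℂ, s ∈ ball (0:ℝ) η → ‖t‖ ≤ δ / (2 * (‖v‖ + 1)) ∧ 
      x + (s:ℂ) • w + t • v ∈ U ∧ J (x + (s:ℂ) • w + t • v) = 0 := by
    intro s
    by_cases hs : s ∈ ball (0:ℝ) η
    · obtain ⟨t, ht⟩ := (hη2 s hs).1
      exact ⟨t, fun _ => ht⟩
    · exact ⟨0, fun h => absurd h hs⟩
  choose t ht using hex2
  let c : ℝ → E := fun s => x + (s:ℂ) • w + t s • v
  have hcU : ∀ s ∈ ball (0:ℝ) η, c s ∈ U := fun s hs => (ht s hs).2.1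
  have hcJ : ∀ s ∈ ball (0:ℝ) η, J (c s) = 0 := fun s hs => (ht s hs).2.2
  have hcδ : ∀ s ∈ ball (0:ℝ) η, c s ∈ ball x δ := by
    intro s hs
    have h1 := (ht s hs).1
    have h2 := (hη2 s hs).2
    rw [mem_ball_iff_norm]
    have h3 : ‖t s • v‖ ≤ δ / 2 := by
      rw [norm_smul]
      calc ‖t s‖ * ‖v‖ ≤ δ / (2 * (‖v‖ + 1)) * (‖v‖ + 1) := by gcongr; linarith
        _ = δ / 2 := by field_simp
    calc ‖c s - x‖ = ‖(s:ℂ) • w + t s • v‖ := by simp only [c]; congr 1; abel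
      _ ≤ _ := norm_add_le _ _
      _ < _ := by linarith
  have hsub : ∀ s s' : ℝ, c s - c s' = ((s - s' : ℝ):ℂ) • w + (t s - t s') • v := by
    intro s s'
    simp only [c, Complex.ofReal_sub, sub_smul]; abel
  have htlip : ∀ s ∈ ball (0:ℝ) η, ∀ s' ∈ ball (0:ℝ) η, ‖t s - t s'‖ ≤ |s - s'| := by
    intro s hs s' hs'
    have h1 := hlip (c s) (hcδ s hs) (c s') (hcδ s' hs')
    rw [hKZ _ (hcU s hs) (hcJ s hs), hKZ _ (hcU s' hs') (hcJ s' hs'), hsub, map_add, map_smul,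
      map_smul, hw] at h1
    simp only [sub_self, smul_zero, zero_add, zero_sub, norm_neg, norm_smul] at h1
    have h2 : ‖((s - s' : ℝ):ℂ) • w + (t s - t s') • v‖ ≤ |s - s'| * ‖w‖ + ‖t s - t s'‖ * ‖v‖ := by
      refine (norm_add_le _ _).trans ?_
      rw [norm_smul, norm_smul, Complex.norm_real, Real.norm_eq_abs]
    have h3 : κ * (|s - s'| * ‖w‖ + ‖t s - t s'‖ * ‖v‖) ≤ 
        κ * ((|s - s'| + ‖t s - t s'‖) * (‖v‖ + ‖w‖ + 1)) := by
      gcongr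
      nlinarith [norm_nonneg v, norm_nonneg w, norm_nonneg (t s - t s'), abs_nonneg (s - s'),
        mul_nonneg (norm_nonneg v) (abs_nonneg (s - s')), 
        mul_nonneg (norm_nonneg w) (norm_nonneg (t s - t s'))]
    have h4 : κ * ((|s - s'| + ‖t s - t s'‖) * (‖v‖ + ‖w‖ + 1)) = 
       ‖A v‖ / 2 * (|s - s'| + ‖t s - t s'‖) := by
      rw [hκ]; field_simp
    have h5 : ‖t s - t s'‖ * ‖A v‖ ≤ ‖A v‖ / 2 * (|s - s'| + ‖t s - t s'‖) := by
      rw [← h4]; exact h1.trans ((mul_le_mul_of_nonneg_left h2 hκ0.le).trans h3)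
    have h6 : ‖A v‖ * ‖t s - t s'‖ ≤ ‖A v‖ * |s - s'| := by linarith
    exact le_of_mul_le_mul_left h6 ha
  have hclip : ∀ s ∈ ball (0:ℝ) η, ∀ s' ∈ ball (0:ℝ) η, 
      ‖c s - c s'‖ ≤ (‖w‖ + ‖v‖) * ‖s - s'‖ := by
    intro s hs s' hs'
    rw [hsub]
    refine (norm_add_le _ _).trans ?_
    rw [norm_smul, norm_smul, Complex.norm_real, Real.norm_eq_abs]
    have := mul_le_mul_of_nonneg_right (htlip s hs s' hs') (norm_nonneg v)
    linarith
  have hder : ∀ s ∈ ball (0:ℝ) η, HasDerivAt (fun s => f (c s)) 0 s := by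
    intro s hs
    have hfd : HasFDerivAt f (0 : E →L[ℂ] F) (c s) := by
      rw [← hZ _ (hcU s hs) (hcJ s hs)]
      exact (hf.differentiableAt (hU.mem_nhds (hcU s hs))).hasFDerivAt
    have hbigO : (fun s' => c s' - c s) =O[𝓝 s] (fun s' => s' - s) := by
      refine Asymptotics.IsBigO.of_bound (‖w‖ + ‖v‖) ?_
      filter_upwards [isOpen_ball.mem_nhds hs] with s' hs' using hclip s' hs' s hs
    have htend : Tendsto c (𝓝 s) (𝓝 (c s)) := by
      rw [tendsto_iff_norm_sub_tendsto_zero]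
      have : Tendsto (fun s' : ℝ => (‖w‖ + ‖v‖) * ‖s' - s‖) (𝓝 s) (𝓝 0) := by
        have : ContinuousAt (fun s' : ℝ => (‖w‖ + ‖v‖) * ‖s' - s‖) s := by fun_prop
        simpa [ContinuousAt] using this
      refine squeeze_zero' (Eventually.of_forall fun _ => norm_nonneg _) ?_ this
      filter_upwards [isOpen_ball.mem_nhds hs] with s' hs' using hclip s' hs' s hs
    have h1 := (hasFDerivAt_iff_isLittleO.1 hfd).comp_tendsto htend
    rw [hasDerivAt_iff_isLittleO]
    simpa [Function.comp_def] using h1.trans_isBigO hbigO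
  have hconst : f (c 0) = f (c (η/2)) := by
    have h0 : (0:ℝ) ∈ ball (0:ℝ) η := mem_ball_self hη
    have h1 : (η/2:ℝ) ∈ ball (0:ℝ) η := by simp [abs_of_pos hη]; linarith
    have := (convex_ball (0:ℝ) η).norm_image_sub_le_of_norm_hasDerivWithin_le (C := 0)
      (fun s hs => (hder s hs).hasDerivWithinAt) (by simp) h1 h0
    simpa [sub_eq_zero] using this
  have h0 : (0:ℝ) ∈ ball (0:ℝ) η := mem_ball_self hη
  have h1 : (η/2:ℝ) ∈ ball (0:ℝ) η := by simp [abs_of_pos hη]; linarith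
  have heq := hinj (hcU _ h0) (hcU _ h1) hconst
  have h2 := hsub (η/2) 0
  rw [heq, sub_self, sub_zero] at h2
  have h3 := congrArg A h2
  simp only [map_zero, map_add, map_smul, hw, smul_zero, zero_add, smul_eq_mul, mul_zero] at h3
  have h4 : t (η/2) - t 0 = 0 := by
    rcases mul_eq_zero.1 h3.symm with h | h
    · exact h
    · exact absurd h hAv
  rw [h4, zero_smul, add_zero] at h2
  rcases smul_eq_zero.1 h2.symm with h | h
  · have : (η/2:ℝ) = 0 := by exact_mod_cast h
    linarith
  · exact hw0 h

theorem sq_localinv {E F : Type} [NormedAddCommGroup E] [NormedSpace ℂ E]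
    [FiniteDimensional ℂ E]
    [NormedAddCommGroup F] [NormedSpace ℂ F] [FiniteDimensional ℂ F]
    {f : E → F} {U : Set E} (hU : IsOpen U) (hf : DifferentiableOn ℂ f U) {x : E} (hx : x ∈ U)
    (L : E ≃L[ℂ] F) (hL : HasFDerivAt f (L : E →L[ℂ] F) x) :
    ∃ G : F → E, G (f x) = x ∧ HasFDerivAt G (L.symm : F →L[ℂ] E) (f x) ∧
      ∀ᶠ y in 𝓝 (f x), DifferentiableAt ℂ G y ∧ f (G y) = y ∧ G y ∈ U := by
  have : CompleteSpace E := FiniteDimensional.complete ℂ E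
  have h1 : ContDiffAt ℂ (1:ℕ) f x := (sq_contDiffOn 1 hU hf).contDiffAt (hU.mem_nhds hx)
  have hs : HasStrictFDerivAt f (L : E →L[ℂ] F) x := h1.hasStrictFDerivAt' hL (by simp)
  have h2 := h1.to_localInverse hL (by simp)
  have e : h1.localInverse hL (by simp) = hs.localInverse := rfl
  rw [e] at h2
  have h3 := hs.localInverse_apply_image
  have h4 : ∀ᶠ y in 𝓝 (f x), DifferentiableAt ℂ hs.localInverse y := by
    have := h2.eventually (by simp)
    filter_upwards [this] with y hy using hy.differentiableAt (by simp)
  have h5 : Tendsto hs.localInverse (𝓝 (f x)) (𝓝 x) := hs.localInverse_tendsto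
  refine ⟨hs.localInverse, h3, hs.to_localInverse.hasFDerivAt, ?_⟩
  filter_upwards [h4, hs.eventually_right_inverse, h5 (hU.mem_nhds hx)] with y a b c
  exact ⟨a, b, c⟩

theorem sq_reduce (n : ℕ)
    (IH : ∀ {E F : Type} [NormedAddCommGroup E] [NormedSpace ℂ E]
      [FiniteDimensional ℂ E]
      [NormedAddCommGroup F] [NormedSpace ℂ F] [FiniteDimensional ℂ F]
      {f : E → F} {U : Set E}, Module.finrank ℂ E = n → Module.finrank ℂ F = n → IsOpen U →
      DifferentiableOn ℂ f U → InjOn f U → ∀ x ∈ U, Function.Injective (fderiv ℂ f x))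
    {E F : Type} [NormedAddCommGroup E] [NormedSpace ℂ E]
    [FiniteDimensional ℂ E]
    [NormedAddCommGroup F] [NormedSpace ℂ F] [FiniteDimensional ℂ F]
    {f : E → F} {U : Set E} (hE : Module.finrank ℂ E = n + 1) (hF : Module.finrank ℂ F = n + 1)
    (hU : IsOpen U) (hf : DifferentiableOn ℂ f U) (hinj : InjOn f U) {x : E} (hx : x ∈ U)
    (hne : fderiv ℂ f x ≠ 0) : Function.Injective (fderiv ℂ f x) := by
  set A := fderiv ℂ f x with hA
  have hfA : HasFDerivAt f A x := (hf.differentiableAt (hU.mem_nhds hx)).hasFDerivAt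
  obtain ⟨v, hv⟩ : ∃ v, A v ≠ 0 := by
    by_contra h; push Not at h; exact hne (ContinuousLinearMap.ext h)
  obtain ⟨l, hl⟩ := SeparatingDual.exists_eq_one (R := ℂ) hv
  set α : E →L[ℂ] ℂ := l.comp A with hα
  have hαv : α v = 1 := hl
  -- the straightened map
  let Φ : E → E := fun y => (y - x) + (l (f y - f x) - α (y - x)) • v
  have hΦd : DifferentiableOn ℂ Φ U := by
    intro y hy
    have := hf y hy
    simp only [Φ]
    fun_prop
  have hΦx : Φ x = 0 := by simp [Φ]
  have hΦ' : HasFDerivAt Φ ((ContinuousLinearEquiv.refl ℂ E : E ≃L[ℂ] E) : E →L[ℂ] E) x := by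
    have h1 : HasFDerivAt (fun y => l (f y - f x)) (l.comp A) x :=
      l.hasFDerivAt.comp x (hfA.sub_const _)
    have h2 : HasFDerivAt (fun y : E => y - x) (ContinuousLinearMap.id ℂ E) x :=
      (hasFDerivAt_id x).sub_const _
    have h3 : HasFDerivAt (fun y : E => α (y - x)) α x := by
      exact α.hasFDerivAt.comp x h2
    have h4 := h2.add ((h1.sub h3).smul_const v)
    have h5 : ((ContinuousLinearEquiv.refl ℂ E : E ≃L[ℂ] E) : E →L[ℂ] E) =
        ContinuousLinearMap.id ℂ E + (l.comp A - α).smulRight v := by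
      ext y
      simp [hα]
    rw [h5]
    exact h4
  obtain ⟨G, hG0, hG', hGev⟩ := sq_localinv hU hΦd hx _ hΦ'
  rw [hΦx] at hG0 hG' hGev
  obtain ⟨ε, hε, hball⟩ := Metric.eventually_nhds_iff_ball.1 hGev
  let E' := LinearMap.ker (α : E →ₗ[ℂ] ℂ)
  let F' := LinearMap.ker (l : F →ₗ[ℂ] ℂ)
  let P : F →L[ℂ] F' := ((ContinuousLinearMap.id ℂ F) - l.smulRight (A v)).codRestrict F' (by
    intro y
    simp only [F', LinearMap.mem_ker]
    simp [hl])
  have hP : ∀ y, l y = 0 → (P y : F) = y := by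
    intro y hy
    simp [P, hy]
  have hαΦ : ∀ y, α (Φ y) = l (f y - f x) := by
    intro y
    simp only [Φ, map_add, map_smul, hαv, smul_eq_mul]; ring
  let g : E' → F' := fun e => P (f (G e) - f x)
  have hlg : ∀ e : E', (e : E) ∈ ball (0:E) ε → l (f (G e) - f x) = 0 := by
    intro e he
    rw [← hαΦ, (hball _ he).2.1]
    exact e.2
  have hcoe : Continuous (fun e : E' => (e : E)) := continuous_subtype_val
  have hgd : DifferentiableOn ℂ g (ball 0 ε) := by
    intro e he
    have he' : (e:E) ∈ ball (0:E) ε := by simpa using he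
    obtain ⟨h1, h2, h3⟩ := hball _ he'
    have h4 : DifferentiableAt ℂ (fun e : E' => G e) e :=
      DifferentiableAt.comp (f := fun e : E' => (e:E)) e h1 E'.subtypeL.differentiableAt
    have h5 : DifferentiableAt ℂ (fun e : E' => f (G e)) e :=
      DifferentiableAt.comp (f := fun e : E' => G e) e (hf.differentiableAt (hU.mem_nhds h3)) h4
    exact (P.differentiableAt.comp e (h5.sub_const (f x))).differentiableWithinAt
  have hginj : InjOn g (ball 0 ε) := by
    intro e he e2 he2 h
    have he' : (e:E) ∈ ball (0:E) ε := by simpa using he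
    have he2' : (e2:E) ∈ ball (0:E) ε := by simpa using he2
    have h1 := congrArg (fun z : F' => (z : F)) h
    simp only [g] at h1
    rw [hP _ (hlg e he'), hP _ (hlg e2 he2'), sub_left_inj] at h1
    have h2 := hinj (hball _ he').2.2 (hball _ he2').2.2 h1
    apply Subtype.ext
    rw [← (hball _ he').2.1, ← (hball _ he2').2.1, h2]
  have hdimE : Module.finrank ℂ E' = n := by
    have h1 := LinearMap.finrank_range_add_finrank_ker (α : E →ₗ[ℂ] ℂ)
    have h2 : LinearMap.range (α : E →ₗ[ℂ] ℂ) = ⊤ := by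
      rw [LinearMap.range_eq_top]
      intro c; exact ⟨c • v, by simp [hαv]⟩
    rw [h2, finrank_top, Module.finrank_self, hE] at h1
    change Module.finrank ℂ (LinearMap.ker (α : E →ₗ[ℂ] ℂ)) = n
    omega
  have hdimF : Module.finrank ℂ F' = n := by
    have h1 := LinearMap.finrank_range_add_finrank_ker (l : F →ₗ[ℂ] ℂ)
    have h2 : LinearMap.range (l : F →ₗ[ℂ] ℂ) = ⊤ := by
      rw [LinearMap.range_eq_top]
      intro c; exact ⟨c • A v, by simp [hl]⟩
    rw [h2, finrank_top, Module.finrank_self, hF] at h1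
    change Module.finrank ℂ (LinearMap.ker (l : F →ₗ[ℂ] ℂ)) = n
    omega
  have hres := IH hdimE hdimF isOpen_ball hgd hginj 0 (mem_ball_self hε)
  have hgder : HasFDerivAt g (P.comp (A.comp (E'.subtypeL))) 0 := by
    have h1 : HasFDerivAt (fun e : E' => G e) E'.subtypeL 0 := by
      have : HasFDerivAt G (ContinuousLinearMap.id ℂ E) ((0:E') : E) := by simpa using hG'
      exact this.comp (0:E') E'.subtypeL.hasFDerivAt
    have h2 : HasFDerivAt (fun e : E' => f (G e)) (A.comp E'.subtypeL) 0 := by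
      have : HasFDerivAt f A (G ((0:E') : E)) := by simpa [hG0] using hfA
      exact this.comp (0:E') h1
    exact P.hasFDerivAt.comp (0:E') (h2.sub_const (f x))
  rw [hgder.fderiv] at hres
  rw [injective_iff_map_eq_zero]
  intro u hu
  have hαu : α u = 0 := by simp [hα, hu]
  have h6 : (P.comp (A.comp (E'.subtypeL))) (⟨u, hαu⟩ : E') = (P.comp (A.comp (E'.subtypeL))) 0 := by
    simp [hu]
  have := hres h6
  exact congrArg (fun z : E' => (z : E)) this


theorem sq_prod_diff {G ι : Type} [NormedAddCommGroup G] [NormedSpace ℂ G] {U : Set G}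
    (s : Finset ι) {u : ι → G → ℂ} (hu : ∀ i, DifferentiableOn ℂ (u i) U) :
    DifferentiableOn ℂ (fun y => ∏ i ∈ s, u i y) U := by
  classical
  induction s using Finset.induction_on with
  | empty => simp
  | insert a s ha ih =>
    simp only [Finset.prod_insert ha]
    exact (hu a).mul ih

theorem sq_det_diff {E G : Type} [NormedAddCommGroup E] [NormedSpace ℂ E] [FiniteDimensional ℂ E]
    [NormedAddCommGroup G] [NormedSpace ℂ G] {A : G → E →L[ℂ] E} {U : Set G}
    (hA : DifferentiableOn ℂ A U) :
    DifferentiableOn ℂ (fun y => LinearMap.det ((A y : E →L[ℂ] E) : E →ₗ[ℂ] E)) U := by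
  let b := Module.finBasis ℂ E
  have h2 : (fun y => LinearMap.det ((A y : E →L[ℂ] E) : E →ₗ[ℂ] E)) =
      fun y => ∑ σ : Equiv.Perm (Fin (Module.finrank ℂ E)),
        (((Equiv.Perm.sign σ : ℤ)) : ℂ) * ∏ i,
          (LinearMap.toContinuousLinearMap (b.coord (σ i))) (A y (b i)) := by
    funext y
    rw [← LinearMap.det_toMatrix b, Matrix.det_apply']
    simp [LinearMap.toMatrix_apply]
  rw [h2]
  refine DifferentiableOn.fun_sum fun σ _ => ?_
  refine DifferentiableOn.const_mul ?_ _
  refine sq_prod_diff _ fun i => ?_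
  have h3 : DifferentiableOn ℂ (fun y => A y (b i)) U :=
    hA.clm_apply (differentiableOn_const _)
  exact (LinearMap.toContinuousLinearMap (b.coord (σ i))).differentiable.comp_differentiableOn h3

theorem sq_osgood (n : ℕ) : ∀ {E F : Type} [NormedAddCommGroup E] [NormedSpace ℂ E]
      [FiniteDimensional ℂ E]
      [NormedAddCommGroup F] [NormedSpace ℂ F] [FiniteDimensional ℂ F]
      {f : E → F} {U : Set E}, Module.finrank ℂ E = n → Module.finrank ℂ F = n → IsOpen U →
      DifferentiableOn ℂ f U → InjOn f U → ∀ x ∈ U, Function.Injective (fderiv ℂ f x) := by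
  induction n with
  | zero =>
    intro E F _ _ _ _ _ _ f U hE hF hU hf hinj x hx
    have := Module.finrank_zero_iff.1 hE
    exact Function.injective_of_subsingleton _
  | succ n ih =>
    intro E F _ _ _ _ _ _ f U hE hF hU hf hinj x hx
    have halt : ∀ y ∈ U, fderiv ℂ f y ≠ 0 → Function.Injective (fderiv ℂ f y) :=
      fun y hy h => sq_reduce n ih hE hF hU hf hinj hy h
    by_contra hnot
    have hzero : fderiv ℂ f x = 0 := by
      by_contra h; exact hnot (halt x hx h)
    have hfd := (hf.differentiableAt (hU.mem_nhds hx)).hasFDerivAt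
    rw [hzero] at hfd
    have : Nontrivial E := Module.nontrivial_of_finrank_pos (R := ℂ) (by omega)
    obtain ⟨v, hv⟩ := exists_ne (0 : E)
    let T : F ≃L[ℂ] E := ContinuousLinearEquiv.ofFinrankEq (by rw [hE, hF])
    rcases Nat.eq_zero_or_pos n with rfl | hn
    · let S : E ≃L[ℂ] ℂ := ContinuousLinearEquiv.ofFinrankEq (by rw [hE, Module.finrank_self])
      let W : Set ℂ := {t : ℂ | x + t • v ∈ U}
      have hline : ContinuousAt (fun t : ℂ => x + t • v) 0 := by fun_prop
      have hW : W ∈ 𝓝 (0:ℂ) := hline.eventually_mem (hU.mem_nhds (by simpa using hx))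
      have hmap : MapsTo (fun t : ℂ => x + t • v) W U := fun t ht => ht
      have hdif : DifferentiableOn ℂ (fun t : ℂ => f (x + t • v)) W :=
        hf.comp (by fun_prop) hmap
      have hg : DifferentiableOn ℂ (fun t : ℂ => S (T (f (x + t • v)))) W :=
        (S.toContinuousLinearMap.comp T.toContinuousLinearMap).differentiable.comp_differentiableOn hdif
      refine sq_oneD hW hg ?_ ?_
      · intro t ht s hs h
        have h1 := hinj (hmap ht) (hmap hs) (T.injective (S.injective h))
        simpa [hv] using h1
      · have h1 : HasDerivAt (fun t : ℂ => x + t • v) v 0 := by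
          simpa using ((hasDerivAt_id (0:ℂ)).smul_const v).const_add x
        have h0 : HasFDerivAt f (0 : E →L[ℂ] F) (x + (0:ℂ) • v) := by simpa using hfd
        have h2 : HasDerivAt (fun t : ℂ => f (x + t • v)) 0 0 := by
          have h00 := h0.comp_hasDerivAt (0:ℂ) h1
          rwa [zero_apply] at h00
        have h3 : HasDerivAt (fun t : ℂ => S (T (f (x + t • v)))) 0 0 := by
          have := (S.toContinuousLinearMap.comp T.toContinuousLinearMap).hasFDerivAt.comp_hasDerivAt (0:ℂ) h2
          rw [map_zero] at this
          exact this
        exact h3.deriv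
    · obtain ⟨R, hR, hRU⟩ := Metric.isOpen_iff.1 hU x hx
      let b := Module.finBasis ℂ E
      let J : E → ℂ := fun y => LinearMap.det ((T.toContinuousLinearMap.comp (fderiv ℂ f y) : E →L[ℂ] E) : E →ₗ[ℂ] E)
      have hJd : DifferentiableOn ℂ J U := by
        have h1 := sq_differentiable_fderiv hU hf
        refine sq_det_diff (A := fun y => T.toContinuousLinearMap.comp (fderiv ℂ f y)) ?_
        exact (differentiableOn_const T.toContinuousLinearMap).clm_comp h1
      have hZ : ∀ y ∈ U, J y = 0 → fderiv ℂ f y = 0 := by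
        intro y hy h
        by_contra hne
        have h1 := halt y hy hne
        have h2 := LinearMap.bot_lt_ker_of_det_eq_zero h
        have h3 : LinearMap.ker ((T.toContinuousLinearMap.comp (fderiv ℂ f y) : E →L[ℂ] E) : E →ₗ[ℂ] E) = ⊥ := by
          rw [LinearMap.ker_eq_bot]
          exact T.injective.comp h1
        rw [h3] at h2
        exact lt_irrefl _ h2
      have hJx : J x = 0 := by
        simp only [J, hzero]
        have : ((T.toContinuousLinearMap.comp (0 : E →L[ℂ] F) : E →L[ℂ] E) : E →ₗ[ℂ] E) = 0 := by
          ext y; simp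
        rw [this, LinearMap.det_zero'']
      have hex : ∃ y ∈ ball x R, J y ≠ 0 := by
        by_contra hcon
        push Not at hcon
        have hz : ∀ {y z : E}, y ∈ ball x R → z ∈ ball x R → ‖f z - f y‖ ≤ 0 * ‖z - y‖ := fun {y z} => ((convex_ball x R).norm_image_sub_le_of_norm_fderiv_le (𝕜 := ℂ) (f := f) (C := 0)
          (fun y hy => hf.differentiableAt (hU.mem_nhds (hRU hy)))
          (fun y hy => by rw [hZ y (hRU hy) (hcon y hy)]; simp))
        set s : ℝ := R / (2 * ‖v‖) with hs
        have hvp : 0 < ‖v‖ := norm_pos_iff.2 hv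
        have hspos : 0 < s := by positivity
        have hmem : x + (s:ℂ) • v ∈ ball x R := by
          rw [mem_ball_iff_norm, add_sub_cancel_left, norm_smul, Complex.norm_real, Real.norm_eq_abs,
            abs_of_pos hspos, hs]
          field_simp
          linarith
        have h1 := hz (mem_ball_self hR) hmem
        simp only [zero_mul, norm_le_zero_iff, sub_eq_zero] at h1
        have h2 := hinj (hRU hmem) hx h1
        rw [add_eq_left, smul_eq_zero] at h2
        rcases h2 with h2 | h2
        · exact hspos.ne' (by exact_mod_cast h2)
        · exact hv h2
      obtain ⟨y, hy, hJy⟩ := hex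
      exact sq_singular (by omega) (hf.mono hRU) (hinj.mono hRU) (hJd.mono hRU) hJx hy hJy
        (fun z hz => hZ z (hRU hz))

theorem sq_inverse {E : Type} [NormedAddCommGroup E] [NormedSpace ℂ E] [FiniteDimensional ℂ E]
    {f : E → E} {U : Set E} (hU : IsOpen U) (hf : DifferentiableOn ℂ f U) (hinj : InjOn f U)
    {V : Set E} (hV : V ⊆ f '' U) :
    ∃ g : E → E, DifferentiableOn ℂ g V ∧ ∀ x ∈ U, g (f x) = x := by
  rcases U.eq_empty_or_nonempty with rfl | hne
  · exact ⟨id, differentiableOn_id, by simp⟩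
  have : Nonempty E := ⟨hne.some⟩
  refine ⟨Function.invFunOn f U, fun y hy => ?_, fun x hx => hinj.leftInvOn_invFunOn hx⟩
  obtain ⟨x, hx, rfl⟩ := hV hy
  have hI := sq_osgood _ rfl rfl hU hf hinj x hx
  let L : E ≃L[ℂ] E := (LinearEquiv.ofInjectiveEndo ((fderiv ℂ f x : E →L[ℂ] E) : E →ₗ[ℂ] E) hI).toContinuousLinearEquiv
  have hL : HasFDerivAt f (L : E →L[ℂ] E) x := by
    have : (L : E →L[ℂ] E) = fderiv ℂ f x := by ext y; rfl
    rw [this]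
    exact (hf.differentiableAt (hU.mem_nhds hx)).hasFDerivAt
  obtain ⟨G, h1, h2, h3⟩ := sq_localinv hU hf hx L hL
  have hev : Function.invFunOn f U =ᶠ[𝓝 (f x)] G := by
    filter_upwards [h3] with y hy
    conv_lhs => rw [← hy.2.1]
    exact hinj.leftInvOn_invFunOn hy.2.2
  exact (h2.differentiableAt.congr_of_eventuallyEq hev).differentiableWithinAt

/-- real-valued sub-mean value property along affine discs -/
def SqSub {E : Type} [NormedAddCommGroup E] [NormedSpace ℂ E] (D : Set E) (ψ : E → ℝ) : Prop :=
  UpperSemicontinuousOn ψ D ∧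
  ∀ a ∈ D, ∀ b : E, ∀ r : ℝ, 0 < r →
    (∀ t : ℂ, ‖t‖ ≤ r → a + t • b ∈ D) →
    ∀ g : ℝ → ℝ, Continuous g →
      (∀ θ : ℝ, ψ (a + ((r : ℂ) * Complex.exp (θ * Complex.I)) • b) ≤ g θ) →
      ψ a ≤ (1 / (2 * Real.pi)) * ∫ θ in (0:ℝ)..(2 * Real.pi), g θ

theorem sq_maxprinciple {E : Type} [NormedAddCommGroup E] [InnerProductSpace ℂ E]
    [FiniteDimensional ℂ E] {D : Set E} (hD : IsOpen D) {ψ : E → ℝ} (hψ : SqSub D ψ)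
    (hψ0 : ∀ x ∈ D, ψ x ≤ 0) {K W : Set ℂ} (hK : IsCompact K) (hK1 : K ⊆ closedBall 0 1)
    (hW : IsOpen W) (hWK : W ⊆ K) {h : ℂ → E} (hcont : ContinuousOn h K)
    (hdiff : DifferentiableOn ℂ h W) (hmaps : MapsTo h K D)
    {q : ℂ → ℝ} (hqc : ContinuousOn q K) (hqh : InnerProductSpace.HarmonicOnNhd q W)
    {τ0 : ℝ} (hτ0 : 0 < τ0)
    (hbd : ∀ ζ ∈ K \ W, ∀ x ∈ D, ‖x - h ζ‖ ≤ τ0 → ψ x + q ζ ≤ 0) :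
    ∀ ζ ∈ W, ψ (h ζ) + q ζ ≤ 0 := by
  intro ζ1 hζ1
  by_contra hpos
  push Not at hpos
  set η := (ψ (h ζ1) + q ζ1) / 2 with hη
  have hη0 : 0 < η := by positivity
  obtain ⟨τ1, hτ1, hthick⟩ := (hK.image_of_continuousOn hcont).exists_cthickening_subset_open hD
    (image_subset_iff.2 hmaps)
  set τ := min τ0 τ1 with hτ
  have hτpos : 0 < τ := lt_min hτ0 hτ1
  have hin : ∀ ζ ∈ K, ∀ w : E, ‖w‖ ≤ τ → h ζ + w ∈ D := by
    intro ζ hζ w hw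
    refine hthick (mem_cthickening_of_dist_le _ (h ζ) _ _ (mem_image_of_mem h hζ) ?_)
    rw [dist_eq_norm, add_sub_cancel_left]
    exact hw.trans (min_le_right _ _)
  obtain ⟨Q, hQ⟩ : ∃ Q, ∀ ζ ∈ K, q ζ ≤ Q := by
    obtain ⟨Q, hQ⟩ := (hK.image_of_continuousOn hqc).bddAbove
    exact ⟨Q, fun ζ hζ => hQ (mem_image_of_mem q hζ)⟩
  set M := (|Q| + 1) / τ^2 with hM
  have hM0 : 0 < M := by positivity
  let F : ℂ × E → ℝ := fun z => ψ (h z.1 + z.2) + (q z.1 + η * (‖z.1‖^2 - 1) - M * ‖z.2‖^2)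
  have hS : IsCompact (K ×ˢ closedBall (0:E) τ) := by
    have : ProperSpace E := FiniteDimensional.proper ℂ E
    exact hK.prod (isCompact_closedBall _ _)
  have hfst : ContinuousOn (Prod.fst : ℂ × E → ℂ) (K ×ˢ closedBall (0:E) τ) := continuous_fst.continuousOn
  have hmfst : MapsTo (Prod.fst : ℂ × E → ℂ) (K ×ˢ closedBall (0:E) τ) K := fun z hz => hz.1
  have hFusc : UpperSemicontinuousOn F (K ×ˢ closedBall (0:E) τ) := by
    refine UpperSemicontinuousOn.add (hψ.1.comp (f := ψ) (g := fun z : ℂ × E => h z.1 + z.2) ?_ ?_)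
      (ContinuousOn.upperSemicontinuousOn ?_)
    · exact (hcont.comp hfst hmfst).add continuous_snd.continuousOn
    · intro z hz
      exact hin z.1 hz.1 z.2 (by simpa using hz.2)
    · refine ((hqc.comp hfst hmfst).add ?_).sub ?_ <;> fun_prop
  obtain ⟨⟨ζ0, w0⟩, ⟨hζ0K, hw0τ⟩, hmax⟩ := hFusc.exists_isMaxOn (s := K ×ˢ closedBall (0:E) τ)
    ⟨(ζ1, 0), hWK hζ1, mem_closedBall_self hτpos.le⟩ hS
  simp only at hζ0K hw0τ
  have hmax' : ∀ ζ ∈ K, ∀ w : E, ‖w‖ ≤ τ → F (ζ, w) ≤ F (ζ0, w0) := fun ζ hζ w hw =>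
    hmax (show (ζ, w) ∈ K ×ˢ closedBall (0:E) τ from ⟨hζ, by simpa using hw⟩)
  have hw0 : ‖w0‖ ≤ τ := by simpa using hw0τ
  have hF0 : 0 < F (ζ0, w0) := by
    refine lt_of_lt_of_le ?_ (hmax' ζ1 (hWK hζ1) 0 (by simpa using hτpos.le))
    simp only [F, add_zero, norm_zero]
    nlinarith [sq_nonneg ‖ζ1‖]
  have hx0D : h ζ0 + w0 ∈ D := hin ζ0 hζ0K w0 hw0
  have hζ1' : ‖ζ0‖ ≤ 1 := by simpa using hK1 hζ0K
  have hζsq : η * (‖ζ0‖^2 - 1) ≤ 0 := by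
    have : ‖ζ0‖^2 ≤ 1 := by nlinarith [norm_nonneg ζ0]
    nlinarith
  have hζ0W : ζ0 ∈ W := by
    by_contra hn
    have := hbd ζ0 ⟨hζ0K, hn⟩ _ hx0D (by simpa using hw0.trans (min_le_left _ _))
    simp only [F] at hF0
    nlinarith [mul_nonneg hM0.le (sq_nonneg ‖w0‖)]
  have hw0lt : ‖w0‖ < τ := by
    refine lt_of_le_of_ne hw0 fun he => ?_
    have h1 := hψ0 _ hx0D
    have h2 := hQ ζ0 hζ0K
    simp only [F, he] at hF0
    have h3 : M * τ^2 = |Q| + 1 := by rw [hM]; field_simp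
    have := le_abs_self Q
    linarith
  -- small radius
  have hda : DifferentiableAt ℂ h ζ0 := hdiff.differentiableAt (hW.mem_nhds hζ0W)
  set b := deriv h ζ0 with hb
  obtain ⟨ε, hε, hMε⟩ : ∃ ε > 0, M * ε^2 < η := by
    refine ⟨Real.sqrt (η / (2 * M)), by positivity, ?_⟩
    rw [Real.sq_sqrt (by positivity)]
    field_simp
    linarith
  have hlittle := (hasDerivAt_iff_isLittleO.1 hda.hasDerivAt).def hε
  have hsmall : ∀ᶠ ζ in 𝓝 ζ0, ε * ‖ζ - ζ0‖ < τ - ‖w0‖ := by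
    have : ContinuousAt (fun ζ => ε * ‖ζ - ζ0‖) ζ0 := by fun_prop
    refine this.eventually (gt_mem_nhds ?_)
    simp; linarith
  obtain ⟨r1, hr1, hr⟩ := Metric.eventually_nhds_iff_ball.1
    ((hlittle.and hsmall).and (hW.mem_nhds hζ0W))
  set r := r1 / 2 with hrdef
  have hr0 : 0 < r := by positivity
  have hrball : ∀ ζ ∈ closedBall ζ0 r, ζ ∈ ball ζ0 r1 := by
    intro ζ hζ
    exact closedBall_subset_ball (by linarith) hζ
  let e : ℂ → E := fun ζ => h ζ - h ζ0 - (ζ - ζ0) • b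
  have he : ∀ ζ ∈ closedBall ζ0 r, ‖e ζ‖ ≤ ε * r ∧ ‖w0 - e ζ‖ ≤ τ ∧ ζ ∈ W := by
    intro ζ hζ
    obtain ⟨⟨h1, h2⟩, h3⟩ := hr ζ (hrball ζ hζ)
    have h4 : ‖ζ - ζ0‖ ≤ r := by simpa [dist_eq_norm] using hζ
    refine ⟨h1.trans (by gcongr), ?_, h3⟩
    have := norm_sub_le w0 (e ζ)
    have h5 : ‖e ζ‖ ≤ ε * ‖ζ - ζ0‖ := h1
    linarith
  have hexp : ∀ ζ, h ζ0 + w0 + (ζ - ζ0) • b = h ζ + (w0 - e ζ) := by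
    intro ζ; simp only [e]; abel
  let H : ℂ → ℂ := fun ζ => 2 * η * (starRingEnd ℂ ζ0) * (ζ - ζ0) + 2 * M * innerSL ℂ w0 (e ζ)
  let C : ℝ := F (ζ0, w0) - η * (‖ζ0‖^2 - 1 + r^2) + M * ‖w0‖^2 + M * ε^2 * r^2
  let G : ℂ → ℝ := fun ζ => C - q ζ - (H ζ).re
  have hed : DifferentiableOn ℂ e W := by
    intro ζ hζ
    have := hdiff ζ hζ
    simp only [e]; fun_prop
  have hHd : DifferentiableOn ℂ H W := by
    have h2 : DifferentiableOn ℂ (fun ζ => innerSL ℂ w0 (e ζ)) W :=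
      (innerSL ℂ w0).differentiable.comp_differentiableOn hed
    intro ζ hζ
    have := h2 ζ hζ
    simp only [H]
    fun_prop
  have hGh : InnerProductSpace.HarmonicOnNhd G W := by
    intro ζ hζ
    have h1 : AnalyticAt ℂ (fun ζ => (C:ℂ) - H ζ) ζ :=
      analyticAt_const.sub (hHd.analyticAt (hW.mem_nhds hζ))
    have h2 := h1.harmonicAt_re.sub (hqh ζ hζ)
    convert h2 using 1
    funext y
    simp [G]; ring
  have hclW : closedBall ζ0 r ⊆ W := fun ζ hζ => (he ζ hζ).2.2
  have hGc : ContinuousOn G W := fun ζ hζ => ((hGh ζ hζ).1.continuousAt).continuousWithinAt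
  have havg : Real.circleAverage G ζ0 r = G ζ0 := by
    refine InnerProductSpace.HarmonicOnNhd.circleAverage_eq ?_
    rw [abs_of_pos hr0]
    exact fun ζ hζ => hGh ζ (hclW hζ)
  have hmaj : ∀ ζ ∈ sphere ζ0 r, ψ (h ζ0 + w0 + (ζ - ζ0) • b) ≤ G ζ := by
    intro ζ hζ
    obtain ⟨h1, h2, h3⟩ := he ζ (sphere_subset_closedBall hζ)
    have h4 := hmax' ζ (hWK h3) _ h2
    have h5 : F (ζ, w0 - e ζ) = ψ (h ζ0 + w0 + (ζ - ζ0) • b) +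
      (q ζ + η * (‖ζ‖^2 - 1) - M * ‖w0 - e ζ‖^2) := by
      rw [hexp]
    have hnr : ‖ζ - ζ0‖ = r := by simpa [dist_eq_norm] using hζ
    have h6 : ‖ζ‖^2 = ‖ζ0‖^2 + 2 * (starRingEnd ℂ ζ0 * (ζ - ζ0)).re + r^2 := by
      rw [← hnr, Complex.sq_norm, Complex.sq_norm, Complex.sq_norm]
      simp [Complex.normSq_apply]; ring
    have h7 : ‖w0 - e ζ‖^2 = ‖w0‖^2 - 2 * (inner ℂ w0 (e ζ)).re + ‖e ζ‖^2 := by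
      have := norm_sub_sq (𝕜 := ℂ) w0 (e ζ)
      simpa using this
    have h8 : ‖e ζ‖^2 ≤ ε^2 * r^2 := by
      rw [← mul_pow]; gcongr
    have h9 : (H ζ).re = 2 * η * (starRingEnd ℂ ζ0 * (ζ - ζ0)).re + 2 * M * (inner ℂ w0 (e ζ)).re := by
      simp only [H, innerSL_apply_apply]
      have e1 : (2 * η * (starRingEnd ℂ ζ0) * (ζ - ζ0) : ℂ) = ((2 * η : ℝ) : ℂ) * (starRingEnd ℂ ζ0 * (ζ - ζ0)) := by
        push_cast; ring
      have e2 : (2 * M * inner ℂ w0 (e ζ) : ℂ) = ((2 * M : ℝ):ℂ) * inner ℂ w0 (e ζ) := by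
        push_cast; ring
      rw [e1, e2, Complex.add_re, Complex.re_ofReal_mul, Complex.re_ofReal_mul]
    rw [h5, h7, h6] at h4
    have h10 := mul_le_mul_of_nonneg_left h8 hM0.le
    simp only [G, C, h9]
    linarith
  have hres := hψ.2 (h ζ0 + w0) hx0D b r hr0 (by
      intro t ht
      have h1 := he (ζ0 + t) (by simpa [dist_eq_norm] using ht)
      have h2 := hexp (ζ0 + t)
      rw [add_sub_cancel_left] at h2
      rw [h2]
      exact hin _ (hWK h1.2.2) _ h1.2.1)
    (fun θ => G (circleMap ζ0 r θ))
    (hGc.comp_continuous (continuous_circleMap ζ0 r) fun θ =>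
      hclW (circleMap_mem_closedBall ζ0 hr0.le θ))
    (by
      intro θ
      have := hmaj (circleMap ζ0 r θ) (circleMap_mem_sphere ζ0 hr0.le θ)
      simpa [circleMap] using this)
  have h11 : (1 / (2 * Real.pi)) * ∫ θ in (0:ℝ)..(2 * Real.pi), G (circleMap ζ0 r θ) = G ζ0 := by
    rw [← havg, Real.circleAverage, smul_eq_mul, one_div]
  rw [h11] at hres
  have hHζ0 : H ζ0 = 0 := by simp [H, e]
  simp only [G, C, F, hHζ0, Complex.zero_re] at hres
  nlinarith [mul_pos hr0 hr0]

theorem sq_sqrt_add (a : ℝ) {b : ℝ} (hb : 0 ≤ b) : √(a + b) ≤ √a + √b := by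
  rcases le_total 0 a with ha | ha
  · rw [Real.sqrt_le_left (by positivity)]
    nlinarith [Real.sq_sqrt ha, Real.sq_sqrt hb, mul_nonneg (Real.sqrt_nonneg a) (Real.sqrt_nonneg b)]
  · calc √(a + b) ≤ √b := Real.sqrt_le_sqrt (by linarith)
      _ ≤ _ := by linarith [Real.sqrt_nonneg a]

/-- signed square root -/
noncomputable def sqS (x : ℝ) : ℝ := √x - √(-x)

theorem sqS_diff (x : ℝ) {N : ℝ} (hN : 0 ≤ N) : sqS (x + N) - sqS x ≤ 2 * √N := by
  have h1 := sq_sqrt_add x hN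
  have h2 := sq_sqrt_add (-(x + N)) hN
  have e : -(x + N) + N = -x := by ring
  rw [e] at h2
  unfold sqS
  linarith

theorem sqS_step (x : ℝ) : 1 / √(max 1 |x|) ≤ 3 * (sqS (x + 1) - sqS x) := by
  unfold sqS
  rcases le_total 1 x with h | h
  · have hx : 0 ≤ x := by linarith
    rw [abs_of_nonneg hx, max_eq_right h, Real.sqrt_eq_zero_of_nonpos (by linarith : -x ≤ 0),
      Real.sqrt_eq_zero_of_nonpos (by linarith : -(x + 1) ≤ 0)]
    have h0 : 0 < √x := Real.sqrt_pos.2 (by linarith)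
    rw [div_le_iff₀ h0]
    have h1 := Real.sq_sqrt hx
    have h2 := Real.sq_sqrt (by linarith : 0 ≤ x + 1)
    set s := √x
    set t := √(x+1)
    have ht : 0 ≤ t := Real.sqrt_nonneg _
    have h3 : t ≤ 2 * s := by
      by_contra hc
      push Not at hc
      nlinarith
    have h4 : (t - s) * (t + s) = 1 := by nlinarith
    have h5 : 0 ≤ t - s := by
      by_contra hc
      push Not at hc
      nlinarith
    nlinarith
  rcases le_total 0 x with h0 | h0
  · rw [abs_of_nonneg h0, max_eq_left h, Real.sqrt_eq_zero_of_nonpos (by linarith : -x ≤ 0),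
      Real.sqrt_eq_zero_of_nonpos (by linarith : -(x + 1) ≤ 0), Real.sqrt_one]
    have h1 := Real.sq_sqrt h0
    have h2 := Real.sq_sqrt (by linarith : 0 ≤ x + 1)
    have hs1 : √x ≤ 1 := by rw [Real.sqrt_le_one]; exact h
    set s := √x
    set t := √(x+1)
    have ht : 0 ≤ t := Real.sqrt_nonneg _
    have hs : 0 ≤ s := Real.sqrt_nonneg _
    by_contra hc
    push Not at hc
    nlinarith
  rcases le_total (-1) x with h1 | h1
  · rw [abs_of_nonpos h0, max_eq_left (by linarith), Real.sqrt_eq_zero_of_nonpos h0,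
      Real.sqrt_eq_zero_of_nonpos (by linarith : -(x + 1) ≤ 0), Real.sqrt_one]
    have h3 := sq_sqrt_add (x+1) (by linarith : 0 ≤ -x)
    have e : x + 1 + -x = 1 := by ring
    rw [e, Real.sqrt_one] at h3
    linarith
  · have hx : 0 ≤ -x := by linarith
    rw [abs_of_nonpos h0, max_eq_right (by linarith), Real.sqrt_eq_zero_of_nonpos h0,
      Real.sqrt_eq_zero_of_nonpos (by linarith : x + 1 ≤ 0)]
    have hp : 0 < √(-x) := Real.sqrt_pos.2 (by linarith)
    rw [div_le_iff₀ hp]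
    have h1 := Real.sq_sqrt hx
    have h2 := Real.sq_sqrt (by linarith : 0 ≤ -(x + 1))
    set s := √(-x)
    set t := √(-(x+1))
    have ht : 0 ≤ t := Real.sqrt_nonneg _
    have h4 : (s - t) * (s + t) = 1 := by nlinarith
    have h5 : t ≤ s := by
      by_contra hc
      push Not at hc
      nlinarith
    nlinarith

theorem sqS_sum (x : ℝ) (N : ℕ) :
    ∑ k ∈ Finset.range N, 1 / √(max 1 |x + k|) ≤ 6 * √N := by
  have h1 : ∑ k ∈ Finset.range N, 1 / √(max 1 |x + k|) ≤
      ∑ k ∈ Finset.range N, 3 * (sqS (x + (k+1 : ℕ)) - sqS (x + k)) := by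
    refine Finset.sum_le_sum fun k _ => ?_
    have := sqS_step (x + k)
    push_cast
    rwa [← add_assoc]
  rw [← Finset.mul_sum, Finset.sum_range_sub (fun k : ℕ => sqS (x + k))] at h1
  have h2 := sqS_diff x (N := N) (by positivity)
  simp only [Nat.cast_zero, add_zero] at h1
  linarith

theorem sq_log_one_add {x : ℝ} (hx : 0 ≤ x) : Real.log (1 + x) ≤ 2 * √x := by
  have h1 : Real.log (1 + x) = 2 * Real.log √(1 + x) := by
    rw [Real.log_sqrt (by linarith)]; ring
  rw [h1]
  have h2 := Real.log_le_sub_one_of_pos (Real.sqrt_pos.2 (by linarith : 0 < 1 + x))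
  have h3 := sq_sqrt_add x (zero_le_one)
  rw [Real.sqrt_one, add_comm x 1] at h3
  linarith

theorem sq_green_ne {s ζ : ℂ} (hs1 : ‖s‖ < 1) (hζ : ‖ζ‖ ≤ 1) :
    1 - (starRingEnd ℂ s) * ζ ≠ 0 := by
  intro h0
  have h3 : ‖(starRingEnd ℂ s) * ζ‖ = 1 := by
    rw [← sub_eq_zero.1 h0, norm_one]
  rw [norm_mul, RCLike.norm_conj] at h3
  nlinarith [norm_nonneg s, norm_nonneg ζ]

/-- one Green-type term -/
theorem sq_green_term {s ζ : ℂ} {δ σ : ℝ} {x : ℝ} {N : ℕ} (hN : 0 < N) (hδ : 0 < δ)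
    (hσ : σ = δ / (2 * N)) (hs : 1 - δ ≤ ‖s‖) (hs1 : ‖s‖ < 1) (hζ : ‖ζ‖ ≤ 1)
    (hdist : σ ≤ ‖ζ - s‖) (hx : σ * |x| = |‖ζ‖ - ‖s‖|) :
    Real.log ‖1 - (starRingEnd ℂ s) * ζ‖ - Real.log ‖ζ - s‖ ≤ 4 * √N * (1 / √(max 1 |x|)) := by
  have hN' : (0:ℝ) < N := by exact_mod_cast hN
  have hσ0 : 0 < σ := by rw [hσ]; positivity
  have hd0 : 0 < ‖ζ - s‖ := hσ0.trans_le hdist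
  have hm : 0 < max 1 |x| := lt_max_of_lt_left one_pos
  have hxm : σ * max 1 |x| ≤ ‖ζ - s‖ := by
    rcases max_choice 1 |x| with h | h <;> rw [h]
    · simpa using hdist
    · rw [hx]; exact abs_norm_sub_norm_le ζ s
  have h1 : ‖1 - (starRingEnd ℂ s) * ζ‖ ≤ 2 * δ + ‖ζ - s‖ := by
    have e : 1 - (starRingEnd ℂ s) * ζ = ((1 - ‖s‖^2 : ℝ) : ℂ) - (starRingEnd ℂ s) * (ζ - s) := by
      have := Complex.conj_mul' s
      push_cast
      rw [mul_sub, this]; ring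
    rw [e]
    refine (norm_sub_le _ _).trans ?_
    rw [norm_mul, RCLike.norm_conj, Complex.norm_real, Real.norm_eq_abs, 
      abs_of_nonneg (by nlinarith [norm_nonneg s])]
    have := mul_le_mul_of_nonneg_right hs1.le hd0.le
    nlinarith [norm_nonneg s]
  have hpos : 0 < 2 * δ + ‖ζ - s‖ := by positivity
  have h2 : Real.log ‖1 - (starRingEnd ℂ s) * ζ‖ ≤ Real.log (2 * δ + ‖ζ - s‖) := by
    exact Real.log_le_log (norm_pos_iff.2 (sq_green_ne hs1 hζ)) h1
  have h3 : Real.log (2 * δ + ‖ζ - s‖) - Real.log ‖ζ - s‖ = Real.log (1 + 2 * δ / ‖ζ - s‖) := by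
    rw [← Real.log_div hpos.ne' hd0.ne']
    congr 1
    field_simp
    ring
  have h4 := sq_log_one_add (x := 2 * δ / ‖ζ - s‖) (by positivity)
  have h5 : 2 * δ / ‖ζ - s‖ ≤ 4 * N / max 1 |x| := by
    rw [div_le_div_iff₀ hd0 hm]
    have e : δ = 2 * N * σ := by rw [hσ]; field_simp
    calc 2 * δ * max 1 |x| = 4 * N * (σ * max 1 |x|) := by rw [e]; ring
      _ ≤ _ := by gcongr
  have h6 : √(2 * δ / ‖ζ - s‖) ≤ 2 * √N * (1 / √(max 1 |x|)) := by
    refine (Real.sqrt_le_sqrt h5).trans (le_of_eq ?_)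
    rw [Real.sqrt_div (by positivity), Real.sqrt_mul (by norm_num), 
      show (4:ℝ) = 2^2 by norm_num, Real.sqrt_sq (by norm_num)]
    ring
  linarith


theorem sq_disc_closed {E : Type} [NormedAddCommGroup E] [InnerProductSpace ℂ E]
    [FiniteDimensional ℂ E] {D : Set E} (hD : IsOpen D) {ψ : E → ℝ} (hψ : SqSub D ψ)
    (hψ0 : ∀ x ∈ D, ψ x ≤ 0) {p : E} {R c : ℝ} (hR : 0 < R) (hc : 0 < c)
    (hpc : ∀ x ∈ D, R / 2 ≤ ‖x - p‖ → ψ x ≤ -c)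
    {h : ℂ → E} (hcont : ContinuousOn h (closedBall 0 1)) (hdiff : DifferentiableOn ℂ h (ball 0 1))
    (hmaps : MapsTo h (closedBall 0 1) D) {a : ℂ} (ha : ‖a‖ < 1) (hha : R ≤ ‖h a - p‖) :
    ψ (h 0) ≤ -(c / 48) * (1 - max ‖a‖ (1/2)) := by
  set a0 := max ‖a‖ (1/2) with ha0
  have ha0h : 1/2 ≤ a0 := le_max_right _ _
  have ha01 : a0 < 1 := max_lt ha (by norm_num)
  have haa : ‖a‖ ≤ a0 := le_max_left _ _
  set δ := 1 - a0 with hδ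
  have hδ0 : 0 < δ := by linarith
  -- points on circles
  have hpt : ∀ t : ℝ, a0 ≤ t → t < 1 → ∃ s : ℂ, ‖s‖ = t ∧ R ≤ ‖h s - p‖ := by
    intro t ht ht1
    have ht0 : 0 < t := by linarith
    have hsub : closedBall (0:ℂ) t ⊆ closedBall 0 1 := closedBall_subset_closedBall ht1.le
    have hcn : ContinuousOn (fun s => ‖h s - p‖) (sphere (0:ℂ) t) :=
      ((hcont.mono (sphere_subset_closedBall.trans hsub)).sub continuousOn_const).norm
    obtain ⟨s, hs, hmax⟩ := (isCompact_sphere (0:ℂ) t).exists_isMaxOn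
      (NormedSpace.sphere_nonempty.2 ht0.le) hcn
    refine ⟨s, by simpa using hs, hha.trans ?_⟩
    refine Complex.norm_le_of_forall_mem_frontier_norm_le (U := ball (0:ℂ) t) 
      (f := fun s => h s - p) isBounded_ball ?_ ?_ ?_
    · refine DifferentiableOn.diffContOnCl ?_
      rw [closure_ball _ ht0.ne']
      exact (hdiff.mono (closedBall_subset_ball ht1)).sub_const _
    · intro z hz
      rw [frontier_ball _ ht0.ne'] at hz
      exact hmax hz
    · rw [closure_ball _ ht0.ne']
      simpa using haa.trans ht
  -- uniform continuity
  obtain ⟨ω, hω, huc⟩ := Metric.uniformContinuousOn_iff.1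
    ((isCompact_closedBall (0:ℂ) 1).uniformContinuousOn_of_continuous hcont) (R/4) (by positivity)
  obtain ⟨N, hN⟩ := exists_nat_gt (max 1 (δ / ω))
  have hN1 : (1:ℝ) < N := (le_max_left _ _).trans_lt hN
  have hN0 : (0:ℝ) < N := by linarith
  have hNpos : 0 < N := by exact_mod_cast hN0
  set σ := δ / (2 * N) with hσ
  have hσ0 : 0 < σ := by positivity
  have hσω : σ < ω := by
    have h1 : δ / ω < N := (le_max_right _ _).trans_lt hN
    rw [div_lt_iff₀ hω] at h1
    rw [hσ, div_lt_iff₀ (by positivity)]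
    nlinarith
  have hNσ : N * σ = δ / 2 := by rw [hσ]; field_simp
  have hkσ : ∀ k ∈ Finset.range N, (k:ℝ) * σ + σ ≤ δ / 2 := by
    intro k hk
    have h1 : (k:ℝ) + 1 ≤ N := by exact_mod_cast Finset.mem_range.1 hk
    nlinarith
  have hex : ∀ k : ℕ, ∃ s : ℂ, k ∈ Finset.range N → ‖s‖ = a0 + k * σ ∧ R ≤ ‖h s - p‖ := by
    intro k
    by_cases hk : k ∈ Finset.range N
    · obtain ⟨s, hs⟩ := hpt (a0 + k * σ) (by have : 0 ≤ (k:ℝ) * σ := by positivity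
                                             linarith) (by have := hkσ k hk; linarith)
      exact ⟨s, fun _ => hs⟩
    · exact ⟨0, fun h => absurd h hk⟩
  choose s hs using hex
  have hslt : ∀ k ∈ Finset.range N, ‖s k‖ + σ ≤ 1 - δ / 2 := by
    intro k hk
    rw [(hs k hk).1]
    have := hkσ k hk
    linarith
  have hsge : ∀ k ∈ Finset.range N, a0 ≤ ‖s k‖ := by
    intro k hk
    rw [(hs k hk).1]
    have : 0 ≤ (k:ℝ) * σ := by positivity
    linarith
  have hs1 : ∀ k ∈ Finset.range N, ‖s k‖ < 1 := fun k hk => by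
    have := hslt k hk; linarith
  let K : Set ℂ := closedBall 0 1 ∩ ⋂ k ∈ Finset.range N, (ball (s k) σ)ᶜ
  let W : Set ℂ := ball 0 1 ∩ ⋂ k ∈ Finset.range N, (closedBall (s k) σ)ᶜ
  have hKmem : ∀ ζ, ζ ∈ K ↔ ‖ζ‖ ≤ 1 ∧ ∀ k ∈ Finset.range N, σ ≤ ‖ζ - s k‖ := by
    intro ζ; simp [K, dist_eq_norm]
  have hWmem : ∀ ζ, ζ ∈ W ↔ ‖ζ‖ < 1 ∧ ∀ k ∈ Finset.range N, σ < ‖ζ - s k‖ := by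
    intro ζ; simp [W, dist_eq_norm]
  have hKc : IsCompact K := (isCompact_closedBall (0:ℂ) 1).inter_right
    (isClosed_biInter fun k _ => isOpen_ball.isClosed_compl)
  have hWo : IsOpen W := isOpen_ball.inter
    (isOpen_biInter_finset fun k _ => isClosed_closedBall.isOpen_compl)
  have hWK : W ⊆ K := by
    intro ζ hζ
    rw [hWmem] at hζ
    rw [hKmem]
    exact ⟨hζ.1.le, fun k hk => (hζ.2 k hk).le⟩
  let q : ℂ → ℝ := fun ζ => c / (24 * N) * ∑ k ∈ Finset.range N,
    (Real.log ‖1 - (starRingEnd ℂ (s k)) * ζ‖ - Real.log ‖ζ - s k‖)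
  have hne : ∀ ζ ∈ K, ∀ k ∈ Finset.range N, ζ - s k ≠ 0 := by
    intro ζ hζ k hk
    exact norm_pos_iff.1 (hσ0.trans_le (((hKmem ζ).1 hζ).2 k hk))
  have hne' : ∀ ζ ∈ K, ∀ k ∈ Finset.range N, 1 - (starRingEnd ℂ (s k)) * ζ ≠ 0 := by
    intro ζ hζ k hk
    exact sq_green_ne (hs1 k hk) ((hKmem ζ).1 hζ).1
  have hqh' : ∀ ζ ∈ K, InnerProductSpace.HarmonicAt q ζ := by
    intro ζ hζ
    have h1 : InnerProductSpace.HarmonicAt (fun ζ => ∑ k ∈ Finset.range N,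
        (Real.log ‖1 - (starRingEnd ℂ (s k)) * ζ‖ - Real.log ‖ζ - s k‖)) ζ := by
      have : ∀ T : Finset ℕ, T ⊆ Finset.range N → InnerProductSpace.HarmonicAt (fun ζ => ∑ k ∈ T,
        (Real.log ‖1 - (starRingEnd ℂ (s k)) * ζ‖ - Real.log ‖ζ - s k‖)) ζ := by
        intro T
        induction T using Finset.induction_on with
        | empty => 
          intro _
          simp only [Finset.sum_empty]
          exact InnerProductSpace.harmonicAt_const 0
        | insert k T hk ih =>
          intro hT
          simp only [Finset.sum_insert hk]
          have hkN : k ∈ Finset.range N := hT (Finset.mem_insert_self _ _)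
          have e1 : AnalyticAt ℂ (fun ζ => 1 - (starRingEnd ℂ (s k)) * ζ) ζ := by fun_prop
          have e2 : AnalyticAt ℂ (fun ζ => ζ - s k) ζ := by fun_prop
          exact ((e1.harmonicAt_log_norm (hne' ζ hζ k hkN)).sub 
            (e2.harmonicAt_log_norm (hne ζ hζ k hkN))).add 
              (ih ((Finset.subset_insert _ _).trans hT))
      exact this _ subset_rfl
    exact h1.const_smul (c := c / (24 * N))
  have hqle : ∀ ζ ∈ K, q ζ ≤ c := by
    intro ζ hζ
    have hζ' := (hKmem ζ).1 hζ
    have h1 : ∑ k ∈ Finset.range N,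
      (Real.log ‖1 - (starRingEnd ℂ (s k)) * ζ‖ - Real.log ‖ζ - s k‖) ≤ 
        ∑ k ∈ Finset.range N, 4 * √N * (1 / √(max 1 |(a0 - ‖ζ‖) / σ + k|)) := by
      refine Finset.sum_le_sum fun k hk => ?_
      refine sq_green_term hNpos hδ0 hσ (by have := hsge k hk; linarith) (hs1 k hk) hζ'.1 (hζ'.2 k hk) ?_
      rw [← abs_of_pos hσ0, ← abs_mul, abs_of_pos hσ0, abs_sub_comm ‖ζ‖, (hs k hk).1]
      congr 1
      field_simp
      ring
    rw [← Finset.mul_sum] at h1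
    have h2 := sqS_sum ((a0 - ‖ζ‖) / σ) N
    have h3 : 4 * √N * ∑ k ∈ Finset.range N, (1 / √(max 1 |(a0 - ‖ζ‖) / σ + k|)) ≤ 24 * N := by
      calc _ ≤ 4 * √N * (6 * √N) := by gcongr
        _ = 24 * (√N * √N) := by ring
        _ = 24 * N := by rw [Real.mul_self_sqrt hN0.le]
    calc q ζ ≤ c / (24 * N) * (24 * N) := by
          simp only [q]; gcongr; exact h1.trans h3
      _ = c := by field_simp
  have h0W : (0:ℂ) ∈ W := by
    rw [hWmem]
    refine ⟨by simp, fun k hk => ?_⟩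
    have h1 := hsge k hk
    have h2 := hkσ 0 (Finset.mem_range.2 hNpos)
    rw [zero_sub, norm_neg]
    push_cast at h2
    linarith
  have key := sq_maxprinciple hD hψ hψ0 hKc inter_subset_left hWo hWK (hcont.mono inter_subset_left)
    (hdiff.mono inter_subset_left) (hmaps.mono_left inter_subset_left)
    (q := q) (fun ζ hζ => (hqh' ζ hζ).1.continuousAt.continuousWithinAt) (fun ζ hζ => hqh' ζ (hWK hζ))
    (τ0 := R/4) (by positivity) (by
      rintro ζ ⟨hζK, hζW⟩ x hx hxh
      have hζ' := (hKmem ζ).1 hζK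
      by_cases h1 : ‖ζ‖ = 1
      · have hq0 : q ζ = 0 := by
          simp only [q]
          rw [Finset.sum_eq_zero, mul_zero]
          intro k hk
          have e : 1 - (starRingEnd ℂ (s k)) * ζ = starRingEnd ℂ (ζ - s k) * ζ := by
            have := Complex.conj_mul' ζ
            rw [h1] at this
            rw [map_sub, sub_mul, this]; simp
          rw [e, norm_mul, RCLike.norm_conj, h1, mul_one, sub_self]
        rw [hq0, add_zero]
        exact hψ0 x hx
      · have hex : ∃ k ∈ Finset.range N, ‖ζ - s k‖ ≤ σ := by
          by_contra hcon
          push Not at hcon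
          exact hζW ((hWmem ζ).2 ⟨lt_of_le_of_ne hζ'.1 h1, hcon⟩)
        obtain ⟨k, hk, hkσ'⟩ := hex
        have h2 := huc ζ (by simpa using hζ'.1) (s k) (by simpa using (hs1 k hk).le) 
          (by rw [dist_eq_norm]; linarith)
        rw [dist_eq_norm] at h2
        have h3 := (hs k hk).2
        have h4 : ‖h (s k) - p‖ ≤ ‖x - p‖ + ‖x - h ζ‖ + ‖h ζ - h (s k)‖ := by
          have e : h (s k) - p = (x - p) - (x - h ζ) - (h ζ - h (s k)) := by abel
          rw [e]
          exact (norm_sub_le _ _).trans (add_le_add_left (norm_sub_le _ _) _)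
        have h5 := hpc x hx (by linarith)
        have h6 := hqle ζ hζK
        linarith) 0 h0W
  have hq0 : c / 48 * δ ≤ q 0 := by
    have h1 : ∑ k ∈ Finset.range N, δ / 2 ≤ ∑ k ∈ Finset.range N,
      (Real.log ‖1 - (starRingEnd ℂ (s k)) * 0‖ - Real.log ‖0 - s k‖) := by
      refine Finset.sum_le_sum fun k hk => ?_
      have h2 := hsge k hk
      have h3 := hslt k hk
      have h4 := Real.log_le_sub_one_of_pos (by linarith : 0 < ‖s k‖)
      simp
      linarith
    rw [Finset.sum_const, Finset.card_range, nsmul_eq_mul] at h1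
    calc c / 48 * δ = c / (24 * N) * (N * (δ / 2)) := by field_simp; ring
      _ ≤ _ := by simp only [q]; gcongr
  linarith

theorem sq_disc {E : Type} [NormedAddCommGroup E] [InnerProductSpace ℂ E]
    [FiniteDimensional ℂ E] {D : Set E} (hD : IsOpen D) {ψ : E → ℝ} (hψ : SqSub D ψ)
    (hψ0 : ∀ x ∈ D, ψ x ≤ 0) {p : E} {R c : ℝ} (hR : 0 < R) (hc : 0 < c)
    (hpc : ∀ x ∈ D, R / 2 ≤ ‖x - p‖ → ψ x ≤ -c)
    {h : ℂ → E} (hdiff : DifferentiableOn ℂ h (ball 0 1))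
    (hmaps : MapsTo h (ball 0 1) D) {a : ℂ} (ha : ‖a‖ < 1) (hha : R ≤ ‖h a - p‖) :
    ψ (h 0) ≤ -(c / 48) * (1 - max ‖a‖ (1/2)) := by
  have hlim : Tendsto (fun ρ : ℝ => -(c / 48) * (1 - max (‖a‖ / ρ) (1/2))) (𝓝[<] 1) 
      (𝓝 (-(c / 48) * (1 - max (‖a‖ / 1) (1/2)))) := by
    have : ContinuousAt (fun ρ : ℝ => -(c / 48) * (1 - max (‖a‖ / ρ) (1/2))) 1 := by
      have h1 : ContinuousAt (fun ρ : ℝ => ‖a‖ / ρ) 1 := continuousAt_const.div continuousAt_id one_ne_zero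
      fun_prop
    exact this.tendsto.mono_left nhdsWithin_le_nhds
  rw [div_one] at hlim
  refine ge_of_tendsto hlim ?_
  filter_upwards [Ioo_mem_nhdsLT ha] with ρ hρ
  have hρ0 : 0 < ρ := (norm_nonneg a).trans_lt hρ.1
  have hm : MapsTo (fun ζ : ℂ => (ρ:ℂ) * ζ) (closedBall 0 1) (ball 0 1) := by
    intro ζ hζ
    have h1 : ‖ζ‖ ≤ 1 := by simpa using hζ
    rw [mem_ball_zero_iff, norm_mul, Complex.norm_real, Real.norm_eq_abs, abs_of_pos hρ0]
    have := hρ.2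
    nlinarith
  have hd : DifferentiableOn ℂ (fun ζ : ℂ => h ((ρ:ℂ) * ζ)) (closedBall 0 1) := 
    hdiff.comp (by fun_prop) hm
  have hρc : (ρ:ℂ) ≠ 0 := by exact_mod_cast hρ0.ne'
  have hna : ‖a / (ρ:ℂ)‖ = ‖a‖ / ρ := by
    rw [norm_div, Complex.norm_real, Real.norm_eq_abs, abs_of_pos hρ0]
  have := sq_disc_closed hD hψ hψ0 hR hc hpc (h := fun ζ : ℂ => h ((ρ:ℂ) * ζ)) hd.continuousOn
    (hd.mono ball_subset_closedBall) (hmaps.comp hm) (a := a / (ρ:ℂ))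
    (by rw [hna, div_lt_one hρ0]; exact hρ.1) (by rwa [mul_div_cancel₀ _ hρc])
  rw [hna] at this
  simpa using this

theorem sq_trunc {n : ℕ} {D : Set (Cn n)} {φ : Cn n → EReal} (hφ : PSHOn φ D)
    (hneg : ∀ x ∈ D, φ x < 0) {T : ℝ} (hT : 0 < T) :
    ∃ ψ : Cn n → ℝ, SqSub D ψ ∧ ∀ x ∈ D, ∀ y : ℝ,
      (ψ x ≤ y ↔ φ x ≤ (y : EReal) ∧ -T ≤ y) := by
  have hchar : ∀ x ∈ D, (((max (φ x) ((-T : ℝ) : EReal)).toReal : ℝ) : EReal) =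
      max (φ x) ((-T : ℝ) : EReal) := by
    intro x hx
    refine EReal.coe_toReal ?_ ?_
    · refine (max_lt ((hneg x hx).trans (EReal.coe_lt_top 0)) (EReal.coe_lt_top _)).ne
    · exact ((EReal.bot_lt_coe _).trans_le (le_max_right _ _)).ne'
  have hiff : ∀ x ∈ D, ∀ y : ℝ, ((max (φ x) ((-T : ℝ) : EReal)).toReal ≤ y ↔
      φ x ≤ (y : EReal) ∧ -T ≤ y) := by
    intro x hx y
    rw [← EReal.coe_le_coe_iff, hchar x hx, max_le_iff, EReal.coe_le_coe_iff]
  refine ⟨fun x => (max (φ x) ((-T : ℝ) : EReal)).toReal, ⟨?_, ?_⟩, hiff⟩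
  · intro x hx y hy
    have hy' : max (φ x) ((-T : ℝ) : EReal) < (y : EReal) := by
      rw [← hchar x hx]; exact EReal.coe_lt_coe_iff.2 hy
    have h1 := hφ.1 x hx (y : EReal) ((le_max_left _ _).trans_lt hy')
    filter_upwards [h1, self_mem_nhdsWithin] with x' hx' hx'D
    rw [← EReal.coe_lt_coe_iff, hchar x' hx'D]
    exact max_lt hx' ((le_max_right _ _).trans_lt hy')
  · intro a ha b r hr hin g hg hle
    have hmem : ∀ θ : ℝ, a + ((r : ℂ) * Complex.exp (θ * Complex.I)) • b ∈ D := by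
      intro θ
      refine hin _ ?_
      rw [norm_mul, Complex.norm_exp_ofReal_mul_I, mul_one, Complex.norm_real, Real.norm_eq_abs,
        abs_of_pos hr]
    rw [hiff a ha]
    refine ⟨hφ.2 a ha b r hr hin g hg fun θ => ((hiff _ (hmem θ) _).1 (hle θ)).1, ?_⟩
    have h1 : ∫ θ in (0:ℝ)..(2 * Real.pi), (-T) ≤ ∫ θ in (0:ℝ)..(2 * Real.pi), g θ :=
      intervalIntegral.integral_mono_on (by positivity) (by simp) (hg.intervalIntegrable _ _)
        (fun θ _ => ((hiff _ (hmem θ) _).1 (hle θ)).2)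
    rw [intervalIntegral.integral_const, smul_eq_mul, sub_zero] at h1
    have hpi := Real.pi_pos
    rw [one_div, ← div_eq_inv_mul, le_div_iff₀ (by positivity)]
    linarith

theorem sq_bdd {n : ℕ} [Nontrivial (Cn n)] (D : Set (Cn n)) (z : Cn n) :
    BddAbove {r : ℝ | 0 < r ∧ ∃ f : Cn n → Cn n, DifferentiableOn ℂ f D ∧ InjOn f D ∧
    MapsTo f D (ball (0 : Cn n) 1) ∧ f z = 0 ∧ ball (0 : Cn n) r ⊆ f '' D} := by
  refine ⟨1, ?_⟩
  rintro r ⟨hr, f, -, -, hm, -, hb⟩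
  by_contra hc
  push Not at hc
  obtain ⟨v, hv⟩ := exists_norm_eq (Cn n) (zero_le_one (α := ℝ))
  obtain ⟨x, hx, hfx⟩ := hb (show v ∈ ball (0 : Cn n) r by simpa [hv] using hc)
  have := hm hx
  rw [hfx] at this
  simp [hv] at this

/-- Quantitative localization of the squeezing function near a psh peak
boundary point. -/
theorem squeezing_localization_peak {n : ℕ} (D : Set (Cn n)) (hD : IsOpen D)
    (hDconn : IsConnected D) (p : Cn n) (hp : p ∈ frontier D)
    (φ : Cn n → EReal) (hφ : IsPshPeakFn D p φ)
    (U : Set (Cn n)) (hU : IsOpen U) (hUb : Bornology.IsBounded U) (hpU : p ∈ U) :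
    ∃ V : Set (Cn n), IsOpen V ∧ p ∈ V ∧ V ⊆ U ∧ ∃ m : ℝ, 0 < m ∧
      ∀ z ∈ D ∩ V,
        squeezing (D ∩ U) z ≥ erexp ((m : EReal) * φ z) * squeezing D z := by
  have hpD : p ∉ D := by
    rw [hD.frontier_eq] at hp
    exact hp.2
  obtain ⟨x0, hx0⟩ := hDconn.nonempty
  have hnt : Nontrivial (Cn n) := ⟨x0, p, fun h => hpD (h ▸ hx0)⟩
  have hneg : ∀ x ∈ D, φ x < 0 := by
    intro x hx
    have hxp : p ≠ x := fun h => hpD (h ▸ hx)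
    obtain ⟨c, hc, h⟩ := hφ.2.2 {x}ᶜ (isOpen_compl_singleton.mem_nhds hxp)
    refine (h x ⟨hx, by simp⟩).trans_lt ?_
    exact_mod_cast hc
  obtain ⟨R, hR, hRU⟩ := Metric.isOpen_iff.1 hU p hpU
  obtain ⟨c0, hc0, hpk⟩ := hφ.2.2 (ball p (R/2)) (ball_mem_nhds p (by positivity))
  set c := -c0 with hcdef
  have hc : 0 < c := by linarith
  obtain ⟨ψ, hψ, hψiff⟩ := sq_trunc hφ.1 hneg hc
  have hψ0 : ∀ x ∈ D, ψ x ≤ 0 := fun x hx =>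
    (hψiff x hx 0).2 ⟨by simpa using (hneg x hx).le, by linarith⟩
  have hψc : ∀ x ∈ D, R / 2 ≤ ‖x - p‖ → ψ x ≤ -c := by
    intro x hx hxp
    refine (hψiff x hx (-c)).2 ⟨?_, le_rfl⟩
    have := hpk x ⟨hx, by simpa [dist_eq_norm] using hxp⟩
    simpa [hcdef] using this
  have hev : ∀ᶠ z in 𝓝[D] p, ((-(c/96) : ℝ) : EReal) < φ z := by
    refine hφ.2.1.eventually (lt_mem_nhds ?_)
    have : -(c/96) < 0 := by linarith
    exact_mod_cast this
  obtain ⟨ρ, hρ, hρφ⟩ := Metric.mem_nhdsWithin_iff.1 hev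
  refine ⟨ball p (min ρ R), isOpen_ball, mem_ball_self (lt_min hρ hR),
    (ball_subset_ball (min_le_right _ _)).trans hRU, 96 / c, by positivity, ?_⟩
  rintro z ⟨hzD, hzV⟩
  have hzU : z ∈ U := hRU (ball_subset_ball (min_le_right _ _) hzV)
  have hφz : ((-(c/96) : ℝ) : EReal) < φ z :=
    hρφ ⟨ball_subset_ball (min_le_left _ _) hzV, hzD⟩
  obtain ⟨y, hy⟩ : ∃ y : ℝ, φ z = (y : EReal) := by
    refine ⟨(φ z).toReal, (EReal.coe_toReal ?_ ?_).symm⟩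
    · exact ((hneg z hzD).trans (EReal.coe_lt_top 0)).ne
    · exact ((EReal.bot_lt_coe _).trans hφz).ne'
  have hyneg : y < 0 := by
    have := hneg z hzD
    rw [hy] at this
    exact_mod_cast this
  have hygt : -(c/96) < y := by
    rw [hy] at hφz
    exact_mod_cast hφz
  have hψz : ∀ t : ℝ, ψ z ≤ t → y ≤ t := by
    intro t ht
    have := ((hψiff z hzD t).1 ht).1
    rw [hy] at this
    exact_mod_cast this
  have hexp : erexp (((96 / c : ℝ) : EReal) * φ z) = Real.exp (96 / c * y) := by
    rw [hy, ← EReal.coe_mul, erexp, if_neg (EReal.coe_ne_bot _), if_neg (EReal.coe_ne_top _),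
      EReal.toReal_coe]
  rw [hexp]
  set e := Real.exp (96 / c * y) with he
  have he0 : 0 < e := Real.exp_pos _
  have he1 : e < 1 := by
    rw [he, Real.exp_lt_one_iff]
    exact mul_neg_of_pos_of_neg (by positivity) hyneg
  have hmain : ∀ r ∈ {r : ℝ | 0 < r ∧ ∃ f : Cn n → Cn n, DifferentiableOn ℂ f D ∧ InjOn f D ∧
    MapsTo f D (ball (0 : Cn n) 1) ∧ f z = 0 ∧ ball (0 : Cn n) r ⊆ f '' D},
      e * r ∈ {r : ℝ | 0 < r ∧ ∃ f : Cn n → Cn n, DifferentiableOn ℂ f (D ∩ U) ∧ InjOn f (D ∩ U) ∧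
    MapsTo f (D ∩ U) (ball (0 : Cn n) 1) ∧ f z = 0 ∧ ball (0 : Cn n) r ⊆ f '' (D ∩ U)} := by
    rintro r ⟨hr, f, hfd, hfi, hfm, hfz, hfb⟩
    refine ⟨by positivity, f, hfd.mono inter_subset_left, hfi.mono inter_subset_left,
      hfm.mono_left inter_subset_left, hfz, ?_⟩
    intro w hw
    have hwe : ‖w‖ < e * r := by simpa using hw
    have hwr : ‖w‖ < r := by nlinarith
    obtain ⟨x, hxD, hfx⟩ := hfb (show w ∈ ball (0 : Cn n) r by simpa using hwr)
    refine ⟨x, ⟨hxD, ?_⟩, hfx⟩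
    by_contra hxU
    obtain ⟨g, hgd, hgf⟩ := sq_inverse hD hfd hfi hfb
    have hg0 : g 0 = z := by rw [← hfz]; exact hgf z hzD
    have hgw : g w = x := by rw [← hfx]; exact hgf x hxD
    have hw0 : w ≠ 0 := by
      rintro rfl
      rw [hg0] at hgw
      exact hxU (hgw ▸ hzU)
    have hwp : 0 < ‖w‖ := norm_pos_iff.2 hw0
    have hgD : MapsTo g (ball (0 : Cn n) r) D := by
      intro v hv
      obtain ⟨x', hx', rfl⟩ := hfb hv
      rw [hgf x' hx']; exact hx'
    have hlm : MapsTo (fun ζ : ℂ => (ζ * ((r / ‖w‖ : ℝ) : ℂ)) • w) (ball 0 1) (ball (0 : Cn n) r) := by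
      intro ζ hζ
      have h1 : ‖ζ‖ < 1 := by simpa using hζ
      rw [mem_ball_zero_iff, norm_smul, norm_mul, Complex.norm_real, Real.norm_eq_abs,
        abs_of_pos (by positivity)]
      calc ‖ζ‖ * (r / ‖w‖) * ‖w‖ = ‖ζ‖ * r := by field_simp
        _ < r := by nlinarith
    have hna : ‖((‖w‖ / r : ℝ) : ℂ)‖ = ‖w‖ / r := by
      rw [Complex.norm_real, Real.norm_eq_abs, abs_of_pos (by positivity)]
    have hae : ‖w‖ / r < e := by rw [div_lt_iff₀ hr]; exact hwe
    have hha : (((‖w‖ / r : ℝ) : ℂ) * ((r / ‖w‖ : ℝ) : ℂ)) • w = w := by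
      rw [← Complex.ofReal_mul]
      have : ‖w‖ / r * (r / ‖w‖) = 1 := by field_simp
      rw [this, Complex.ofReal_one, one_smul]
    have hxp : R ≤ ‖x - p‖ := by
      by_contra hcon
      push Not at hcon
      exact hxU (hRU (by simpa [dist_eq_norm] using hcon))
    have hdisc := sq_disc hD hψ hψ0 hR hc hψc
      (h := fun ζ : ℂ => g ((ζ * ((r / ‖w‖ : ℝ) : ℂ)) • w))
      (hgd.comp (by fun_prop) hlm) (hgD.comp hlm) (a := ((‖w‖ / r : ℝ) : ℂ))
      (by rw [hna]; linarith) (by rw [hha, hgw]; exact hxp)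
    rw [hna] at hdisc
    simp only [zero_mul, zero_smul, hg0] at hdisc
    have hyle := hψz _ hdisc
    set A := ‖w‖ / r with hA
    have hA0 : 0 < A := by positivity
    rcases le_total A (1/2) with hA2 | hA2
    · rw [max_eq_right hA2] at hyle
      linarith
    · rw [max_eq_left hA2] at hyle
      have h1 := Real.one_sub_inv_le_log_of_pos hA0
      have h2 : A⁻¹ ≤ 2 := by
        rw [inv_le_comm₀ hA0 (by norm_num)]; linarith
      have h3 : A * A⁻¹ = 1 := mul_inv_cancel₀ hA0.ne'
      have h4 : -2 * (1 - A) ≤ Real.log A := by nlinarith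
      have h5 : Real.log A < 96 / c * y := by
        rw [Real.log_lt_iff_lt_exp hA0]; exact hae
      have h6 : c * Real.log A < 96 * y := by
        have := mul_lt_mul_of_pos_left h5 hc
        have e1 : c * (96 / c * y) = 96 * y := by field_simp
        linarith
      nlinarith
  unfold squeezing
  have hb' := sq_bdd (D ∩ U) z
  rcases ({r : ℝ | 0 < r ∧ ∃ f : Cn n → Cn n, DifferentiableOn ℂ f D ∧ InjOn f D ∧
    MapsTo f D (ball (0 : Cn n) 1) ∧ f z = 0 ∧ ball (0 : Cn n) r ⊆ f '' D}).eq_empty_or_nonempty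
    with hemp | hne
  · rw [hemp, Real.sSup_empty, mul_zero]
    exact Real.sSup_nonneg fun r hr => hr.1.le
  · rw [ge_iff_le, mul_comm, ← le_div_iff₀ he0]
    refine csSup_le hne fun r hr => ?_
    rw [le_div_iff₀ he0, mul_comm]
    exact le_csSup hb' (hmain r hr)
end
end
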